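/- arXiv:2103.04890 — 4 statements merged into one kernel-verified Lean document; each statement's English description precedes it below -/
import Mathlib

section
/- Let k be a nonnegative integer and let f = f₀ + M₂* f₁ with f₀ ∈ M_{4k+2}(Γ₀⁺(2),(−1)^k) and f₁ ∈ M_{4k}(Γ₀⁺(2),(−1)^k), where M₂*(z) = (2E₂(2z)+E₂(z))/3. Suppose f is extremal, i.e. v_∞(f) = k (which equals dim 𝑀̃_{4k+2}^{≤1}(Γ₀⁺(2),(−1)^k) − 1). Let M₂(z) = 2E₂(2z) − E₂(z), M₄(z) = (4E₄(2z)+E₄(z))/5 (= M₂²), M₈(z) = q ∏_{n≥1}(1−qⁿ)⁸(1−q^{2n})⁸, and P(z) = e^{πikz} ∏_{n≥1} (1−qⁿ)^{4k}(1−q^{2n})^{4k} (= M₈^{k/2}). Then y := f/(P·M₂) satisfies y″(z) = −4π² ( (k/2)² M₄(z) − 32 M₈(z)/M₄(z) ) y(z) at every z ∈ ℍ with M₂(z) ≠ 0. -/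
noncomputable section

open Complex Matrix Filter Topology

abbrev SL2R := Matrix.SpecialLinearGroup (Fin 2) ℝ
abbrev SL2Z := Matrix.SpecialLinearGroup (Fin 2) ℤ

/-- The upper half-plane, as a subset of `ℂ`. -/
def UHP : Set ℂ := {z : ℂ | 0 < z.im}

/-- The embedding of `SL(2,ℤ)` into `SL(2,ℝ)`. -/
def toR : SL2Z →* SL2R := Matrix.SpecialLinearGroup.map (Int.castRingHom ℝ)

/-- `SL(2,ℤ)` as a subgroup of `SL(2,ℝ)`. -/
def SL2ZR : Subgroup SL2R := Subgroup.map toR ⊤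

/-- Möbius action of a real matrix on a complex number. -/
def moeb (γ : SL2R) (z : ℂ) : ℂ :=
  ((γ.1 0 0 : ℂ) * z + (γ.1 0 1 : ℂ)) / ((γ.1 1 0 : ℂ) * z + (γ.1 1 1 : ℂ))

/-- The automorphy factor `cz + d`. -/
def jfac (γ : SL2R) (z : ℂ) : ℂ := (γ.1 1 0 : ℂ) * z + (γ.1 1 1 : ℂ)

/-- A holomorphic modular form of weight `k` and character `χ` on `Γ ≤ SL(2,ℝ)`
(for `Γ` commensurable with `SL(2,ℤ)`): holomorphic on `ℍ`, satisfying the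
transformation law, and holomorphic (bounded) at every cusp. -/
structure IsModularForm (Γ : Subgroup SL2R) (χ : SL2R → ℂ) (k : ℤ) (f : ℂ → ℂ) : Prop where
  holo : DifferentiableOn ℂ f UHP
  transform : ∀ γ ∈ Γ, ∀ z ∈ UHP, f (moeb γ z) = χ γ * jfac γ z ^ k * f z
  bdd_at_cusps : ∀ σ : SL2Z, ∃ C : ℝ, ∀ z ∈ UHP, 1 ≤ z.im →
    ‖jfac (toR σ) z ^ (-k) * f (moeb (toR σ) z)‖ ≤ C

/-- A finite-order character of `Γ`. -/
def IsCharacter (Γ : Subgroup SL2R) (χ : SL2R → ℂ) : Prop :=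
  (∀ γ ∈ Γ, ∀ δ ∈ Γ, χ (γ * δ) = χ γ * χ δ) ∧
    ∃ n : ℕ, 0 < n ∧ ∀ γ ∈ Γ, χ γ ^ n = 1

/-- `φ` is quasimodular of weight 2 and depth 1 on `Γ`, with constant `α`:
`(cz+d)⁻² φ(γz) = φ(z) + α c/(cz+d)`. -/
def IsQuasiWt2 (Γ : Subgroup SL2R) (α : ℂ) (φ : ℂ → ℂ) : Prop :=
  ∀ γ ∈ Γ, ∀ z ∈ UHP,
    (jfac γ z)⁻¹ ^ 2 * φ (moeb γ z) = φ z + α * (γ.1 1 0 : ℂ) / jfac γ z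

/-- `f` has vanishing order `ν` at the cusp `∞`, with respect to `q_N = e^{2πiz/N}`:
`q_N^{-ν}·f(z)` tends to a nonzero constant as `Im z → ∞`. -/
def VOrder (N : ℝ) (f : ℂ → ℂ) (ν : ℝ) : Prop :=
  ∃ c : ℂ, c ≠ 0 ∧ ∀ ε : ℝ, 0 < ε → ∃ Y : ℝ, ∀ z : ℂ, Y ≤ z.im →
    ‖Complex.exp (-(2 * Real.pi * Complex.I * (ν : ℂ) * z / (N : ℂ))) * f z - c‖ < ε


/-- `Γ₀(N)` as a subgroup of `SL(2,ℝ)`. -/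
def Gamma0R (N : ℕ) : Subgroup SL2R := Subgroup.map toR (CongruenceSubgroup.Gamma0 N)

/-- `q = e^{2πiz}`. -/
def qexp (z : ℂ) : ℂ := Complex.exp (2 * Real.pi * Complex.I * z)

/-- `E₂(z) = 1 - 24 ∑_{n≥1} σ₁(n) qⁿ`. -/
def E2 (z : ℂ) : ℂ :=
  1 - 24 * ∑' n : ℕ, (ArithmeticFunction.sigma 1 (n + 1) : ℂ) * qexp z ^ (n + 1)

/-- `E₄(z) = 1 + 240 ∑_{n≥1} σ₃(n) qⁿ`. -/
def E4 (z : ℂ) : ℂ :=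
  1 + 240 * ∑' n : ℕ, (ArithmeticFunction.sigma 3 (n + 1) : ℂ) * qexp z ^ (n + 1)

/-- `M_k(Γ₀⁺(2),ε)`. -/
def MFplus2 (ε : ℂ) (k : ℤ) : Set (ℂ → ℂ) :=
  {f | IsModularForm (Gamma0R 2) (fun _ => 1) k f ∧
    ∀ z ∈ UHP, ((Real.sqrt 2 : ℂ) * z) ^ (-k) * f (-1 / (2 * z)) = ε * f z}

/-- `M₂*(z) = (2E₂(2z) + E₂(z))/3`. -/
def M2star2 (z : ℂ) : ℂ := (2 * E2 (2 * z) + E2 z) / 3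

/-- `M₂(z) = 2E₂(2z) - E₂(z)`. -/
def M2minus (z : ℂ) : ℂ := 2 * E2 (2 * z) - E2 z

/-- `M₄(z) = (4E₄(2z) + E₄(z))/5 = M₂(z)²`. -/
def M4plus2 (z : ℂ) : ℂ := (4 * E4 (2 * z) + E4 z) / 5

/-- `M₈(z) = q ∏_{n≥1}(1-qⁿ)⁸(1-q^{2n})⁸ = η(z)⁸η(2z)⁸`. -/
def M8fun (z : ℂ) : ℂ :=
  qexp z * ∏' n : ℕ, ((1 - qexp z ^ (n + 1)) ^ 8 * (1 - qexp z ^ (2 * (n + 1))) ^ 8)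

/-- `P(z) = e^{πikz} ∏_{n≥1} (1-qⁿ)^{4k}(1-q^{2n})^{4k} = M₈(z)^{k/2}`. -/
def Pfun2 (k : ℕ) (z : ℂ) : ℂ :=
  Complex.exp (Real.pi * Complex.I * k * z) *
    ∏' n : ℕ, ((1 - qexp z ^ (n + 1)) ^ (4 * k) * (1 - qexp z ^ (2 * (n + 1))) ^ (4 * k))

namespace Ext2


abbrev LI : Filter ℂ := comap Complex.im atTop

lemma UHP_open : IsOpen UHP := isOpen_lt continuous_const Complex.continuous_im

lemma two_mul_mem {z : ℂ} (hz : z ∈ UHP) : 2 * z ∈ UHP := by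
  simp only [UHP, Set.mem_ofPred_eq] at *; simpa using hz

lemma ev_im (A : ℝ) : ∀ᶠ z in LI, A ≤ z.im := tendsto_comap.eventually (eventually_ge_atTop A)

lemma ev_UHP : ∀ᶠ z in LI, z ∈ UHP := tendsto_comap.eventually (eventually_gt_atTop (0:ℝ))

lemma tend_two : Tendsto (fun z : ℂ => 2 * z) LI LI := by
  rw [tendsto_comap_iff]
  have : Tendsto (fun z : ℂ => 2 * z.im) LI atTop :=
    Tendsto.const_mul_atTop (by norm_num) tendsto_comap
  refine this.congr fun z => ?_
  simp

instance LI_neBot : NeBot LI := by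
  rw [comap_neBot_iff_frequently]
  refine Eventually.frequently (Eventually.of_forall fun y => ⟨⟨0, y⟩, rfl⟩)

lemma LI_iff {g : ℂ → ℂ} {c : ℂ} : Tendsto g LI (𝓝 c) ↔
    ∀ ε : ℝ, 0 < ε → ∃ Y : ℝ, ∀ z : ℂ, Y ≤ z.im → ‖g z - c‖ < ε := by
  rw [(atTop_basis.comap Complex.im).tendsto_iff Metric.nhds_basis_ball]
  simp [dist_eq_norm]

lemma qexp_norm (z : ℂ) : ‖qexp z‖ = Real.exp (-(2 * Real.pi * z.im)) := by
  rw [qexp, Complex.norm_exp]; congr 1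
  simp [Complex.mul_re]

lemma qexp_ne (z : ℂ) : qexp z ≠ 0 := Complex.exp_ne_zero _

lemma qexp_lt {z : ℂ} (hz : z ∈ UHP) : ‖qexp z‖ < 1 := by
  rw [qexp_norm, Real.exp_lt_one_iff]
  have : 0 < z.im := hz
  have := Real.pi_pos
  simp; positivity

lemma qexp_tend : Tendsto qexp LI (𝓝 0) := by
  rw [tendsto_zero_iff_norm_tendsto_zero]
  have : Tendsto (fun z : ℂ => Real.exp (-(2 * Real.pi * z.im))) LI (𝓝 0) := by
    apply Real.tendsto_exp_neg_atTop_nhds_zero.comp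
    exact Tendsto.const_mul_atTop (by positivity) tendsto_comap
  exact this.congr fun z => (qexp_norm z).symm

lemma qexp_two (z : ℂ) : qexp (2 * z) = qexp z ^ 2 := by
  rw [qexp, qexp, ← Complex.exp_nat_mul]; congr 1; push_cast; ring

lemma qexp_add_one (z : ℂ) : qexp (z + 1) = qexp z := by
  rw [qexp, qexp, mul_add, mul_one, Complex.exp_add, Complex.exp_two_pi_mul_I, mul_one]

lemma E2_per (z : ℂ) : E2 (z + 1) = E2 z := by simp only [E2, qexp_add_one]
lemma E2_per2 (z : ℂ) : E2 (2 * (z + 1)) = E2 (2 * z) := by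
  simp only [E2, qexp_two, qexp_add_one]

lemma ser_tend (j : ℕ) : Tendsto (fun z => ∑' n : ℕ,
    (ArithmeticFunction.sigma j (n + 1) : ℂ) * qexp z ^ n) LI (𝓝 1) := by
  have hlim : ∑' n : ℕ, (if n = 0 then (1:ℂ) else 0) = 1 := by simp
  rw [← hlim]
  have hq : ∀ᶠ z in LI, ‖qexp z‖ < 1/2 := by
    have := qexp_tend.norm
    rw [norm_zero] at this
    exact this.eventually (gt_mem_nhds (by norm_num))
  refine tendsto_tsum_of_dominated_convergence
    (bound := fun n : ℕ => 2 * (((n + 1 : ℕ) : ℝ) ^ (j + 1) * (1/2) ^ (n + 1))) ?_ ?_ ?_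
  · apply Summable.mul_left
    refine (summable_nat_add_iff (f := fun n : ℕ => (n:ℝ) ^ (j+1) * (1/2:ℝ) ^ n) 1).2 ?_
    exact summable_pow_mul_geometric_of_norm_lt_one (j+1) (by norm_num)
  · intro n
    rcases n with _ | n
    · simp
    · have : Tendsto (fun z => (ArithmeticFunction.sigma j (n + 1 + 1) : ℂ) * qexp z ^ (n+1)) LI
          (𝓝 ((ArithmeticFunction.sigma j (n + 1 + 1) : ℂ) * 0 ^ (n+1))) :=
        (qexp_tend.pow _).const_mul _
      simpa using this
  · filter_upwards [hq] with z hz n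
    rw [norm_mul, norm_pow, Complex.norm_natCast]
    have h1 : ((ArithmeticFunction.sigma j (n+1) : ℕ) : ℝ) ≤ ((n + 1 : ℕ) : ℝ) ^ (j + 1) := by
      exact_mod_cast ArithmeticFunction.sigma_le_pow_succ j (n+1)
    have h2 : ‖qexp z‖ ^ n ≤ (1/2) ^ n := pow_le_pow_left₀ (norm_nonneg _) hz.le n
    calc _ ≤ ((n + 1 : ℕ) : ℝ) ^ (j + 1) * (1/2)^n := by gcongr
      _ = _ := by rw [pow_succ (1/2 : ℝ) n]; ring

lemma ser_eq (j : ℕ) (z : ℂ) : ∑' n : ℕ,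
    (ArithmeticFunction.sigma j (n + 1) : ℂ) * qexp z ^ (n + 1) = qexp z * ∑' n : ℕ,
    (ArithmeticFunction.sigma j (n + 1) : ℂ) * qexp z ^ n := by
  rw [← tsum_mul_left]; congr 1; ext n; ring

lemma E2_tend : Tendsto (fun z => (E2 z - 1) / qexp z) LI (𝓝 (-24)) := by
  have := (ser_tend 1).const_mul (-24)
  rw [mul_one] at this
  refine this.congr fun z => ?_
  rw [E2, ser_eq]
  field_simp [qexp_ne z]
  ring

lemma E2_tend1 : Tendsto E2 LI (𝓝 1) := by
  have := (E2_tend.mul qexp_tend).add_const 1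
  simp only [mul_zero, zero_add] at this
  refine this.congr fun z => ?_
  field_simp [qexp_ne z]
  ring

lemma E4_tend1 : Tendsto E4 LI (𝓝 1) := by
  have := (((ser_tend 3).mul qexp_tend).const_mul 240).const_add 1
  simp only [mul_zero, add_zero] at this
  refine this.congr fun z => ?_
  rw [E4, ser_eq]; ring

lemma E2_eq (z : UpperHalfPlane) : E2 z = EisensteinSeries.E2 z := by
  rw [E2, EisensteinSeries.E2_eq_tsum_cexp,
    tsum_pnat_eq_tsum_succ (f := fun n ↦ (ArithmeticFunction.sigma 1 n : ℂ) * cexp (2 * Real.pi * I * z) ^ n)]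
  rfl

lemma E4_eq (z : UpperHalfPlane) : E4 z = ModularForm.E (show 3 ≤ 4 by norm_num) z := by
  have hb : bernoulli 4 = -1/30 := by
    rw [bernoulli_eq_bernoulli'_of_ne_one (by norm_num), bernoulli'_four]
  rw [E4, EisensteinSeries.q_expansion_bernoulli _ (by decide), hb]
  simp only [zpow_natCast]
  rw [tsum_pnat_eq_tsum_succ (f := fun n ↦ (ArithmeticFunction.sigma (4-1) n : ℂ) * cexp (2 * Real.pi * I * z) ^ n)]
  simp only [qexp]
  push_cast
  norm_num

lemma E2_diff : DifferentiableOn ℂ E2 UHP := by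
  have := UpperHalfPlane.mdifferentiable_iff.1 E2_mdifferentiable
  refine this.congr fun z hz => ?_
  have hz' : 0 < z.im := hz
  simp only [Function.comp, UpperHalfPlane.ofComplex_apply_of_im_pos hz']
  exact E2_eq ⟨z, hz'⟩

lemma E4_diff : DifferentiableOn ℂ E4 UHP := by
  have := UpperHalfPlane.mdifferentiable_iff.1 (ModularForm.E (show 3 ≤ 4 by norm_num)).holo'
  refine this.congr fun z hz => ?_
  have hz' : 0 < z.im := hz
  simp only [Function.comp, UpperHalfPlane.ofComplex_apply_of_im_pos hz']
  exact E4_eq ⟨z, hz'⟩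

lemma moeb_toR (σ : SL2Z) (τ : UpperHalfPlane) : ((σ • τ : UpperHalfPlane) : ℂ) = moeb (toR σ) τ := by
  rw [UpperHalfPlane.coe_specialLinearGroup_apply]
  simp [moeb, toR]

lemma jfac_toR (σ : SL2Z) (τ : UpperHalfPlane) : UpperHalfPlane.denom σ τ = jfac (toR σ) τ := by
  simp [jfac, toR, UpperHalfPlane.denom]

lemma jfac_toR' (σ : SL2Z) (z : ℂ) : jfac (toR σ) z = σ 1 0 * z + σ 1 1 := by
  simp [jfac, toR]

lemma jfac_ne (γ : SL2R) {z : ℂ} (hz : z ∈ UHP) : jfac γ z ≠ 0 := by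
  have hz' : 0 < z.im := hz
  intro h
  rw [jfac] at h
  have h1 := congrArg Complex.im h
  simp at h1
  have hd := γ.2
  rw [Matrix.det_fin_two] at hd
  rcases h1 with h1 | h1
  · have h2 := congrArg Complex.re h
    simp [h1] at h2
    rw [h1, h2] at hd; simp at hd
  · exact hz'.ne' h1

lemma moeb_mem (γ : SL2R) {z : ℂ} (hz : z ∈ UHP) : moeb γ z ∈ UHP := by
  have hj := jfac_ne γ hz
  have hz' : 0 < z.im := hz
  have : moeb γ z = ((γ.1 0 0 : ℂ) * z + (γ.1 0 1 : ℂ)) / jfac γ z := rfl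
  show 0 < (moeb γ z).im
  rw [this, Complex.div_im]
  have hn : 0 < Complex.normSq (jfac γ z) := Complex.normSq_pos.2 hj
  have hd := γ.2
  rw [Matrix.det_fin_two] at hd
  have : ∀ a b n : ℝ, a / n - b / n = (a - b) / n := fun a b n => by ring
  rw [this]
  apply div_pos _ hn
  simp only [jfac, Complex.add_im, Complex.mul_im, Complex.ofReal_re, Complex.ofReal_im, Complex.add_re, Complex.mul_re]
  have : (γ.1 0 0 * γ.1 1 1 - γ.1 0 1 * γ.1 1 0) * z.im > 0 := by rw [hd]; simpa using hz'
  linarith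

lemma E4_tr (σ : SL2Z) {z : ℂ} (hz : z ∈ UHP) :
    E4 (moeb (toR σ) z) = jfac (toR σ) z ^ (4:ℤ) * E4 z := by
  have hz' : 0 < z.im := hz
  have h := SlashInvariantForm.slash_action_eqn'' (Γ := (Matrix.SpecialLinearGroup.mapGL ℝ).range) (ModularForm.E (show 3 ≤ 4 by norm_num))
    (γ := Matrix.SpecialLinearGroup.mapGL ℝ σ) ⟨σ, rfl⟩ ⟨z, hz'⟩
  have h1 : (Matrix.SpecialLinearGroup.mapGL ℝ σ) • (⟨z, hz'⟩ : UpperHalfPlane) = σ • ⟨z, hz'⟩ := rfl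
  rw [h1, ← E4_eq, ← E4_eq, moeb_toR] at h
  have h2 := jfac_toR σ ⟨z, hz'⟩
  have h3 : UpperHalfPlane.denom (Matrix.SpecialLinearGroup.mapGL ℝ σ) (⟨z, hz'⟩ : UpperHalfPlane) = jfac (toR σ) z := h2
  rw [h3] at h
  exact_mod_cast h

lemma E2_tr (σ : SL2Z) {z : ℂ} (hz : z ∈ UHP) :
    E2 (moeb (toR σ) z) = jfac (toR σ) z ^ 2 * E2 z
      + (6 / (Real.pi * I)) * σ 1 0 * jfac (toR σ) z := by
  have hz' : 0 < z.im := hz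
  have hj := jfac_ne (toR σ) hz
  have h := congrFun (EisensteinSeries.E2_slash_action σ) ⟨z, hz'⟩
  have h2 : EisensteinSeries.D2 σ ⟨z, hz'⟩ = 2 * Real.pi * I * σ 1 0 / jfac (toR σ) z := by
    rw [EisensteinSeries.D2, ← jfac_toR σ ⟨z, hz'⟩]
  rw [ModularForm.SL_slash_apply, ← E2_eq, moeb_toR, jfac_toR] at h
  rw [Pi.sub_apply, Pi.smul_apply, smul_eq_mul, h2, ← E2_eq, riemannZeta_two] at h
  have hpi : (Real.pi : ℂ) ≠ 0 := by exact_mod_cast Real.pi_ne_zero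
  rw [_root_.zpow_neg] at h
  have h' : E2 (moeb (toR σ) z) = (E2 z - 1 / (2 * (↑Real.pi ^ 2 / 6)) * (2 * ↑Real.pi * I * ↑(σ 1 0) / jfac (toR σ) z)) * jfac (toR σ) z ^ 2 := by
    rw [← h]
    simp
    field_simp
  rw [h']
  field_simp
  linear_combination (-6 * (σ 1 0 : ℂ)) * I_sq


/-- normalised derivative -/
def DD (g : ℂ → ℂ) (z : ℂ) : ℂ := deriv g z / (2 * Real.pi * I)

lemma tpi_ne : (2 * Real.pi * I : ℂ) ≠ 0 := by
  have : (Real.pi : ℂ) ≠ 0 := by exact_mod_cast Real.pi_ne_zero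
  simp [this]

lemma DD_diff {g : ℂ → ℂ} (h : DifferentiableOn ℂ g UHP) : DifferentiableOn ℂ (DD g) UHP :=
  (h.deriv UHP_open).div_const _

lemma at_of_on {g : ℂ → ℂ} (h : DifferentiableOn ℂ g UHP) {z : ℂ} (hz : z ∈ UHP) :
    DifferentiableAt ℂ g z := h.differentiableAt (UHP_open.mem_nhds hz)

lemma DD_has {g : ℂ → ℂ} (h : DifferentiableOn ℂ g UHP) {z : ℂ} (hz : z ∈ UHP) :
    HasDerivAt g (2 * Real.pi * I * DD g z) z := by
  have := (at_of_on h hz).hasDerivAt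
  rw [DD, mul_div_cancel₀ _ tpi_ne]; exact this

lemma DD_of_has {g : ℂ → ℂ} {z d : ℂ} (h : HasDerivAt g (2 * Real.pi * I * d) z) : DD g z = d := by
  rw [DD, h.deriv, mul_div_cancel_left₀ _ tpi_ne]

lemma deriv_bound {g : ℂ → ℂ} (h : DifferentiableOn ℂ g UHP) {A C : ℝ}
    (hb : ∀ z : ℂ, A ≤ z.im → ‖g z‖ ≤ C) {z : ℂ} (hz : max A 0 + 2 ≤ z.im) : ‖deriv g z‖ ≤ C := by
  have hsub : ∀ w ∈ Metric.closedBall z 1, max A 0 + 1 ≤ w.im := by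
    intro w hw
    rw [mem_closedBall_iff_norm] at hw
    have := (Complex.abs_im_le_norm (w - z)).trans hw
    rw [Complex.sub_im, abs_le] at this
    linarith
  have hU : Metric.closedBall z 1 ⊆ UHP := fun w hw => by
    have := hsub w hw
    have h0 := le_max_right A 0
    show 0 < w.im
    linarith
  have := Complex.norm_deriv_le_of_forall_mem_sphere_norm_le (c := z) (R := 1) (C := C) (f := g) one_pos
    (h.diffContOnCl_ball hU) (fun w hw => hb w (by
      have := hsub w (Metric.sphere_subset_closedBall hw)
      have h0 := le_max_left A 0
      linarith))
  simpa using this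

lemma deriv_tend {g : ℂ → ℂ} (h : DifferentiableOn ℂ g UHP) {c : ℂ} (ht : Tendsto g LI (𝓝 c)) :
    Tendsto (deriv g) LI (𝓝 0) := by
  rw [LI_iff] at ht ⊢
  intro ε hε
  obtain ⟨A, hA⟩ := ht (ε/2) (by positivity)
  refine ⟨max A 0 + 2, fun z hz => ?_⟩
  have := deriv_bound (g := fun w => g w - c) (h.sub_const c) (fun w hw => (hA w hw).le) hz
  rw [deriv_sub_const] at this
  rw [sub_zero]; linarith

lemma DD_tend {g : ℂ → ℂ} (h : DifferentiableOn ℂ g UHP) {c : ℂ} (ht : Tendsto g LI (𝓝 c)) :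
    Tendsto (DD g) LI (𝓝 0) := by
  have := (deriv_tend h ht).div_const (2 * Real.pi * I)
  rw [zero_div] at this
  exact this

/-- transformation under a single matrix -/
def TR (γ : SL2R) (s : ℂ) (w : ℤ) (g : ℂ → ℂ) : Prop :=
  ∀ z ∈ UHP, g (moeb γ z) = s * jfac γ z ^ w * g z

lemma TR.mul {γ s₁ s₂ w₁ w₂ g₁ g₂} (h₁ : TR γ s₁ w₁ g₁) (h₂ : TR γ s₂ w₂ g₂) :
    TR γ (s₁ * s₂) (w₁ + w₂) (fun z => g₁ z * g₂ z) := fun z hz => by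
  simp only [h₁ z hz, h₂ z hz, zpow_add₀ (jfac_ne γ hz)]; ring

lemma TR.add {γ s w g₁ g₂} (h₁ : TR γ s w g₁) (h₂ : TR γ s w g₂) :
    TR γ s w (fun z => g₁ z + g₂ z) := fun z hz => by
  simp only [h₁ z hz, h₂ z hz]; ring

lemma TR.smul {γ s w g} (c : ℂ) (h : TR γ s w g) :
    TR γ s w (fun z => c * g z) := fun z hz => by
  simp only [h z hz]; ring

lemma TR.div {γ s₁ s₂ w₁ w₂ g₁ g₂} (h₁ : TR γ s₁ w₁ g₁) (h₂ : TR γ s₂ w₂ g₂) :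
    TR γ (s₁ / s₂) (w₁ - w₂) (fun z => g₁ z / g₂ z) := fun z hz => by
  simp only [h₁ z hz, h₂ z hz, zpow_sub₀ (jfac_ne γ hz)]
  rw [mul_div_mul_comm, mul_div_mul_comm]

lemma jfac_has (γ : SL2R) (z : ℂ) : HasDerivAt (jfac γ) (γ.1 1 0 : ℂ) z := by
  have := ((hasDerivAt_id z).const_mul (γ.1 1 0 : ℂ)).add_const (γ.1 1 1 : ℂ)
  rw [mul_one] at this
  exact this

lemma moeb_has (γ : SL2R) {z : ℂ} (hz : z ∈ UHP) : HasDerivAt (moeb γ) (1 / jfac γ z ^ 2) z := by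
  have hj := jfac_ne γ hz
  have h1 : HasDerivAt (fun z : ℂ => (γ.1 0 0 : ℂ) * z + (γ.1 0 1 : ℂ)) (γ.1 0 0 : ℂ) z := by
    simpa using ((hasDerivAt_id z).const_mul (γ.1 0 0 : ℂ)).add_const (γ.1 0 1 : ℂ)
  have := h1.div (jfac_has γ z) hj
  refine this.congr_deriv ?_
  have hd := γ.2
  rw [Matrix.det_fin_two] at hd
  have hd' : (γ.1 0 0 : ℂ) * γ.1 1 1 - γ.1 0 1 * γ.1 1 0 = 1 := by exact_mod_cast hd
  congr 1
  have : jfac γ z = (γ.1 1 0 : ℂ) * z + (γ.1 1 1 : ℂ) := rfl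
  rw [this]; linear_combination hd'

/-- quasi-modular transformation -/
def QT (γ : SL2R) (Z : ℂ → ℂ) : Prop :=
  ∀ z ∈ UHP, Z (moeb γ z) = jfac γ z ^ 2 * Z z + (4 / (Real.pi * I)) * γ.1 1 0 * jfac γ z

lemma TR.theta {γ s w g Z} (hg : DifferentiableOn ℂ g UHP) (h : TR γ s w g) (hZ : QT γ Z) :
    TR γ s (w + 2) (fun z => DD g z - (w / 8) * Z z * g z) := by
  intro z hz
  have hj := jfac_ne γ hz
  have h1 : HasDerivAt (fun z => g (moeb γ z)) (2 * Real.pi * I * DD g (moeb γ z) * (1 / jfac γ z ^ 2)) z :=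
    (DD_has hg (moeb_mem γ hz)).comp z (moeb_has γ hz)
  have h2 : HasDerivAt (fun z => s * jfac γ z ^ w * g z)
      (s * ((w : ℂ) * jfac γ z ^ (w - 1) * γ.1 1 0) * g z + s * jfac γ z ^ w * (2 * Real.pi * I * DD g z)) z := by
    have h3 : HasDerivAt (fun z => jfac γ z ^ w) ((w : ℂ) * jfac γ z ^ (w - 1) * γ.1 1 0) z :=
      (hasDerivAt_zpow w _ (Or.inl hj)).comp z (jfac_has γ z)
    exact (h3.const_mul s).mul (DD_has hg hz)
  have h4 := h1.unique (h2.congr_of_eventuallyEq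
    (by filter_upwards [UHP_open.mem_nhds hz] with y hy using h y hy))
  have hp : (Real.pi : ℂ) ≠ 0 := by exact_mod_cast Real.pi_ne_zero
  have h5 : DD g (moeb γ z) = s * jfac γ z ^ (w+2) * DD g z +
     s * (w : ℂ) * jfac γ z ^ w * jfac γ z * γ.1 1 0 * g z / (2 * Real.pi * I) := by
    rw [zpow_add₀ hj, show jfac γ z ^ (2:ℤ) = jfac γ z ^ 2 by norm_cast]
    rw [zpow_sub₀ hj, zpow_one] at h4
    field_simp at h4 ⊢
    linear_combination h4
  simp only [h5, hZ z hz, h z hz, zpow_add₀ hj, show jfac γ z ^ (2:ℤ) = jfac γ z ^ 2 by norm_cast]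
  field_simp
  ring

lemma QT.theta {γ Z} (hg : DifferentiableOn ℂ Z UHP) (h : QT γ Z) :
    TR γ 1 4 (fun z => DD Z z - Z z ^ 2 / 8) := by
  intro z hz
  have hj := jfac_ne γ hz
  have h1 : HasDerivAt (fun z => Z (moeb γ z)) (2 * Real.pi * I * DD Z (moeb γ z) * (1 / jfac γ z ^ 2)) z :=
    (DD_has hg (moeb_mem γ hz)).comp z (moeb_has γ hz)
  have h2 := (((jfac_has γ z).pow 2).mul (DD_has hg hz)).add
    ((jfac_has γ z).const_mul ((4 / (Real.pi * I)) * γ.1 1 0))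
  have h4 := h1.unique (h2.congr_of_eventuallyEq
    (by filter_upwards [UHP_open.mem_nhds hz] with y hy using h y hy))
  have hp : (Real.pi : ℂ) ≠ 0 := by exact_mod_cast Real.pi_ne_zero
  have h5 : DD Z (moeb γ z) = jfac γ z ^ 4 * DD Z z + (2 * γ.1 1 0 * jfac γ z ^ 3 * Z z +
     (4 / (Real.pi * I)) * γ.1 1 0 * γ.1 1 0 * jfac γ z ^ 2) / (2 * Real.pi * I) := by
    simp at h4
    field_simp at h4 ⊢
    linear_combination h4
  simp only [h5, h z hz, show jfac γ z ^ (4:ℤ) = jfac γ z ^ 4 by norm_cast]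
  field_simp
  ring

/-- Fricke matrix -/
def S2 : SL2R := ⟨!![0, -(Real.sqrt 2)⁻¹; Real.sqrt 2, 0], by simp [Matrix.det_fin_two]⟩

lemma S2_j (z : ℂ) : jfac S2 z = (Real.sqrt 2 : ℂ) * z := by simp [jfac, S2]

lemma sq2 : (Real.sqrt 2 : ℂ) ^ 2 = 2 := by
  have : Real.sqrt 2 ^ 2 = 2 := Real.sq_sqrt (by norm_num)
  exact_mod_cast this

lemma sq2_ne : (Real.sqrt 2 : ℂ) ≠ 0 := by
  intro h; have := sq2; rw [h] at this; norm_num at this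

lemma UHP_ne {z : ℂ} (hz : z ∈ UHP) : z ≠ 0 := by
  rintro rfl; simp [UHP] at hz

lemma S2_m {z : ℂ} (hz : z ∈ UHP) : moeb S2 z = -1 / (2 * z) := by
  have := UHP_ne hz
  have h2 := sq2_ne
  simp [moeb, S2]
  field_simp
  rw [sq2]

structure MF (ε : ℂ) (w : ℤ) (g : ℂ → ℂ) : Prop where
  d : DifferentiableOn ℂ g UHP
  t : ∀ γ ∈ Gamma0R 2, TR γ 1 w g
  s : TR S2 ε w g
  b : ∃ A C : ℝ, ∀ z : ℂ, A ≤ z.im → ‖g z‖ ≤ C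

lemma bdd_of_tend {g : ℂ → ℂ} {c : ℂ} (h : Tendsto g LI (𝓝 c)) :
    ∃ A C : ℝ, ∀ z : ℂ, A ≤ z.im → ‖g z‖ ≤ C := by
  obtain ⟨A, hA⟩ := LI_iff.1 h 1 one_pos
  refine ⟨A, ‖c‖ + 1, fun z hz => ?_⟩
  have := hA z hz
  have h2 := norm_add_le (g z - c) c
  rw [sub_add_cancel] at h2
  linarith

lemma bdd_mul {g h : ℂ → ℂ} (hg : ∃ A C : ℝ, ∀ z : ℂ, A ≤ z.im → ‖g z‖ ≤ C)
    (hh : ∃ A C : ℝ, ∀ z : ℂ, A ≤ z.im → ‖h z‖ ≤ C) :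
    ∃ A C : ℝ, ∀ z : ℂ, A ≤ z.im → ‖g z * h z‖ ≤ C := by
  obtain ⟨A, C, h1⟩ := hg
  obtain ⟨B, D, h2⟩ := hh
  refine ⟨max A B, C * D, fun z hz => ?_⟩
  have h3 := h1 z ((le_max_left _ _).trans hz)
  rw [norm_mul]
  exact mul_le_mul h3 (h2 z ((le_max_right _ _).trans hz)) (norm_nonneg _) ((norm_nonneg _).trans h3)

lemma bdd_add {g h : ℂ → ℂ} (hg : ∃ A C : ℝ, ∀ z : ℂ, A ≤ z.im → ‖g z‖ ≤ C)
    (hh : ∃ A C : ℝ, ∀ z : ℂ, A ≤ z.im → ‖h z‖ ≤ C) :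
    ∃ A C : ℝ, ∀ z : ℂ, A ≤ z.im → ‖g z + h z‖ ≤ C := by
  obtain ⟨A, C, h1⟩ := hg
  obtain ⟨B, D, h2⟩ := hh
  exact ⟨max A B, C + D, fun z hz => (norm_add_le _ _).trans
    (add_le_add (h1 z ((le_max_left _ _).trans hz)) (h2 z ((le_max_right _ _).trans hz)))⟩

lemma bdd_DD {g : ℂ → ℂ} (h : DifferentiableOn ℂ g UHP)
    (hb : ∃ A C : ℝ, ∀ z : ℂ, A ≤ z.im → ‖g z‖ ≤ C) :
    ∃ A C : ℝ, ∀ z : ℂ, A ≤ z.im → ‖DD g z‖ ≤ C := by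
  obtain ⟨A, C, h1⟩ := hb
  refine ⟨max A 0 + 2, C / ‖(2 * Real.pi * I : ℂ)‖, fun z hz => ?_⟩
  rw [DD, norm_div]
  gcongr
  exact deriv_bound h h1 hz

namespace MF
variable {ε ε₁ ε₂ : ℂ} {w w₁ w₂ : ℤ} {g g₁ g₂ : ℂ → ℂ}

lemma mul (h₁ : MF ε₁ w₁ g₁) (h₂ : MF ε₂ w₂ g₂) : MF (ε₁ * ε₂) (w₁ + w₂) (fun z => g₁ z * g₂ z) where
  d := h₁.d.mul h₂.d
  t γ hγ := by simpa using (h₁.t γ hγ).mul (h₂.t γ hγ)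
  s := h₁.s.mul h₂.s
  b := bdd_mul h₁.b h₂.b

lemma add (h₁ : MF ε w g₁) (h₂ : MF ε w g₂) : MF ε w (fun z => g₁ z + g₂ z) where
  d := h₁.d.add h₂.d
  t γ hγ := (h₁.t γ hγ).add (h₂.t γ hγ)
  s := h₁.s.add h₂.s
  b := bdd_add h₁.b h₂.b

lemma smul (c : ℂ) (h : MF ε w g) : MF ε w (fun z => c * g z) where
  d := h.d.const_mul c
  t γ hγ := (h.t γ hγ).smul c
  s := h.s.smul c
  b := bdd_mul ⟨0, ‖c‖, fun _ _ => le_rfl⟩ h.b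

lemma sub (h₁ : MF ε w g₁) (h₂ : MF ε w g₂) : MF ε w (fun z => g₁ z - g₂ z) := by
  simpa [sub_eq_add_neg] using h₁.add (h₂.smul (-1))

lemma congr_on (h : MF ε w g) {g' : ℂ → ℂ} (he : ∀ z ∈ UHP, g' z = g z) : MF ε w g' where
  d := h.d.congr he
  t γ hγ z hz := by rw [he _ (moeb_mem γ hz), he z hz]; exact h.t γ hγ z hz
  s z hz := by rw [he _ (moeb_mem S2 hz), he z hz]; exact h.s z hz
  b := by
    obtain ⟨A, C, hb⟩ := h.b
    refine ⟨max A 1, C, fun z hz => ?_⟩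
    have h1 := (le_max_right A 1).trans hz
    rw [he z (show 0 < z.im by linarith)]
    exact hb z ((le_max_left A 1).trans hz)

lemma one : MF 1 0 (fun _ => 1) where
  d := differentiableOn_const _
  t γ hγ z hz := by simp
  s z hz := by simp
  b := ⟨0, 1, by simp⟩

lemma pow (h : MF ε w g) (n : ℕ) : MF (ε ^ n) (n * w) (fun z => g z ^ n) := by
  induction n with
  | zero => simpa using one
  | succ n ih =>
    have := ih.mul h
    simp only [← pow_succ] at this
    convert this using 1
    push_cast; ring

lemma cast {ε' : ℂ} {w' : ℤ} (h : MF ε w g) (h1 : ε = ε') (h2 : w = w') : MF ε' w' g := by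
  subst h1 h2; exact h

end MF


lemma two_diff {g : ℂ → ℂ} (h : DifferentiableOn ℂ g UHP) :
    DifferentiableOn ℂ (fun z => g (2 * z)) UHP :=
  h.comp (by fun_prop) (fun z hz => two_mul_mem hz)

lemma toR_apply (σ : SL2Z) (i j : Fin 2) : (toR σ).1 i j = ((σ.1 i j : ℤ) : ℝ) := by
  simp [toR]

lemma G0_cases {γ : SL2R} (hγ : γ ∈ Gamma0R 2) : ∃ (σ σ' : SL2Z), γ = toR σ ∧
    (γ.1 1 0 : ℂ) = σ 1 0 ∧ (σ 1 0 : ℂ) = 2 * σ' 1 0 ∧ (∀ z ∈ UHP, 2 * moeb γ z = moeb (toR σ') (2 * z)) ∧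
    ∀ z, jfac (toR σ') (2 * z) = jfac γ z := by
  obtain ⟨σ, hσ, rfl⟩ := hγ
  have hσ' : ((σ 1 0 : ℤ) : ZMod 2) = 0 := CongruenceSubgroup.Gamma0_mem.1 hσ
  rw [ZMod.intCast_zmod_eq_zero_iff_dvd] at hσ'
  obtain ⟨c, hc⟩ := hσ'
  have hd := σ.2
  rw [Matrix.det_fin_two] at hd
  have hc' : σ.1 1 0 = 2 * c := by simpa using hc
  obtain ⟨σ', h00, h01, h10, h11⟩ : ∃ σ' : SL2Z, σ'.1 0 0 = σ.1 0 0 ∧ σ'.1 0 1 = 2 * σ.1 0 1 ∧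
      σ'.1 1 0 = c ∧ σ'.1 1 1 = σ.1 1 1 :=
    ⟨⟨!![σ.1 0 0, 2 * σ.1 0 1; c, σ.1 1 1], by
      rw [Matrix.det_fin_two]; simp; rw [hc'] at hd; linarith⟩, rfl, rfl, rfl, rfl⟩
  refine ⟨σ, σ', rfl, ?_, ?_, ?_, ?_⟩
  · simp [toR]
  · rw [hc', h10]; simp
  · intro z hz
    have hj := jfac_ne (toR σ) hz
    rw [jfac] at hj
    rw [moeb, moeb]
    simp only [toR_apply, hc', h00, h01, h10, h11] at hj ⊢
    push_cast at hj ⊢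
    rw [show (c:ℂ) * (2 * z) = 2 * c * z by ring]
    field_simp
  · intro z
    rw [jfac, jfac]
    simp only [toR_apply, hc', h10, h11]
    push_cast
    ring

lemma S_m {z : ℂ} : moeb (toR ModularGroup.S) z = -1 / z := by
  rw [moeb]; simp only [toR_apply]; simp [ModularGroup.S]
lemma S_j {z : ℂ} : jfac (toR ModularGroup.S) z = z := by
  rw [jfac]; simp only [toR_apply]; simp [ModularGroup.S]

lemma E2_S {z : ℂ} (hz : z ∈ UHP) : E2 (-1 / z) = z ^ 2 * E2 z + 6 / (Real.pi * I) * z := by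
  have := E2_tr ModularGroup.S hz
  rw [S_m, S_j] at this
  simpa [ModularGroup.S] using this
lemma E4_S {z : ℂ} (hz : z ∈ UHP) : E4 (-1 / z) = z ^ 4 * E4 z := by
  have := E4_tr ModularGroup.S hz
  rw [S_m, S_j] at this
  exact_mod_cast this

lemma fr1 {z : ℂ} (hz : z ∈ UHP) : 2 * (-1 / (2 * z)) = -1 / z := by
  have := UHP_ne hz
  field_simp

lemma z2 (x : ℂ) : x ^ (2:ℤ) = x ^ 2 := by norm_cast
lemma z4 (x : ℂ) : x ^ (4:ℤ) = x ^ 4 := by norm_cast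
lemma sq4 : (Real.sqrt 2 : ℂ) ^ 4 = 4 := by
  have : (Real.sqrt 2 : ℂ) ^ 4 = ((Real.sqrt 2 : ℂ) ^ 2)^2 := by ring
  rw [this, sq2]; norm_num

lemma X_tend1 : Tendsto M2minus LI (𝓝 1) := by
  have := ((E2_tend1.comp tend_two).const_mul 2).sub E2_tend1
  norm_num at this
  exact this
lemma Z_tend1 : Tendsto M2star2 LI (𝓝 1) := by
  have := (((E2_tend1.comp tend_two).const_mul 2).add E2_tend1).div_const 3
  norm_num at this
  exact this
lemma M4_tend1 : Tendsto M4plus2 LI (𝓝 1) := by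
  have := (((E4_tend1.comp tend_two).const_mul 4).add E4_tend1).div_const 5
  norm_num at this
  exact this

lemma X_diff : DifferentiableOn ℂ M2minus UHP := ((two_diff E2_diff).const_mul 2).sub E2_diff
lemma Z_diff : DifferentiableOn ℂ M2star2 UHP :=
  (((two_diff E2_diff).const_mul 2).add E2_diff).div_const 3
lemma M4_diff : DifferentiableOn ℂ M4plus2 UHP :=
  (((two_diff E4_diff).const_mul 4).add E4_diff).div_const 5

lemma X_MF : MF (-1) 2 M2minus where
  d := X_diff
  t γ hγ z hz := by
    obtain ⟨σ, σ', rfl, h1, h2, h3, h4⟩ := G0_cases hγ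
    rw [M2minus, M2minus, h3 z hz, E2_tr _ (two_mul_mem hz), E2_tr _ hz, h4, h2, z2]
    ring
  s z hz := by
    rw [S2_m hz, S2_j, z2, M2minus, M2minus, fr1 hz, E2_S hz, E2_S (two_mul_mem hz), mul_pow (Real.sqrt 2 : ℂ), sq2]
    ring
  b := bdd_of_tend X_tend1

lemma M4_MF : MF 1 4 M4plus2 where
  d := M4_diff
  t γ hγ z hz := by
    obtain ⟨σ, σ', rfl, h1, h2, h3, h4⟩ := G0_cases hγ
    rw [M4plus2, M4plus2, h3 z hz, E4_tr _ (two_mul_mem hz), E4_tr _ hz, h4, z4]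
    ring
  s z hz := by
    rw [S2_m hz, S2_j, z4, M4plus2, M4plus2, fr1 hz, E4_S hz, E4_S (two_mul_mem hz), mul_pow (Real.sqrt 2 : ℂ), sq4]
    ring
  b := bdd_of_tend M4_tend1

lemma Z_QT {γ : SL2R} (hγ : γ ∈ Gamma0R 2) : QT γ M2star2 := by
  intro z hz
  obtain ⟨σ, σ', rfl, h1, h2, h3, h4⟩ := G0_cases hγ
  rw [M2star2, M2star2, h3 z hz, E2_tr _ (two_mul_mem hz), E2_tr _ hz, h4, h1, h2]
  ring

lemma Z_QS : QT S2 M2star2 := by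
  intro z hz
  have : (S2.1 1 0 : ℂ) = Real.sqrt 2 := by simp [S2]
  rw [S2_m hz, S2_j, M2star2, M2star2, fr1 hz, E2_S hz, E2_S (two_mul_mem hz), this]
  linear_combination (-z ^ 2 * (2 * E2 (2 * z) + E2 z) / 3 - 4 / (Real.pi * I) * z) * sq2

lemma MF.theta {ε w g} (h : MF ε w g) : MF ε (w + 2) (fun z => DD g z - (w / 8) * M2star2 z * g z) where
  d := (DD_diff h.d).sub ((Z_diff.const_mul _).mul h.d)
  t γ hγ := (h.t γ hγ).theta h.d (Z_QT hγ)
  s := h.s.theta h.d Z_QS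
  b := by
    have := bdd_add (bdd_DD h.d h.b)
      (bdd_mul (bdd_mul (g := fun _ => -(w/8 : ℂ)) ⟨0, ‖-(w/8 : ℂ)‖, fun _ _ => le_rfl⟩
        (bdd_of_tend Z_tend1)) h.b)
    refine this.imp fun A => Exists.imp fun C h z hz => ?_
    convert h z hz using 2
    ring

lemma Zth_MF : MF 1 4 (fun z => DD M2star2 z - M2star2 z ^ 2 / 8) where
  d := (DD_diff Z_diff).sub ((Z_diff.pow 2).div_const 8)
  t γ hγ := (Z_QT hγ).theta Z_diff
  s := Z_QS.theta Z_diff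
  b := bdd_of_tend ((DD_tend Z_diff Z_tend1).sub ((Z_tend1.pow 2).div_const 8))

/-- The fourth-weight form. -/
def YY (z : ℂ) : ℂ := M2minus z * M2star2 z - 4 * DD M2minus z

lemma Y_MF : MF (-1) 4 YY := by
  have := X_MF.theta.smul (-4)
  refine (this.congr_on fun z hz => ?_).cast rfl (by norm_num)
  rw [YY]; push_cast; ring

lemma Y_tend1 : Tendsto YY LI (𝓝 1) := by
  have := (X_tend1.mul Z_tend1).sub ((DD_tend X_diff X_tend1).const_mul 4)
  norm_num at this
  exact this

lemma MF_of {ε : ℂ} {w : ℤ} {g : ℂ → ℂ} (h : g ∈ MFplus2 ε w) : MF ε w g where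
  d := h.1.holo
  t γ hγ z hz := h.1.transform γ hγ z hz
  s z hz := by
    have h1 := h.2 z hz
    have hj := jfac_ne S2 hz
    rw [S2_j] at hj
    rw [S2_m hz, S2_j, mul_assoc, mul_left_comm, ← h1, ← mul_assoc, ← zpow_add₀ hj]
    simp
  b := by
    obtain ⟨C, hC⟩ := h.1.bdd_at_cusps 1
    refine ⟨1, C, fun z hz => ?_⟩
    have hz' : z ∈ UHP := show 0 < z.im by linarith
    have := hC z hz' hz
    simpa [jfac, moeb, toR] using this



lemma MF.bdd_cusp {ε w g} (h : MF ε w g) (σ : SL2Z) : ∃ A C : ℝ, ∀ z ∈ UHP, A ≤ z.im →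
    ‖g (moeb (toR σ) z) * jfac (toR σ) z ^ (-w)‖ ≤ C := by
  obtain ⟨A, C, hb⟩ := h.b
  by_cases hc : (2:ℤ) ∣ σ.1 1 0
  · refine ⟨A, C, fun z hz hA => ?_⟩
    have hm : toR σ ∈ Gamma0R 2 := by
      refine ⟨σ, ?_, rfl⟩
      exact CongruenceSubgroup.Gamma0_mem.2 ((ZMod.intCast_zmod_eq_zero_iff_dvd _ 2).2 hc)
    have hj := jfac_ne (toR σ) hz
    rw [h.t _ hm z hz, one_mul, mul_assoc, mul_comm (g z), ← mul_assoc, ← zpow_add₀ hj]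
    simpa using hb z hA
  · have hd := σ.2
    rw [Matrix.det_fin_two] at hd
    obtain ⟨γ, h00, h01, h10, h11⟩ : ∃ γ : SL2Z, γ.1 0 0 = σ.1 1 1 * σ.1 0 0 - σ.1 0 1 ∧
        γ.1 0 1 = σ.1 0 0 ∧ γ.1 1 0 = σ.1 1 1 * (σ.1 1 0 - 1) ∧ γ.1 1 1 = σ.1 1 0 :=
      ⟨⟨!![σ.1 1 1 * σ.1 0 0 - σ.1 0 1, σ.1 0 0; σ.1 1 1 * (σ.1 1 0 - 1), σ.1 1 0], by
        rw [Matrix.det_fin_two]; simp; linarith⟩, rfl, rfl, rfl, rfl⟩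
    have hm : toR γ ∈ Gamma0R 2 := by
      refine ⟨γ, ?_, rfl⟩
      refine CongruenceSubgroup.Gamma0_mem.2 ((ZMod.intCast_zmod_eq_zero_iff_dvd _ 2).2 ?_)
      show (2:ℤ) ∣ γ.1 1 0
      rw [h10]
      exact Dvd.dvd.mul_left (by omega) _
    refine ⟨2 * A, ‖ε * ((Real.sqrt 2 : ℂ) / 2) ^ w‖ * C, fun z hz hA => ?_⟩
    have hj := jfac_ne (toR σ) hz
    set u : ℂ := z + σ.1 1 1 with hu
    have huim : u.im = z.im := by simp [hu]
    have huU : u / 2 ∈ UHP := by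
      show 0 < (u / 2).im
      have : 0 < z.im := hz
      simp [huim, this]
    have hu0 : u ≠ 0 := by
      intro h0; rw [h0] at huU; simp [UHP] at huU
    have hS : moeb S2 (u / 2) = -1 / u := by rw [S2_m huU]; congr 1; ring
    have hSU := moeb_mem S2 huU
    have e1 : moeb (toR γ) (moeb S2 (u / 2)) = moeb (toR σ) z := by
      rw [hS]
      rw [jfac] at hj
      simp only [moeb, toR_apply, h00, h01, h10, h11] at hj ⊢
      have h2 : ((((σ.1 1 1 * (σ.1 1 0 - 1) : ℤ) : ℝ) : ℂ) * (-1 / u) + (((σ.1 1 0 : ℤ) : ℝ) : ℂ)) =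
         ((((σ.1 1 0 : ℤ) : ℝ) : ℂ) * z + (((σ.1 1 1 : ℤ) : ℝ) : ℂ)) / u := by
        field_simp
        rw [hu]; push_cast; ring
      rw [h2]
      field_simp
      rw [hu]; push_cast; ring
    have e2 : jfac (toR γ) (moeb S2 (u / 2)) * u = jfac (toR σ) z := by
      rw [hS]
      simp only [jfac, toR_apply, h10, h11]
      field_simp
      rw [hu]; push_cast; ring
    have e3 : g (moeb (toR σ) z) * jfac (toR σ) z ^ (-w) = ε * ((Real.sqrt 2 : ℂ) / 2) ^ w * g (u / 2) := by
      have hj2 := jfac_ne (toR γ) hSU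
      rw [← e1, ← e2, h.t _ hm _ hSU, h.s _ huU, S2_j, show (Real.sqrt 2 : ℂ) * (u / 2) = (Real.sqrt 2 : ℂ) / 2 * u by ring,
        mul_zpow, mul_zpow, _root_.zpow_neg, _root_.zpow_neg]
      have := zpow_ne_zero w hj2
      have := zpow_ne_zero w hu0
      field_simp
    rw [e3, norm_mul]
    gcongr
    apply hb
    have : (u / 2).im = z.im / 2 := by simp [huim]
    rw [this]; linarith

abbrev G02 : Subgroup (GL (Fin 2) ℝ) :=
  Subgroup.map (Matrix.SpecialLinearGroup.mapGL ℝ) (CongruenceSubgroup.Gamma0 2)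

open ModularForm in
lemma MF.slash {ε w g} (_h : MF ε w g) (σ : SL2Z) (τ : UpperHalfPlane) :
    ((fun τ : UpperHalfPlane => g τ) ∣[w] (Matrix.SpecialLinearGroup.mapGL ℝ σ)) τ =
      g (moeb (toR σ) τ) * jfac (toR σ) τ ^ (-w) := by
  have := ModularForm.SL_slash_apply (k := w) (fun τ : UpperHalfPlane => g τ) σ τ
  rw [moeb_toR, jfac_toR] at this
  exact this

def MF.toM {ε w g} (h : MF ε w g) : ModularForm G02 w where
  toFun τ := g τ
  slash_action_eq' γ hγ := by
    obtain ⟨σ, hσ, rfl⟩ := hγ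
    ext τ
    refine (h.slash σ τ).trans ?_
    have hz : (τ : ℂ) ∈ UHP := τ.im_pos
    have hj := jfac_ne (toR σ) hz
    rw [h.t (toR σ) ⟨σ, hσ, rfl⟩ _ hz, one_mul, mul_assoc, mul_comm (g τ), ← mul_assoc, ← zpow_add₀ hj]
    simp
  holo' := by
    rw [UpperHalfPlane.mdifferentiable_iff]
    refine h.d.congr fun z hz => ?_
    have hz' : 0 < z.im := hz
    show g ((UpperHalfPlane.ofComplex z : UpperHalfPlane) : ℂ) = g z
    rw [UpperHalfPlane.ofComplex_apply_of_im_pos hz']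
  bdd_at_cusps' := by
    intro c hc
    rw [Subgroup.IsArithmetic.isCusp_iff_isCusp_SL2Z] at hc
    rw [OnePoint.isBoundedAt_iff_forall_SL2Z hc]
    intro σ _
    rw [UpperHalfPlane.isBoundedAtImInfty_iff]
    obtain ⟨A, C, hb⟩ := h.bdd_cusp σ
    refine ⟨C, A, fun τ hτ => ?_⟩
    have h1 := h.slash σ τ
    have h2 := hb τ τ.im_pos hτ
    rw [← h1] at h2
    exact h2

lemma MF.zero_neg {ε w g} (h : MF ε w g) (hw : w < 0) : ∀ z ∈ UHP, g z = 0 := by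
  intro z hz
  have := ModularForm.isZero_of_neg_weight hw h.toM
  have h2 := congrArg (fun F : ModularForm G02 w => F ⟨z, hz⟩) this
  exact h2

lemma MF.const {ε g} (h : MF ε 0 g) : ∃ c, ∀ z ∈ UHP, g z = c := by
  obtain ⟨c, hc⟩ := ModularForm.eq_const_of_weight_zero h.toM
  refine ⟨c, fun z hz => ?_⟩
  exact congrFun hc ⟨z, hz⟩

lemma MF.const_zero {ε g} (h : MF ε 0 g) (ht : Tendsto g LI (𝓝 0)) : ∀ z ∈ UHP, g z = 0 := by
  obtain ⟨c, hc⟩ := h.const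
  have : Tendsto g LI (𝓝 c) := tendsto_const_nhds.congr' (by
    filter_upwards [ev_UHP] with z hz using (hc z hz).symm)
  have := tendsto_nhds_unique this ht
  intro z hz; rw [hc z hz, this]

lemma MF.per {ε w g} (h : MF ε w g) {z : ℂ} (hz : z ∈ UHP) : g (z + 1) = g z := by
  have hm : toR ModularGroup.T ∈ Gamma0R 2 := by
    refine ⟨ModularGroup.T, ?_, rfl⟩
    refine CongruenceSubgroup.Gamma0_mem.2 ?_
    simp [ModularGroup.T]
  have := h.t _ hm z hz
  have h1 : moeb (toR ModularGroup.T) z = z + 1 := by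
    rw [moeb]; simp only [toR_apply]; simp [ModularGroup.T]
  have h2 : jfac (toR ModularGroup.T) z = 1 := by
    rw [jfac]; simp only [toR_apply]; simp [ModularGroup.T]
  simpa [h1, h2] using this

lemma MF.decay {ε w g} (h : MF ε w g) : ∃ α : ℂ, ∃ A C : ℝ, ∀ z : ℂ, A ≤ z.im → ‖(g z - α) / qexp z‖ ≤ C := by
  have hper : Function.Periodic ((fun τ : UpperHalfPlane => g τ) ∘ UpperHalfPlane.ofComplex) ((1:ℝ):ℂ) := by
    intro z
    by_cases hz : 0 < z.im
    · have hz1 : 0 < (z + ((1:ℝ):ℂ)).im := by simpa using hz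
      simp only [Function.comp, UpperHalfPlane.ofComplex_apply_of_im_pos hz,
        UpperHalfPlane.ofComplex_apply_of_im_pos hz1]
      simpa using h.per hz
    · have hz1 : ¬ 0 < (z + ((1:ℝ):ℂ)).im := by simpa using hz
      rw [Function.comp, Function.comp, UpperHalfPlane.ofComplex_apply_of_im_nonpos (not_lt.1 hz),
        UpperHalfPlane.ofComplex_apply_of_im_nonpos (not_lt.1 hz1)]
  have hbd : UpperHalfPlane.IsBoundedAtImInfty (fun τ : UpperHalfPlane => g τ) := by
    rw [UpperHalfPlane.isBoundedAtImInfty_iff]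
    obtain ⟨A, C, hb⟩ := h.b
    exact ⟨C, A, fun τ hτ => hb τ hτ⟩
  have := UpperHalfPlane.exp_decay_sub_atImInfty one_pos hper h.toM.holo' hbd
  obtain ⟨C, hC⟩ := this.bound
  refine ⟨UpperHalfPlane.valueAtInfty fun τ : UpperHalfPlane => g τ, ?_⟩
  rw [UpperHalfPlane.atImInfty, eventually_comap] at hC
  obtain ⟨A, hA⟩ := eventually_atTop.1 hC
  refine ⟨max A 1, C, fun z hz => ?_⟩
  have h1 := (le_max_right A 1).trans hz
  have hz' : 0 < z.im := by linarith
  have := hA z.im ((le_max_left A 1).trans hz) ⟨z, hz'⟩ rfl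
  rw [norm_div, qexp_norm, div_le_iff₀ (Real.exp_pos _)]
  rw [Real.norm_of_nonneg (Real.exp_pos _).le, div_one] at this
  have h3 : -(2 * Real.pi * z.im) = -2 * Real.pi * z.im := by ring
  rw [h3]
  exact this

lemma tend_of_div_bdd {u : ℂ → ℂ} (h : ∃ A C : ℝ, ∀ z : ℂ, A ≤ z.im → ‖u z / qexp z‖ ≤ C) :
    Tendsto u LI (𝓝 0) := by
  obtain ⟨A, C, h⟩ := h
  have h2 : Tendsto (fun z => qexp z * (u z / qexp z)) LI (𝓝 0) := by
    refine qexp_tend.zero_mul_isBoundedUnder_le ?_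
    exact isBoundedUnder_of_eventually_le (a := C) (by
      filter_upwards [ev_im A] with z hz using h z hz)
  refine h2.congr fun z => ?_
  rw [mul_div_cancel₀ _ (qexp_ne z)]

lemma MF.lim {ε w g} (h : MF ε w g) : ∃ α : ℂ, Tendsto g LI (𝓝 α) := by
  obtain ⟨α, hα⟩ := h.decay
  refine ⟨α, ?_⟩
  have := (tend_of_div_bdd (u := fun z => g z - α) hα).add_const α
  simpa using this

lemma MF.bigO {ε w g} (h : MF ε w g) (h0 : Tendsto g LI (𝓝 0)) :
    ∃ A C : ℝ, ∀ z : ℂ, A ≤ z.im → ‖g z / qexp z‖ ≤ C := by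
  obtain ⟨α, hα⟩ := h.decay
  have := (tend_of_div_bdd (u := fun z => g z - α) hα).add_const α
  have h1 : Tendsto g LI (𝓝 α) := by simpa using this
  have := tendsto_nhds_unique h1 h0
  subst this
  simpa using hα



def phi (q : ℂ) : ℂ := ∏' n : ℕ, (1 - q ^ (n + 1))

lemma phi_tend : Tendsto phi (𝓝 0) (𝓝 1) := by
  have := tendsto_tprod_one_add_of_dominated_convergence (𝓕 := 𝓝 0) (g := 0)
    (f := fun (q : ℂ) (n : ℕ) ↦ -q ^ (n + 1)) (bound := fun n ↦ (1 / 2 : ℝ) ^ (n + 1))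
  simp only [Pi.zero_apply, norm_neg, norm_pow, add_zero, tprod_one] at this
  unfold phi
  simp_rw [sub_eq_add_neg]
  refine this
    (by simpa only [pow_succ'] using (summable_geometric_of_abs_lt_one (by norm_num)).mul_left _)
    (fun k ↦ by simpa using ((continuous_pow (M := ℂ) (k + 1)).tendsto 0).neg) ?_
  filter_upwards [Metric.ball_mem_nhds (0 : ℂ) (by norm_num : (0 : ℝ) < 1 / 2)] with q hq k
  exact pow_le_pow_left₀ (norm_nonneg _) (mem_ball_zero_iff.mp hq).le _

lemma eta_eq (z : ℂ) : ModularForm.eta z = Complex.exp (2 * Real.pi * I * z / 24) * phi (qexp z) := by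
  rw [ModularForm.eta, phi]
  simp only [ModularForm.eta_q_eq_pow]
  congr 1

lemma eta_has {z : ℂ} (hz : z ∈ UHP) :
    HasDerivAt ModularForm.eta (2 * Real.pi * I * (E2 z / 24 * ModularForm.eta z)) z := by
  have h1 := ModularForm.logDeriv_eta_eq_E2 ⟨z, hz⟩
  rw [← E2_eq, logDeriv_apply] at h1
  have h0 : ModularForm.eta z ≠ 0 := ModularForm.eta_ne_zero hz
  have h2 := (ModularForm.differentiableAt_eta_of_mem_upperHalfPlaneSet hz).hasDerivAt
  refine h2.congr_deriv ?_
  change deriv ModularForm.eta z / ModularForm.eta z = Real.pi * I / 12 * E2 z at h1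
  rw [div_eq_iff h0] at h1
  rw [h1]; ring

def HH (z : ℂ) : ℂ := ModularForm.eta z * ModularForm.eta (2 * z)

lemma HH_ne {z : ℂ} (hz : z ∈ UHP) : HH z ≠ 0 :=
  mul_ne_zero (ModularForm.eta_ne_zero hz) (ModularForm.eta_ne_zero (two_mul_mem hz))

lemma HH_has {z : ℂ} (hz : z ∈ UHP) : HasDerivAt HH (2 * Real.pi * I * (M2star2 z / 8 * HH z)) z := by
  have h2 : HasDerivAt (fun z : ℂ => 2 * z) 2 z := by simpa using (hasDerivAt_id z).const_mul 2
  have := (eta_has hz).mul ((eta_has (two_mul_mem hz)).comp z h2)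
  refine this.congr_deriv ?_
  simp only [HH, M2star2, Function.comp]
  ring

lemma HHpow_has {z : ℂ} (hz : z ∈ UHP) (n : ℕ) :
    HasDerivAt (fun z => HH z ^ n) (2 * Real.pi * I * (n * M2star2 z / 8 * HH z ^ n)) z := by
  refine ((HH_has hz).pow n).congr_deriv ?_
  rcases n with _ | n
  · simp
  · simp; ring

lemma HHpow_eq (z : ℂ) (hz : z ∈ UHP) (n : ℕ) :
    HH z ^ n = Complex.exp (2 * Real.pi * I * z * n / 8) * ∏' m : ℕ,
      ((1 - qexp z ^ (m + 1)) ^ n * (1 - qexp z ^ (2 * (m + 1))) ^ n) := by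
  have hq := qexp_lt hz
  have hq2 : ‖qexp z ^ 2‖ < 1 := by rw [norm_pow]; exact pow_lt_one₀ (norm_nonneg _) hq two_ne_zero
  have m1 := ModularForm.multipliable_one_sub_pow hq
  have m2 := ModularForm.multipliable_one_sub_pow hq2
  simp only [pow_mul]
  rw [(m1.pow n).tprod_mul (m2.pow n), m1.tprod_pow, m2.tprod_pow, HH, eta_eq, eta_eq, qexp_two, phi, phi]
  simp only [mul_pow, ← Complex.exp_nat_mul]
  have : Complex.exp (2 * Real.pi * I * z * n / 8) =
    Complex.exp (n * (2 * Real.pi * I * z / 24)) * Complex.exp (n * (2 * Real.pi * I * (2 * z) / 24)) := by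
    rw [← Complex.exp_add]; congr 1; ring
  rw [this]; ring

lemma M8_eq {z : ℂ} (hz : z ∈ UHP) : M8fun z = HH z ^ 8 := by
  rw [HHpow_eq z hz, M8fun, qexp]
  congr 2
  push_cast; ring

lemma P_eq {z : ℂ} (hz : z ∈ UHP) (k : ℕ) : Pfun2 k z = HH z ^ (4 * k) := by
  rw [HHpow_eq z hz, Pfun2]
  congr 2
  push_cast; ring

lemma HH8_tend : Tendsto (fun z => HH z ^ 8 / qexp z) LI (𝓝 1) := by
  have h1 := phi_tend.comp qexp_tend
  have h2 := phi_tend.comp (qexp_tend.comp tend_two)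
  have := (h1.mul h2).pow 8
  norm_num at this
  refine this.congr fun z => ?_
  rw [HH, eta_eq, eta_eq]
  simp only [mul_pow, ← Complex.exp_nat_mul, Function.comp]
  have : qexp z = Complex.exp ((8:ℕ) * (2 * Real.pi * I * z / 24)) * Complex.exp ((8:ℕ) * (2 * Real.pi * I * (2 * z) / 24)) := by
    rw [← Complex.exp_add, qexp]; congr 1; push_cast; ring
  rw [eq_div_iff (qexp_ne z)]
  conv_lhs => rw [mul_comm]
  rw [show ∀ a, qexp z * a = Complex.exp ((8:ℕ) * (2 * Real.pi * I * z / 24)) * Complex.exp ((8:ℕ) * (2 * Real.pi * I * (2 * z) / 24)) * a from fun a => by rw [← this]]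
  ring

lemma eta24_tr (σ : SL2Z) {z : ℂ} (hz : z ∈ UHP) :
    ModularForm.eta (moeb (toR σ) z) ^ 24 = jfac (toR σ) z ^ (12:ℤ) * ModularForm.eta z ^ 24 := by
  have h := SlashInvariantForm.slash_action_eqn'' (Γ := (Matrix.SpecialLinearGroup.mapGL ℝ).range) CuspForm.discriminant
    (γ := Matrix.SpecialLinearGroup.mapGL ℝ σ) ⟨σ, rfl⟩ ⟨z, hz⟩
  have h1 : (Matrix.SpecialLinearGroup.mapGL ℝ σ) • (⟨z, hz⟩ : UpperHalfPlane) = σ • ⟨z, hz⟩ := rfl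
  have h3 : UpperHalfPlane.denom (Matrix.SpecialLinearGroup.mapGL ℝ σ) (⟨z, hz⟩ : UpperHalfPlane) = jfac (toR σ) z := jfac_toR σ ⟨z, hz⟩
  rw [h1, h3] at h
  change ModularForm.eta ((σ • (⟨z, hz⟩ : UpperHalfPlane) : UpperHalfPlane) : ℂ) ^ 24 = _ * ModularForm.eta z ^ 24 at h
  rw [moeb_toR] at h
  exact h

lemma eta24_S {z : ℂ} (hz : z ∈ UHP) : ModularForm.eta (-1 / z) ^ 24 = z ^ 12 * ModularForm.eta z ^ 24 := by
  have := eta24_tr ModularGroup.S hz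
  rw [S_m, S_j] at this
  exact_mod_cast this

lemma HH_t {γ : SL2R} (hγ : γ ∈ Gamma0R 2) : TR γ 1 24 (fun z => HH z ^ 24) := by
  intro z hz
  obtain ⟨σ, σ', rfl, h1, h2, h3, h4⟩ := G0_cases hγ
  simp only [HH, mul_pow]
  have hj := jfac_ne (toR σ) hz
  rw [h3 z hz, eta24_tr _ (two_mul_mem hz), eta24_tr _ hz, h4, show (24:ℤ) = 12 + 12 by norm_num, zpow_add₀ hj]
  ring

lemma HH_s : TR S2 1 24 (fun z => HH z ^ 24) := by
  intro z hz
  simp only [HH, mul_pow]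
  rw [S2_m hz, fr1 hz, eta24_S hz, eta24_S (two_mul_mem hz), S2_j,
    show ((Real.sqrt 2 : ℂ) * z) ^ (24:ℤ) = (((Real.sqrt 2 : ℂ))^2) ^ 12 * z ^ 24 by
      rw [show (24:ℤ) = ((24:ℕ):ℤ) from rfl, zpow_natCast]; ring, sq2]
  ring

lemma HH24_tend : Tendsto (fun z => qexp z ^ 3 / HH z ^ 24) LI (𝓝 1) := by
  have := (HH8_tend.pow 3).inv₀ (by norm_num)
  norm_num at this
  refine this.congr fun z => ?_
  rw [div_pow, inv_div]
  congr 1; ring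

lemma MF.valence {ε w g} (h : MF ε w g) (n : ℕ) (hn : 4 ≤ n) (hw : n * w = 24)
    (h0 : Tendsto g LI (𝓝 0)) : ∀ z ∈ UHP, g z = 0 := by
  obtain ⟨A, C, hb⟩ := h.bigO h0
  have ht : Tendsto (fun z => g z ^ n / HH z ^ 24) LI (𝓝 0) := by
    have hb2 : Tendsto (fun z => qexp z ^ (n - 3) * (g z / qexp z) ^ n) LI (𝓝 0) := by
      have hq : Tendsto (fun z => qexp z ^ (n - 3)) LI (𝓝 0) := by
        have := qexp_tend.pow (n - 3)
        rwa [zero_pow (by omega)] at this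
      refine hq.zero_mul_isBoundedUnder_le ?_
      refine isBoundedUnder_of_eventually_le (a := C ^ n) ?_
      filter_upwards [ev_im A] with z hz
      simp only [Function.comp, norm_pow]
      exact pow_le_pow_left₀ (norm_nonneg _) (hb z hz) n
    have := hb2.mul HH24_tend
    rw [zero_mul] at this
    refine this.congr fun z => ?_
    have hq := qexp_ne z
    have e : qexp z ^ n = qexp z ^ (n - 3) * qexp z ^ 3 := by rw [← pow_add]; congr 1; omega
    rw [div_pow, e]
    field_simp
  have hn1 := h.pow n
  have hM : MF (ε ^ n / 1) 0 (fun z => g z ^ n / HH z ^ 24) := by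
    refine ⟨?_, ?_, ?_, bdd_of_tend ht⟩
    · intro z hz
      exact ((at_of_on hn1.d hz).div (HHpow_has hz 24).differentiableAt (pow_ne_zero _ (HH_ne hz))).differentiableWithinAt
    · intro γ hγ
      have := (hn1.t γ hγ).div (HH_t hγ)
      rw [hw] at this
      simpa using this
    · have := hn1.s.div HH_s
      rw [hw] at this
      simpa using this
  intro z hz
  have := hM.const_zero ht z hz
  rw [div_eq_zero_iff] at this
  rcases this with h | h
  · exact pow_eq_zero_iff (by omega) |>.1 h
  · exact absurd h (pow_ne_zero _ (HH_ne hz))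



lemma M4_eq {z : ℂ} (hz : z ∈ UHP) : M4plus2 z = M2minus z ^ 2 := by
  have h := M4_MF.sub ((X_MF.pow 2).cast (ε' := 1) (w' := 4) (by norm_num) (by norm_num))
  have := h.valence 6 (by norm_num) (by norm_num) (by simpa using M4_tend1.sub (X_tend1.pow 2)) z hz
  exact sub_eq_zero.1 this

lemma DZ_eq {z : ℂ} (hz : z ∈ UHP) : DD M2star2 z = (M2star2 z ^ 2 - M2minus z ^ 2) / 8 := by
  have h := Zth_MF.add (((X_MF.pow 2).cast (ε' := 1) (w' := 4) (by norm_num) (by norm_num)).smul (1/8))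
  have ht : Tendsto (fun z => DD M2star2 z - M2star2 z ^ 2 / 8 + 1/8 * M2minus z ^ 2) LI (𝓝 0) := by
    have := ((DD_tend Z_diff Z_tend1).sub ((Z_tend1.pow 2).div_const 8)).add ((X_tend1.pow 2).const_mul (1/8))
    norm_num at this
    simpa using this
  have := h.valence 6 (by norm_num) (by norm_num) ht z hz
  linear_combination this

lemma DX_eq (z : ℂ) : DD M2minus z = (M2minus z * M2star2 z - YY z) / 4 := by
  rw [YY]; ring

lemma Y_diff : DifferentiableOn ℂ YY UHP := Y_MF.d

lemma DY_eq {z : ℂ} (hz : z ∈ UHP) : DD YY z = (YY z * M2star2 z - M2minus z ^ 3) / 2 := by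
  have h := Y_MF.theta.add (((X_MF.pow 3).cast (ε' := -1) (w' := 4 + 2) (by norm_num) (by norm_num)).smul (1/2))
  have ht : Tendsto (fun z => DD YY z - (((4:ℤ):ℂ)/8) * M2star2 z * YY z + 1/2 * M2minus z ^ 3) LI (𝓝 0) := by
    have := ((DD_tend Y_diff Y_tend1).sub ((Z_tend1.const_mul (((4:ℤ):ℂ)/8)).mul Y_tend1)).add ((X_tend1.pow 3).const_mul (1/2))
    norm_num at this
    refine this.congr fun z => ?_
    push_cast; ring
  have := h.valence 4 (by norm_num) (by norm_num) ht z hz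
  push_cast at this
  linear_combination this

lemma X_has {z : ℂ} (hz : z ∈ UHP) :
    HasDerivAt M2minus (2 * Real.pi * I * ((M2minus z * M2star2 z - YY z) / 4)) z := by
  rw [← DX_eq]; exact DD_has X_diff hz
lemma Y_has {z : ℂ} (hz : z ∈ UHP) :
    HasDerivAt YY (2 * Real.pi * I * ((YY z * M2star2 z - M2minus z ^ 3) / 2)) z := by
  rw [← DY_eq hz]; exact DD_has Y_diff hz
lemma Z_has {z : ℂ} (hz : z ∈ UHP) :
    HasDerivAt M2star2 (2 * Real.pi * I * ((M2star2 z ^ 2 - M2minus z ^ 2) / 8)) z := by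
  rw [← DZ_eq hz]; exact DD_has Z_diff hz

def E8 (z : ℂ) : ℂ := (M2minus z ^ 4 - YY z ^ 2) / 256

lemma qexp_has (z : ℂ) : HasDerivAt qexp (2 * Real.pi * I * qexp z) z := by
  have h2 : HasDerivAt (fun z : ℂ => 2 * Real.pi * I * z) (2 * Real.pi * I) z := by
    simpa using (hasDerivAt_id z).const_mul (2 * Real.pi * I)
  refine h2.cexp.congr_deriv ?_
  rw [qexp]; ring

lemma E8_tend : Tendsto (fun z => E8 z / qexp z) LI (𝓝 1) := by
  have hq0 : Tendsto (fun z => (E2 (2 * z) - 1) / qexp z) LI (𝓝 0) := by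
    have := (E2_tend.comp tend_two).mul qexp_tend
    rw [mul_zero] at this
    refine this.congr fun z => ?_
    have := qexp_ne z
    simp only [Function.comp, qexp_two]
    field_simp
  have hx : Tendsto (fun z => (M2minus z - 1) / qexp z) LI (𝓝 24) := by
    have := (hq0.const_mul 2).sub E2_tend
    norm_num at this
    refine this.congr fun z => ?_
    rw [M2minus]; ring
  have hxz : Tendsto (fun z => (M2minus z - M2star2 z) / qexp z) LI (𝓝 32) := by
    have := (hq0.const_mul (4/3)).sub (E2_tend.const_mul (4/3))
    norm_num at this
    refine this.congr fun z => ?_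
    rw [M2minus, M2star2]; ring
  have hd : DifferentiableOn ℂ (fun z => (M2minus z - 1) / qexp z) UHP :=
    (X_diff.sub_const 1).div (fun z _ => (qexp_has z).differentiableAt.differentiableWithinAt) (fun z _ => qexp_ne z)
  have hdx : Tendsto (fun z => DD M2minus z / qexp z) LI (𝓝 24) := by
    have := hx.add (DD_tend hd hx)
    rw [add_zero] at this
    refine this.congr' ?_
    filter_upwards [ev_UHP] with z hz
    have h1 := (DD_has X_diff hz).sub_const 1 |>.div (qexp_has z) (qexp_ne z)
    have h2 := (DD_has hd hz).unique h1
    have hq := qexp_ne z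
    have : DD (fun z => (M2minus z - 1) / qexp z) z = (DD M2minus z * qexp z - (M2minus z - 1) * qexp z) / qexp z ^ 2 := by
      apply mul_left_cancel₀ tpi_ne
      rw [h2]; ring
    rw [this]; field_simp; ring
  have := ((X_tend1.mul hxz).add (hdx.const_mul 4)).mul (((X_tend1.pow 2).add Y_tend1).div_const 256)
  norm_num at this
  refine this.congr fun z => ?_
  rw [E8, DX_eq]
  have hq := qexp_ne z
  field_simp
  ring

lemma UHP_convex : Convex ℝ UHP := convex_halfSpace_im_gt 0

lemma const_of_deriv {g : ℂ → ℂ} (h : ∀ z ∈ UHP, HasDerivAt g 0 z) {c : ℂ} (ht : Tendsto g LI (𝓝 c)) :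
    ∀ z ∈ UHP, g z = c := by
  intro z hz
  have : ∀ w ∈ UHP, g w = g z := by
    intro w hw
    refine UHP_convex.is_const_of_fderivWithin_eq_zero (𝕜 := ℂ)
      (fun u hu => (h u hu).differentiableAt.differentiableWithinAt) ?_ hw hz
    intro u hu
    rw [fderivWithin_of_isOpen UHP_open hu]
    have := (h u hu).hasFDerivAt.fderiv
    rw [this]; ext; simp
  have h2 : Tendsto g LI (𝓝 (g z)) := by
    refine tendsto_const_nhds.congr' ?_
    filter_upwards [ev_UHP] with w hw
    rw [this w hw]
  exact tendsto_nhds_unique h2 ht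

lemma E8_has {z : ℂ} (hz : z ∈ UHP) : HasDerivAt E8 (2 * Real.pi * I * (M2star2 z * E8 z)) z := by
  refine ((((X_has hz).pow 4).sub ((Y_has hz).pow 2)).div_const 256).congr_deriv ?_
  rw [E8]; push_cast; ring

lemma E8_eq {z : ℂ} (hz : z ∈ UHP) : E8 z = HH z ^ 8 := by
  have h : ∀ z ∈ UHP, HasDerivAt (fun z => E8 z / HH z ^ 8) 0 z := by
    intro z hz
    refine ((E8_has hz).div (HHpow_has hz 8) (pow_ne_zero _ (HH_ne hz))).congr_deriv ?_
    push_cast; ring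
  have ht : Tendsto (fun z => E8 z / HH z ^ 8) LI (𝓝 1) := by
    have := E8_tend.div HH8_tend one_ne_zero
    rw [div_one] at this
    refine this.congr fun z => ?_
    simp only [Pi.div_apply]
    exact div_div_div_cancel_right₀ (qexp_ne z) _ _
  have := const_of_deriv h ht z hz
  rwa [div_eq_one_iff_eq (pow_ne_zero _ (HH_ne hz))] at this

lemma E8_ne {z : ℂ} (hz : z ∈ UHP) : E8 z ≠ 0 := by
  rw [E8_eq hz]; exact pow_ne_zero _ (HH_ne hz)

lemma E8_MF : MF 1 8 E8 :=
  ((((X_MF.pow 4).cast (ε' := 1) (w' := 8) (by norm_num) (by norm_num)).sub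
    ((Y_MF.pow 2).cast (ε' := 1) (w' := 8) (by norm_num) (by norm_num))).smul (1/256)).congr_on
    fun z _ => by rw [E8]; ring

lemma MF.divE8 {ε w g} (h : MF ε w g) (h0 : Tendsto g LI (𝓝 0)) : MF ε (w - 8) (fun z => g z / E8 z) where
  d := h.d.div E8_MF.d (fun z hz => E8_ne hz)
  t := fun γ hγ => by simpa using (h.t γ hγ).div (E8_MF.t γ hγ)
  s := by simpa using h.s.div E8_MF.s
  b := by
    obtain ⟨A, C, hb⟩ := h.bigO h0
    have h1 := bdd_of_tend (E8_tend.inv₀ one_ne_zero)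
    obtain ⟨A', C', h2⟩ := bdd_mul ⟨A, C, hb⟩ h1
    refine ⟨A', C', fun z hz => ?_⟩
    have := h2 z hz
    have e : g z / qexp z * (E8 z / qexp z)⁻¹ = g z / E8 z := by
      rw [inv_div, div_mul_div_cancel₀ (qexp_ne z)]
    rwa [e] at this



def mon (m n : ℕ) (z : ℂ) : ℂ := M2minus z ^ m * YY z ^ n

def SA (k : ℕ) : Submodule ℂ (ℂ → ℂ) := Submodule.span ℂ {g | ∃ i n, 2 * i + n = k ∧ g = mon (4 * i) n}
def SB (k : ℕ) : Submodule ℂ (ℂ → ℂ) := Submodule.span ℂ {g | ∃ i n, 2 * i + n + 1 = k ∧ g = mon (4 * i + 3) n}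

lemma monA {i n k : ℕ} (h : 2 * i + n = k) : mon (4 * i) n ∈ SA k := Submodule.subset_span ⟨i, n, h, rfl⟩
lemma monB {i n k : ℕ} (h : 2 * i + n + 1 = k) : mon (4 * i + 3) n ∈ SB k := Submodule.subset_span ⟨i, n, h, rfl⟩

lemma mulE8 {S T : Set (ℂ → ℂ)} (h : ∀ g ∈ S, E8 * g ∈ Submodule.span ℂ T) {g : ℂ → ℂ}
    (hg : g ∈ Submodule.span ℂ S) : E8 * g ∈ Submodule.span ℂ T := by
  induction hg using Submodule.span_induction with
  | mem x hx => exact h x hx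
  | zero => simp
  | add x y _ _ hx hy => rw [mul_add]; exact add_mem hx hy
  | smul c x _ hx => rw [mul_smul_comm]; exact Submodule.smul_mem _ _ hx

lemma E8_mon (m n : ℕ) : E8 * mon m n = (1/256 : ℂ) • (mon (m + 4) n - mon m (n + 2)) := by
  funext z
  simp [E8, mon]; ring

lemma E8A {k : ℕ} {g : ℂ → ℂ} (hg : g ∈ SA k) : E8 * g ∈ SA (k + 2) := by
  refine mulE8 ?_ hg
  rintro _ ⟨i, n, h, rfl⟩
  rw [E8_mon]
  exact Submodule.smul_mem _ _ (sub_mem (monA (i := i + 1) (by omega)) (monA (by omega)))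

lemma E8B {k : ℕ} {g : ℂ → ℂ} (hg : g ∈ SB k) : E8 * g ∈ SB (k + 2) := by
  refine mulE8 ?_ hg
  rintro _ ⟨i, n, h, rfl⟩
  rw [E8_mon]
  exact Submodule.smul_mem _ _ (sub_mem (monB (i := i + 1) (by omega)) (monB (by omega)))

lemma mon_tend (m n : ℕ) : Tendsto (mon m n) LI (𝓝 1) := by
  have := (X_tend1.pow m).mul (Y_tend1.pow n)
  simp only [one_pow, one_mul] at this
  exact this

lemma mon_MF (m n : ℕ) : MF ((-1) ^ (m + n)) (2 * m + 4 * n) (mon m n) :=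
  ((X_MF.pow m).mul (Y_MF.pow n)).cast (by rw [pow_add]) (by ring)

lemma step {ε : ℂ} {w : ℤ} {g u : ℂ → ℂ} (hg : MF ε w g) (hu : MF ε w u) (h1 : Tendsto u LI (𝓝 1)) :
    ∃ (α : ℂ) (g' : ℂ → ℂ), MF ε (w - 8) g' ∧ ∀ z ∈ UHP, g z = α * u z + E8 z * g' z := by
  obtain ⟨α, hα⟩ := hg.lim
  have h := hg.sub (hu.smul α)
  have ht : Tendsto (fun z => g z - α * u z) LI (𝓝 0) := by
    simpa using hα.sub (h1.const_mul α)
  refine ⟨α, _, h.divE8 ht, fun z hz => ?_⟩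
  have := E8_ne hz
  field_simp
  ring

lemma strA : ∀ (k : ℕ) (g : ℂ → ℂ), MF ((-1) ^ k) (4 * k) g → ∃ a ∈ SA k, ∀ z ∈ UHP, g z = a z
  | 0, g, hg => by
    obtain ⟨c, hc⟩ := (hg.cast (w' := 0) rfl (by norm_num)).const
    refine ⟨c • mon (4 * 0) 0, Submodule.smul_mem _ _ (monA rfl), fun z hz => ?_⟩
    simp [hc z hz, mon]
  | 1, g, hg => by
    obtain ⟨α, g', h1, h2⟩ := step hg ((mon_MF (4 * 0) 1).cast (by norm_num) (by norm_num)) (mon_tend _ _)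
    refine ⟨α • mon (4 * 0) 1, Submodule.smul_mem _ _ (monA rfl), fun z hz => ?_⟩
    rw [h2 z hz, h1.zero_neg (by norm_num) z hz]
    simp
  | k + 2, g, hg => by
    obtain ⟨α, g', h1, h2⟩ := step hg ((mon_MF (4 * 0) (k + 2)).cast (by norm_num) (by push_cast; ring)) (mon_tend _ _)
    obtain ⟨a, ha, ha2⟩ := strA k g' (h1.cast (by rw [pow_add]; norm_num) (by push_cast; ring))
    refine ⟨α • mon (4 * 0) (k + 2) + E8 * a, add_mem (Submodule.smul_mem _ _ (monA (by omega))) (E8A ha), fun z hz => ?_⟩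
    rw [h2 z hz, ha2 z hz]
    simp

lemma str2 {g : ℂ → ℂ} (hg : MF 1 2 g) : ∀ z ∈ UHP, g z = 0 := by
  obtain ⟨α, hα⟩ := hg.lim
  have h1 : ∀ z ∈ UHP, g z * M2minus z - α * YY z = 0 := by
    have := ((hg.mul X_MF).cast (ε' := -1) (w' := 4) (by norm_num) (by norm_num)).sub (Y_MF.smul α)
    refine this.valence 6 (by norm_num) (by norm_num) ?_
    simpa using (hα.mul X_tend1).sub (Y_tend1.const_mul α)
  have h2 : ∀ z ∈ UHP, g z ^ 2 - α ^ 2 * M2minus z ^ 2 = 0 := by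
    have := ((hg.pow 2).cast (ε' := 1) (w' := 4) (by norm_num) (by norm_num)).sub
      (((X_MF.pow 2).cast (ε' := 1) (w' := 4) (by norm_num) (by norm_num)).smul (α ^ 2))
    refine this.valence 6 (by norm_num) (by norm_num) ?_
    have := (hα.pow 2).sub ((X_tend1.pow 2).const_mul (α ^ 2))
    rwa [one_pow, mul_one, sub_self] at this
  intro z hz
  have h3 : α ^ 2 * E8 z = 0 := by
    rw [E8]
    linear_combination (-(M2minus z)^2 * h2 z hz + (g z * M2minus z + α * YY z) * h1 z hz) / 256
  have h4 : α ^ 2 = 0 := (mul_eq_zero.1 h3).resolve_right (E8_ne hz)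
  have h5 := h2 z hz
  rw [h4, zero_mul, sub_zero] at h5
  exact pow_eq_zero_iff (two_ne_zero) |>.1 h5

lemma strB : ∀ (k : ℕ) (g : ℂ → ℂ), MF ((-1) ^ k) (4 * k + 2) g → ∃ a ∈ SB k, ∀ z ∈ UHP, g z = a z
  | 0, g, hg => by
    refine ⟨0, zero_mem _, fun z hz => ?_⟩
    rw [str2 (hg.cast (by norm_num) (by norm_num)) z hz]; rfl
  | 1, g, hg => by
    obtain ⟨α, g', h1, h2⟩ := step hg ((mon_MF (4 * 0 + 3) 0).cast (by norm_num) (by norm_num)) (mon_tend _ _)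
    refine ⟨α • mon (4 * 0 + 3) 0, Submodule.smul_mem _ _ (monB rfl), fun z hz => ?_⟩
    rw [h2 z hz, h1.zero_neg (by norm_num) z hz]
    simp
  | k + 2, g, hg => by
    obtain ⟨α, g', h1, h2⟩ := step hg ((mon_MF (4 * 0 + 3) (k + 1)).cast
      (by rw [show 4 * 0 + 3 + (k + 1) = k + 2 + 2 by ring, pow_add _ (k+2)]; norm_num) (by push_cast; ring)) (mon_tend _ _)
    obtain ⟨a, ha, ha2⟩ := strB k g' (h1.cast (by rw [pow_add]; norm_num) (by push_cast; ring))
    refine ⟨α • mon (4 * 0 + 3) (k + 1) + E8 * a, add_mem (Submodule.smul_mem _ _ (monB (by omega))) (E8B ha), fun z hz => ?_⟩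
    rw [h2 z hz, ha2 z hz]
    simp



def xD (z : ℂ) : ℂ := (M2minus z * M2star2 z - YY z) / 4
def yD (z : ℂ) : ℂ := (YY z * M2star2 z - M2minus z ^ 3) / 2
def zD (z : ℂ) : ℂ := (M2star2 z ^ 2 - M2minus z ^ 2) / 8
def xDD (z : ℂ) : ℂ := (xD z * M2star2 z + M2minus z * zD z - yD z) / 4
def zDD (z : ℂ) : ℂ := (2 * M2star2 z * zD z - 2 * M2minus z * xD z) / 8

/-- normalized derivative relation -/
def HD (f f' : ℂ → ℂ) : Prop := ∀ z ∈ UHP, HasDerivAt f (2 * Real.pi * I * f' z) z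

lemma HD.add {f f' g g'} (h : HD f f') (h2 : HD g g') : HD (f + g) (f' + g') := fun z hz =>
  ((h z hz).add (h2 z hz)).congr_deriv (by simp; ring)
lemma HD.sub {f f' g g'} (h : HD f f') (h2 : HD g g') : HD (f - g) (f' - g') := fun z hz =>
  ((h z hz).sub (h2 z hz)).congr_deriv (by simp; ring)
lemma HD.mul {f f' g g'} (h : HD f f') (h2 : HD g g') : HD (f * g) (f' * g + f * g') := fun z hz =>
  ((h z hz).mul (h2 z hz)).congr_deriv (by simp; ring)
lemma HD.smul {f f'} (c : ℂ) (h : HD f f') : HD (c • f) (c • f') := fun z hz =>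
  ((h z hz).const_mul c).congr_deriv (by simp; ring)
lemma HD.zero : HD 0 0 := fun z _ => (hasDerivAt_const z (0:ℂ)).congr_deriv (by simp)
lemma HD.congr' {f f' g} (h : HD f f') (e : f' = g) : HD f g := e ▸ h

lemma HD.diff {f f'} (h : HD f f') : DifferentiableOn ℂ f UHP := fun z hz => (h z hz).differentiableAt.differentiableWithinAt
lemma HD.DD {f f'} (h : HD f f') {z : ℂ} (hz : z ∈ UHP) : DD f z = f' z := DD_of_has (h z hz)

lemma HDX : HD M2minus xD := fun _ hz => X_has hz
lemma HDY : HD YY yD := fun _ hz => Y_has hz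
lemma HDZ : HD M2star2 zD := fun _ hz => Z_has hz
lemma HDxD : HD xD xDD :=
  (((HDX.mul HDZ).sub HDY).smul (1/4)).congr' (by funext z; simp [xDD]; ring) |> fun h z hz => (h z hz).congr_of_eventuallyEq
    (.of_forall fun w => by simp [xD]; ring)
lemma HDzD : HD zD zDD :=
  (((HDZ.mul HDZ).sub (HDX.mul HDX)).smul (1/8)).congr' (by funext z; simp [zDD]; ring) |> fun h z hz => (h z hz).congr_of_eventuallyEq
    (.of_forall fun w => by simp [zD]; ring)

def dmon (m n : ℕ) : ℂ → ℂ := ((m / 4 + n / 2 : ℂ) • (M2star2 * mon m n) - (m / 4 : ℂ) • mon (m - 1) (n + 1))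
  - (n / 2 : ℂ) • mon (m + 3) (n - 1)

lemma HDmon (m n : ℕ) : HD (mon m n) (dmon m n) := by
  intro z hz
  refine (((X_has hz).pow m).mul ((Y_has hz).pow n)).congr_deriv ?_
  rcases m with _ | m <;> rcases n with _ | n <;> simp [dmon, mon] <;> ring

def ddmon (m n : ℕ) : ℂ → ℂ := ((m / 4 + n / 2 : ℂ) • (zD * mon m n + M2star2 * dmon m n) - (m / 4 : ℂ) • dmon (m - 1) (n + 1))
  - (n / 2 : ℂ) • dmon (m + 3) (n - 1)

lemma HDdmon (m n : ℕ) : HD (dmon m n) (ddmon m n) :=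
  (((HDZ.mul (HDmon m n)).smul _).sub ((HDmon _ _).smul _)).sub ((HDmon _ _).smul _)

/-- the operator -/
def opr (k : ℕ) (f f' f'' : ℂ → ℂ) (z : ℂ) : ℂ :=
  M2minus z ^ 2 * f'' z - 2 * M2minus z * xD z * f' z - M2minus z * xDD z * f z + 2 * xD z ^ 2 * f z
  - k * M2star2 z * (M2minus z ^ 2 * f' z - M2minus z * xD z * f z)
  - k / 2 * zD z * M2minus z ^ 2 * f z + k ^ 2 / 4 * M2star2 z ^ 2 * M2minus z ^ 2 * f z
  - k ^ 2 / 4 * M2minus z ^ 4 * f z + (M2minus z ^ 4 - YY z ^ 2) * f z / 8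

def OP (k : ℕ) (f : ℂ → ℂ) : Prop := ∃ f' f'' b a : ℂ → ℂ, HD f f' ∧ HD f' f'' ∧ b ∈ SB k ∧ a ∈ SA k ∧
  ∀ z, M2minus z ^ 4 * (b z + M2star2 z * a z) = opr k f f' f'' z

lemma OP.add {k f g} (h : OP k f) (hg : OP k g) : OP k (f + g) := by
  obtain ⟨f', f'', b, a, h1, h2, h3, h4, h5⟩ := h
  obtain ⟨g', g'', b', a', k1, k2, k3, k4, k5⟩ := hg
  refine ⟨f' + g', f'' + g'', b + b', a + a', h1.add k1, h2.add k2, add_mem h3 k3, add_mem h4 k4, fun z => ?_⟩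
  have e1 := h5 z
  have e2 := k5 z
  simp only [opr, Pi.add_apply] at *
  linear_combination e1 + e2

lemma OP.smul {k f} (c : ℂ) (h : OP k f) : OP k (c • f) := by
  obtain ⟨f', f'', b, a, h1, h2, h3, h4, h5⟩ := h
  refine ⟨c • f', c • f'', c • b, c • a, h1.smul c, h2.smul c, Submodule.smul_mem _ _ h3, Submodule.smul_mem _ _ h4, fun z => ?_⟩
  have e1 := h5 z
  simp only [opr, Pi.smul_apply, smul_eq_mul] at *
  linear_combination c * e1

lemma OP.zero {k} : OP k 0 :=
  ⟨0, 0, 0, 0, HD.zero, HD.zero, zero_mem _, zero_mem _, fun z => by simp [opr]⟩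

lemma OP.monB {i n k : ℕ} (hk : 2 * i + n + 1 = k) : OP k (mon (4 * i + 3) n) := by
  have sB : ∀ (c : ℂ) {i' n' : ℕ}, 2 * i' + n' + 1 = k → c • mon (4 * i' + 3) n' ∈ SB k :=
    fun c i' n' h => Submodule.smul_mem _ _ (Ext2.monB h)
  have sA : ∀ (c : ℂ) {i' n' : ℕ}, 2 * i' + n' = k → c • mon (4 * i') n' ∈ SA k :=
    fun c i' n' h => Submodule.smul_mem _ _ (monA h)
  set m : ℂ := 4 * i + 3 with hm
  set c1 : ℂ := ((m - 1) * (m - 2) - 2) / 16 with hc1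
  set c2 : ℂ := ((m - 1) * (n + 1) + n * (m + 2) + 1) / 8 - (k:ℂ) ^ 2 / 4 with hc2
  set c3 : ℂ := (n * (n - 1) : ℂ) / 4 with hc3
  have hkc : (k : ℂ) = 2 * i + n + 1 := by rw [← hk]; push_cast; ring
  rcases i with _ | i <;> rcases n with _ | _ | n
  refine ⟨_, _, c2 • mon (4 * 0 + 3) 0, (-((m - 1) / 16)) • mon (4 * 0) 1,
    HDmon _ _, HDdmon _ _, sB _ (by omega), sA _ (by omega), ?_⟩
  rotate_left
  refine ⟨_, _, c2 • mon (4 * 0 + 3) 1, (-((m - 1) / 16)) • mon (4 * 0) 2 + (-(((1 : ℕ) : ℂ) / 8)) • mon (4 * 1) 0,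
    HDmon _ _, HDdmon _ _, sB _ (by omega), add_mem (sA _ (by omega)) (sA _ (by omega)), ?_⟩
  rotate_left
  refine ⟨_, _, c2 • mon (4 * 0 + 3) (n + 2) + c3 • mon (4 * 1 + 3) n, (-((m - 1) / 16)) • mon (4 * 0) (n + 3) + (-((((n + 2) : ℕ) : ℂ) / 8)) • mon (4 * 1) (n + 1),
    HDmon _ _, HDdmon _ _, add_mem (sB _ (by omega)) (sB _ (by omega)), add_mem (sA _ (by omega)) (sA _ (by omega)), ?_⟩
  rotate_left
  refine ⟨_, _, c2 • mon (4 * (i + 1) + 3) 0 + c1 • mon (4 * i + 3) 2, (-((m - 1) / 16)) • mon (4 * (i + 1)) 1,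
    HDmon _ _, HDdmon _ _, add_mem (sB _ (by omega)) (sB _ (by omega)), sA _ (by omega), ?_⟩
  rotate_left
  refine ⟨_, _, c2 • mon (4 * (i + 1) + 3) 1 + c1 • mon (4 * i + 3) 3, (-((m - 1) / 16)) • mon (4 * (i + 1)) 2 + (-(((1 : ℕ) : ℂ) / 8)) • mon (4 * (i + 2)) 0,
    HDmon _ _, HDdmon _ _, add_mem (sB _ (by omega)) (sB _ (by omega)), add_mem (sA _ (by omega)) (sA _ (by omega)), ?_⟩
  rotate_left
  refine ⟨_, _, c2 • mon (4 * (i + 1) + 3) (n + 2) + c1 • mon (4 * i + 3) (n + 4) + c3 • mon (4 * (i + 2) + 3) n, (-((m - 1) / 16)) • mon (4 * (i + 1)) (n + 3) + (-((((n + 2) : ℕ) : ℂ) / 8)) • mon (4 * (i + 2)) (n + 1),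
    HDmon _ _, HDdmon _ _, add_mem (add_mem (sB _ (by omega)) (sB _ (by omega))) (sB _ (by omega)), add_mem (sA _ (by omega)) (sA _ (by omega)), ?_⟩
  rotate_left
  all_goals
    intro z
    simp only [opr, ddmon, dmon, mon, Pi.add_apply, Pi.sub_apply, Pi.mul_apply, Pi.smul_apply, smul_eq_mul, xDD, zDD, xD, yD, zD,
      hkc, hc1, hc2, hc3, hm]
    push_cast
    simp
    ring

lemma OP.monA {i n k : ℕ} (hk : 2 * i + n = k) : OP k (M2star2 * mon (4 * i) n) := by
  have sB : ∀ (c : ℂ) {i' n' : ℕ}, 2 * i' + n' + 1 = k → c • mon (4 * i' + 3) n' ∈ SB k :=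
    fun c i' n' h => Submodule.smul_mem _ _ (Ext2.monB h)
  have sA : ∀ (c : ℂ) {i' n' : ℕ}, 2 * i' + n' = k → c • mon (4 * i') n' ∈ SA k :=
    fun c i' n' h => Submodule.smul_mem _ _ (Ext2.monA h)
  set m : ℂ := 4 * i with hm
  set c1 : ℂ := ((m - 1) * (m - 2) - 2) / 16 with hc1
  set c2 : ℂ := ((m - 1) * (n + 1) + n * (m + 2) + 1) / 8 - (k:ℂ) ^ 2 / 4 with hc2
  set c3 : ℂ := (n * (n - 1) : ℂ) / 4 with hc3
  have hkc : (k : ℂ) = 2 * i + n := by rw [← hk]; push_cast; ring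
  rcases i with _ | i <;> rcases n with _ | _ | n
  refine ⟨_, _, 0, c2 • mon (4 * 0) 0,
    HDZ.mul (HDmon _ _), (HDzD.mul (HDmon _ _)).add (HDZ.mul (HDdmon _ _)), zero_mem _, sA _ (by omega), ?_⟩
  rotate_left
  refine ⟨_, _, (((1 : ℕ) : ℂ) / 8) • mon (4 * 0 + 3) 0, c2 • mon (4 * 0) 1,
    HDZ.mul (HDmon _ _), (HDzD.mul (HDmon _ _)).add (HDZ.mul (HDdmon _ _)), sB _ (by omega), sA _ (by omega), ?_⟩
  rotate_left
  refine ⟨_, _, ((((n + 2) : ℕ) : ℂ) / 8) • mon (4 * 0 + 3) (n + 1), c2 • mon (4 * 0) (n + 2) + c3 • mon (4 * 1) n,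
    HDZ.mul (HDmon _ _), (HDzD.mul (HDmon _ _)).add (HDZ.mul (HDdmon _ _)), sB _ (by omega), add_mem (sA _ (by omega)) (sA _ (by omega)), ?_⟩
  rotate_left
  refine ⟨_, _, (m / 16) • mon (4 * i + 3) 1, c2 • mon (4 * (i + 1)) 0 + c1 • mon (4 * i) 2,
    HDZ.mul (HDmon _ _), (HDzD.mul (HDmon _ _)).add (HDZ.mul (HDdmon _ _)), sB _ (by omega), add_mem (sA _ (by omega)) (sA _ (by omega)), ?_⟩
  rotate_left
  refine ⟨_, _, (m / 16) • mon (4 * i + 3) 2 + (((1 : ℕ) : ℂ) / 8) • mon (4 * (i + 1) + 3) 0, c2 • mon (4 * (i + 1)) 1 + c1 • mon (4 * i) 3,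
    HDZ.mul (HDmon _ _), (HDzD.mul (HDmon _ _)).add (HDZ.mul (HDdmon _ _)), add_mem (sB _ (by omega)) (sB _ (by omega)), add_mem (sA _ (by omega)) (sA _ (by omega)), ?_⟩
  rotate_left
  refine ⟨_, _, (m / 16) • mon (4 * i + 3) (n + 3) + ((((n + 2) : ℕ) : ℂ) / 8) • mon (4 * (i + 1) + 3) (n + 1), c2 • mon (4 * (i + 1)) (n + 2) + c1 • mon (4 * i) (n + 4) + c3 • mon (4 * (i + 2)) n,
    HDZ.mul (HDmon _ _), (HDzD.mul (HDmon _ _)).add (HDZ.mul (HDdmon _ _)), add_mem (sB _ (by omega)) (sB _ (by omega)), add_mem (add_mem (sA _ (by omega)) (sA _ (by omega))) (sA _ (by omega)), ?_⟩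
  rotate_left
  all_goals
    intro z
    simp only [opr, ddmon, dmon, mon, Pi.add_apply, Pi.sub_apply, Pi.mul_apply, Pi.smul_apply, smul_eq_mul, xDD, zDD, xD, yD, zD,
      hkc, hc1, hc2, hc3, hm]
    try simp only [Nat.mul_add, Nat.mul_one]
    push_cast
    simp
    ring

lemma OP.of {k : ℕ} {b a : ℂ → ℂ} (hb : b ∈ SB k) (ha : a ∈ SA k) : OP k (b + M2star2 * a) := by
  refine OP.add ?_ ?_
  · induction hb using Submodule.span_induction with
    | mem x hx => obtain ⟨i, n, h, rfl⟩ := hx; exact OP.monB h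
    | zero => exact OP.zero
    | add x y _ _ hx hy => exact hx.add hy
    | smul c x _ hx => exact hx.smul c
  · induction ha using Submodule.span_induction with
    | mem x hx => obtain ⟨i, n, h, rfl⟩ := hx; exact OP.monA h
    | zero => rw [mul_zero]; exact OP.zero
    | add x y _ _ hx hy => rw [mul_add]; exact hx.add hy
    | smul c x _ hx => rw [mul_smul_comm]; exact hx.smul c



def SG (w s : ℕ) : Submodule ℂ (ℂ → ℂ) :=
  Submodule.span ℂ {g | ∃ m n, m + 2 * n = w ∧ n % 2 = s % 2 ∧ g = mon m n}

lemma monG {m n w s : ℕ} (h : m + 2 * n = w) (h2 : n % 2 = s % 2) : mon m n ∈ SG w s :=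
  Submodule.subset_span ⟨m, n, h, h2, rfl⟩

lemma SA_le {k : ℕ} : SA k ≤ SG (2 * k) k := by
  refine Submodule.span_le.2 ?_
  rintro _ ⟨i, n, h, rfl⟩
  exact monG (by omega) (by omega)

lemma SB_le {k : ℕ} : SB k ≤ SG (2 * k + 1) (k + 1) := by
  refine Submodule.span_le.2 ?_
  rintro _ ⟨i, n, h, rfl⟩
  exact monG (by omega) (by omega)

lemma SG_mul {w s w' s' : ℕ} {g h : ℂ → ℂ} (hg : g ∈ SG w s) (hh : h ∈ SG w' s') : g * h ∈ SG (w + w') (s + s') := by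
  induction hg using Submodule.span_induction with
  | zero => simp
  | add x y _ _ hx hy => rw [add_mul]; exact add_mem hx hy
  | smul c x _ hx => rw [smul_mul_assoc]; exact Submodule.smul_mem _ _ hx
  | mem x hx =>
    obtain ⟨m, n, h1, h2, rfl⟩ := hx
    induction hh using Submodule.span_induction with
    | zero => simp
    | add x y _ _ hx hy => rw [mul_add]; exact add_mem hx hy
    | smul c x _ hx => rw [mul_smul_comm]; exact Submodule.smul_mem _ _ hx
    | mem x hx =>
      obtain ⟨m', n', h1', h2', rfl⟩ := hx
      have : mon m n * mon m' n' = mon (m + m') (n + n') := by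
        funext z; simp [mon]; ring
      rw [this]; exact monG (by omega) (by omega)

lemma SG_theta {w s : ℕ} {g : ℂ → ℂ} (hg : g ∈ SG w s) :
    ∃ t ∈ SG (w + 1) (s + 1), HD g (t + (w / 4 : ℂ) • (M2star2 * g)) := by
  induction hg using Submodule.span_induction with
  | zero => exact ⟨0, zero_mem _, by simpa using HD.zero⟩
  | add x y _ _ hx hy =>
    obtain ⟨t, h1, h2⟩ := hx
    obtain ⟨t', h1', h2'⟩ := hy
    refine ⟨t + t', add_mem h1 h1', (h2.add h2').congr' ?_⟩
    rw [mul_add, smul_add]; abel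
  | smul c x _ hx =>
    obtain ⟨t, h1, h2⟩ := hx
    refine ⟨c • t, Submodule.smul_mem _ _ h1, (h2.smul c).congr' ?_⟩
    rw [smul_add, mul_smul_comm, smul_comm]
  | mem x hx =>
    obtain ⟨m, n, h1, h2, rfl⟩ := hx
    refine ⟨-((m / 4 : ℂ) • mon (m - 1) (n + 1)) - (n / 2 : ℂ) • mon (m + 3) (n - 1), ?_, (HDmon m n).congr' ?_⟩
    · refine sub_mem (neg_mem ?_) ?_
      · rcases m with _ | m
        · simp
        · exact Submodule.smul_mem _ _ (monG (by omega) (by omega))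
      · rcases n with _ | n
        · simp
        · exact Submodule.smul_mem _ _ (monG (by omega) (by omega))
    · rw [dmon, ← h1]
      push_cast
      rw [show ((m + 2 * n : ℂ) / 4) = m / 4 + n / 2 by ring]
      abel

lemma SG_lim {w s : ℕ} {g : ℂ → ℂ} (hg : g ∈ SG w s) : ∃ α, Tendsto g LI (𝓝 α) := by
  induction hg using Submodule.span_induction with
  | zero => exact ⟨0, tendsto_const_nhds⟩
  | add x y _ _ hx hy =>
    obtain ⟨t, h1⟩ := hx
    obtain ⟨t', h1'⟩ := hy
    exact ⟨_, h1.add h1'⟩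
  | smul c x _ hx =>
    obtain ⟨t, h1⟩ := hx
    exact ⟨_, h1.const_mul c⟩
  | mem x hx =>
    obtain ⟨m, n, h1, h2, rfl⟩ := hx
    exact ⟨_, mon_tend m n⟩

lemma SG_per {w s : ℕ} {g : ℂ → ℂ} (hg : g ∈ SG w s) {z : ℂ} (hz : z ∈ UHP) : g (z + 1) = g z := by
  induction hg using Submodule.span_induction with
  | zero => rfl
  | add x y _ _ hx hy => simp [hx, hy]
  | smul c x _ hx => simp [hx]
  | mem x hx =>
    obtain ⟨m, n, h1, h2, rfl⟩ := hx
    exact (mon_MF m n).per hz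

lemma Z_per (z : ℂ) : M2star2 (z + 1) = M2star2 z := by
  rw [M2star2, M2star2, E2_per, E2_per2]

lemma dec1 (w : ℕ) : ∀ j m : ℕ, m + 4 * j = w + 4 → ∃ g' ∈ SG w 0, mon m (2 * j) = mon (w + 4) 0 + E8 * g'
  | 0, m, h => ⟨0, zero_mem _, by simp [show m = w + 4 by omega]⟩
  | j + 1, m, h => by
    obtain ⟨g', h1, h2⟩ := dec1 w j (m + 4) (by omega)
    refine ⟨g' - (256 : ℂ) • mon m (2 * j), sub_mem h1 (Submodule.smul_mem _ _ (monG (by omega) (by omega))), ?_⟩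
    have h3 := E8_mon m (2 * j)
    rw [mul_sub, mul_smul_comm, h3, ← add_sub_assoc, ← h2, smul_smul, show 2 * (j + 1) = 2 * j + 2 by ring]
    norm_num

lemma dec {w : ℕ} {g : ℂ → ℂ} (hg : g ∈ SG (w + 4) 0) :
    ∃ c : ℂ, ∃ g' ∈ SG w 0, g = c • mon (w + 4) 0 + E8 * g' := by
  induction hg using Submodule.span_induction with
  | zero => exact ⟨0, 0, zero_mem _, by simp⟩
  | add x y _ _ hx hy =>
    obtain ⟨c, g, h1, rfl⟩ := hx
    obtain ⟨c', g', h1', rfl⟩ := hy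
    exact ⟨c + c', g + g', add_mem h1 h1', by rw [add_smul, mul_add]; abel⟩
  | smul d x _ hx =>
    obtain ⟨c, g, h1, rfl⟩ := hx
    exact ⟨d * c, d • g, Submodule.smul_mem _ _ h1, by rw [smul_add, smul_smul, mul_smul_comm]⟩
  | mem x hx =>
    obtain ⟨m, n, h1, h2, rfl⟩ := hx
    obtain ⟨j, rfl⟩ : ∃ j, n = 2 * j := ⟨n / 2, by omega⟩
    obtain ⟨g', h3, h4⟩ := dec1 w j m (by omega)
    exact ⟨1, g', h3, by rw [h4, one_smul]⟩

lemma dec0 {w : ℕ} (hw : w < 4) {g : ℂ → ℂ} (hg : g ∈ SG w 0) : ∃ c : ℂ, g = c • mon w 0 := by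
  induction hg using Submodule.span_induction with
  | zero => exact ⟨0, by simp⟩
  | add x y _ _ hx hy =>
    obtain ⟨c, rfl⟩ := hx
    obtain ⟨c', rfl⟩ := hy
    exact ⟨c + c', by rw [add_smul]⟩
  | smul d x _ hx =>
    obtain ⟨c, rfl⟩ := hx
    exact ⟨d * c, by rw [smul_smul]⟩
  | mem x hx =>
    obtain ⟨m, n, h1, h2, rfl⟩ := hx
    obtain rfl : n = 0 := by omega
    exact ⟨1, by rw [one_smul, ← h1]; rfl⟩

lemma tend_of_q {g : ℂ → ℂ} {k : ℕ} (h : Tendsto (fun z => g z / qexp z ^ k) LI (𝓝 0)) : Tendsto g LI (𝓝 0) := by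
  have := h.mul (qexp_tend.pow k)
  rw [zero_mul] at this
  refine this.congr fun z => ?_
  exact div_mul_cancel₀ _ (pow_ne_zero _ (qexp_ne z))

lemma E8_tend0 : Tendsto E8 LI (𝓝 0) := by
  refine tend_of_q (k := 0) ?_
  have := E8_tend.mul qexp_tend
  rw [mul_zero] at this
  refine this.congr fun z => ?_
  rw [div_mul_cancel₀ _ (qexp_ne z), pow_zero, div_one]

lemma SG_zero : ∀ (k w : ℕ) (g : ℂ → ℂ), w < 4 * (k + 1) → g ∈ SG w 0 →
    Tendsto (fun z => g z / qexp z ^ k) LI (𝓝 0) → ∀ z ∈ UHP, g z = 0 := by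
  intro k
  induction k with
  | zero =>
    intro w g hw hg ht z hz
    obtain ⟨c, rfl⟩ := dec0 (by omega) hg
    have h1 := (mon_tend w 0).const_mul c
    have h2 := tendsto_nhds_unique h1 (tend_of_q ht)
    rw [mul_one] at h2
    simp [h2]
  | succ k ih =>
    intro w g hw hg ht z hz
    by_cases hw4 : w < 4
    · obtain ⟨c, rfl⟩ := dec0 hw4 hg
      have h1 := (mon_tend w 0).const_mul c
      have h2 := tendsto_nhds_unique h1 (tend_of_q ht)
      rw [mul_one] at h2
      simp [h2]
    · obtain ⟨w, rfl⟩ : ∃ v, w = v + 4 := ⟨w - 4, by omega⟩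
      obtain ⟨c, g', h1, rfl⟩ := dec hg
      obtain ⟨β, hβ⟩ := SG_lim h1
      have h3 := ((mon_tend (w + 4) 0).const_mul c).add (E8_tend0.mul hβ)
      have h2 := tendsto_nhds_unique h3 (tend_of_q ht)
      rw [mul_one, zero_mul, add_zero] at h2
      subst h2
      have : Tendsto (fun z => g' z / qexp z ^ k) LI (𝓝 0) := by
        have := ht.mul (E8_tend.inv₀ one_ne_zero)
        rw [zero_mul] at this
        refine this.congr' ?_
        filter_upwards [ev_UHP] with z hz
        have := E8_ne hz
        have := qexp_ne z
        simp
        field_simp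
        ring
      simp [ih w g' (by omega) h1 this z hz]

lemma ord1 {f f' : ℂ → ℂ} (h : HD f f') {k : ℕ} {α : ℂ} (ht : Tendsto (fun z => f z / qexp z ^ k) LI (𝓝 α)) :
    Tendsto (fun z => f' z / qexp z ^ k) LI (𝓝 (k * α)) := by
  have hr : HD (fun z => f z / qexp z ^ k) (fun z => f' z / qexp z ^ k - k * (f z / qexp z ^ k)) := by
    intro z hz
    refine ((h z hz).div ((qexp_has z).pow k) (pow_ne_zero _ (qexp_ne z))).congr_deriv ?_
    have := qexp_ne z
    rcases k with _ | k
    · simp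
    · simp only [Nat.add_sub_cancel, Pi.pow_apply]
      field_simp
      try ring
  have h2 := (DD_tend hr.diff ht).add (ht.const_mul (k:ℂ))
  rw [zero_add] at h2
  refine h2.congr' ?_
  filter_upwards [ev_UHP] with z hz
  rw [hr.DD hz]; ring



lemma wronsk {f f' F F' : ℂ → ℂ} (hf : HD f f') (hF : HD F F')
    (hw : ∀ z ∈ UHP, f z * F' z = f' z * F z) {z₀ : ℂ} (hz₀ : z₀ ∈ UHP) (h0 : f z₀ ≠ 0) :
    ∃ c : ℂ, ∀ z ∈ UHP, F z = c * f z := by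
  have hev : ∀ᶠ z in 𝓝 z₀, f z ≠ 0 ∧ z ∈ UHP :=
    ((hf z₀ hz₀).continuousAt.eventually_ne h0).and (UHP_open.mem_nhds hz₀)
  obtain ⟨r, hr, hb⟩ := Metric.eventually_nhds_iff_ball.1 hev
  refine ⟨F z₀ / f z₀, ?_⟩
  have hd : ∀ z ∈ Metric.ball z₀ r, HasDerivAt (fun z => F z / f z) 0 z := by
    intro z hz
    obtain ⟨h1, h2⟩ := hb z hz
    refine ((hF z h2).div (hf z h2) h1).congr_deriv ?_
    rw [div_eq_zero_iff]; left
    linear_combination (2 * Real.pi * I) * hw z h2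
  have hc : ∀ z ∈ Metric.ball z₀ r, F z / f z = F z₀ / f z₀ := by
    intro z hz
    refine Metric.isOpen_ball.is_const_of_deriv_eq_zero (𝕜 := ℂ) (f := fun z => F z / f z) (convex_ball z₀ r).isPreconnected
      (fun w hw => (hd w hw).differentiableAt.differentiableWithinAt) (fun w hw => (hd w hw).deriv) hz (Metric.mem_ball_self hr)
  have ha : AnalyticOnNhd ℂ F UHP := hF.diff.analyticOnNhd UHP_open
  have hb' : AnalyticOnNhd ℂ (fun z => F z₀ / f z₀ * f z) UHP := (hf.diff.const_mul _).analyticOnNhd UHP_open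
  refine ha.eqOn_of_preconnected_of_eventuallyEq hb' UHP_convex.isPreconnected hz₀ ?_
  filter_upwards [Metric.ball_mem_nhds z₀ hr] with z hz
  rw [← hc z hz, div_mul_cancel₀ _ (hb z hz).1]

lemma HDid : HD (fun z => 2 * Real.pi * I * z) 1 := by
  intro z _
  simpa using (hasDerivAt_id z).const_mul (2 * Real.pi * I)

lemma lemB {k : ℕ} {b a : ℂ → ℂ} (hb : b ∈ SB k) (ha : a ∈ SA k)
    (ht : Tendsto (fun z => (b z + M2star2 z * a z) / qexp z ^ k) LI (𝓝 0)) :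
    ∀ z ∈ UHP, b z + M2star2 z * a z = 0 := by
  have hbG := SB_le hb
  have haG := SA_le ha
  obtain ⟨tb, htb, hdb⟩ := SG_theta hbG
  obtain ⟨ta, hta, hda⟩ := SG_theta haG
  set f : ℂ → ℂ := b + M2star2 * a with hf
  have ht' : Tendsto (fun z => f z / qexp z ^ k) LI (𝓝 0) := ht
  obtain ⟨f', hf'⟩ : ∃ f', HD f f' := ⟨_, hdb.add (HDZ.mul hda)⟩
  obtain ⟨a', ha'⟩ : ∃ a', a' = ta + (((2 * k : ℕ) : ℂ) / 4) • (M2star2 * a) := ⟨_, rfl⟩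
  rw [← ha'] at hda
  have hfe : ∀ z ∈ UHP, f' z = (tb z + ((2 * k + 1 : ℕ) : ℂ) / 4 * (M2star2 z * b z)) + (zD z * a z + M2star2 z * a' z) := by
    intro z hz
    have := (hf'.DD hz).symm.trans ((hdb.add (HDZ.mul hda)).DD hz)
    simpa using this
  obtain ⟨αa, hαa⟩ := SG_lim haG
  obtain ⟨αb, hαb⟩ := SG_lim hbG
  have hαf : Tendsto f LI (𝓝 (αb + 1 * αa)) := hαb.add (Z_tend1.mul hαa)
  have hda0 : Tendsto a' LI (𝓝 0) := by
    refine (DD_tend hda.diff hαa).congr' ?_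
    filter_upwards [ev_UHP] with z hz
    exact hda.DD hz
  have hft := ord1 hf' ht'
  rw [mul_zero] at hft
  set W : ℂ → ℂ := b * ta - a * tb + (1/8 : ℂ) • (mon 2 0 * (a * a) + b * b) with hW
  have hWf : ∀ z ∈ UHP, W z = f z ^ 2 / 8 + f z * a' z - a z * f' z := by
    intro z hz
    rw [hfe z hz, ha', hW, hf]
    simp [mon, zD]
    ring
  have hWG : W ∈ SG (4 * k + 2) 0 := by
    have cst : ∀ {w s : ℕ} {g : ℂ → ℂ}, g ∈ SG w s → w = 4 * k + 2 → s % 2 = 0 → g ∈ SG (4 * k + 2) 0 := by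
      intro w s g hg h1 h2
      subst h1
      have : SG (4 * k + 2) s = SG (4 * k + 2) 0 := by simp only [SG, h2, Nat.zero_mod]
      rwa [← this]
    refine add_mem (sub_mem (cst (SG_mul hbG hta) (by ring) (by omega)) (cst (SG_mul haG htb) (by ring) (by omega)))
      (Submodule.smul_mem _ _ (add_mem (cst (SG_mul (monG (s := 0) rfl rfl) (SG_mul haG haG)) (by ring) (by omega))
        (cst (SG_mul hbG hbG) (by ring) (by omega))))
  have hWt : Tendsto (fun z => W z / qexp z ^ k) LI (𝓝 0) := by
    have := ((ht'.mul (hαf.div_const 8)).add (ht'.mul hda0)).sub (hαa.mul hft)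
    simp only [zero_mul, mul_zero, add_zero, sub_zero] at this
    refine this.congr' ?_
    filter_upwards [ev_UHP] with z hz
    rw [hWf z hz]; ring
  have hW0 := SG_zero k _ W (by omega) hWG hWt
  by_contra hcon
  push Not at hcon
  obtain ⟨z₀, hz₀, hne⟩ := hcon
  have hF := hda.add (((HDid.mul hf')).smul (1/8))
  obtain ⟨c, hc⟩ := wronsk hf' hF (by
    intro z hz
    have h1 := hW0 z hz
    rw [hWf z hz] at h1
    simp
    linear_combination h1) hz₀ hne
  have hz1 : z₀ + 1 ∈ UHP := by simpa [UHP] using hz₀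
  have e1 := hc z₀ hz₀
  have e2 := hc (z₀ + 1) hz1
  have ef : f (z₀ + 1) = f z₀ := by
    simp [hf, SG_per hbG hz₀, SG_per haG hz₀, Z_per]
  simp [ef, SG_per haG hz₀] at e1 e2
  have : (2 * Real.pi * I) * f z₀ = 0 := by linear_combination 8 * (e2 - e1)
  exact hne ((mul_eq_zero.1 this).resolve_left tpi_ne)

lemma opr_zero {k : ℕ} {b a : ℂ → ℂ} (hb : b ∈ SB k) (ha : a ∈ SA k) {α : ℂ}
    (ht : Tendsto (fun z => (b z + M2star2 z * a z) / qexp z ^ k) LI (𝓝 α)) :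
    ∃ f' f'' : ℂ → ℂ, HD (b + M2star2 * a) f' ∧ HD f' f'' ∧ ∀ z ∈ UHP, opr k (b + M2star2 * a) f' f'' z = 0 := by
  obtain ⟨f', f'', b', a', h1, h2, h3, h4, h5⟩ := OP.of hb ha
  refine ⟨f', f'', h1, h2, ?_⟩
  set f : ℂ → ℂ := b + M2star2 * a with hf
  have ht' : Tendsto (fun z => f z / qexp z ^ k) LI (𝓝 α) := ht
  have t1 := ord1 h1 ht'
  have t2 := ord1 h2 t1
  have tx : Tendsto xD LI (𝓝 0) := by
    have := ((X_tend1.mul Z_tend1).sub Y_tend1).div_const 4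
    norm_num at this; exact this
  have ty : Tendsto yD LI (𝓝 0) := by
    have := ((Y_tend1.mul Z_tend1).sub (X_tend1.pow 3)).div_const 2
    norm_num at this; exact this
  have tz : Tendsto zD LI (𝓝 0) := by
    have := ((Z_tend1.pow 2).sub (X_tend1.pow 2)).div_const 8
    norm_num at this; exact this
  have txx : Tendsto xDD LI (𝓝 0) := by
    have := (((tx.mul Z_tend1).add (X_tend1.mul tz)).sub ty).div_const 4
    norm_num at this; exact this
  have tm : Tendsto (fun z => M2minus z ^ 4 - YY z ^ 2) LI (𝓝 0) := by
    have := (X_tend1.pow 4).sub (Y_tend1.pow 2)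
    norm_num at this; exact this
  have c1 : ∀ c : ℂ, Tendsto (fun _ : ℂ => c) LI (𝓝 c) := fun c => tendsto_const_nhds
  have tto : Tendsto (fun z => opr k f f' f'' z / qexp z ^ k) LI (𝓝 0) := by
    have := (((((((((X_tend1.pow 2).mul t2).sub (((X_tend1.const_mul 2).mul tx).mul t1)).sub ((X_tend1.mul txx).mul ht')).add
      (((tx.pow 2).const_mul 2).mul ht')).sub ((Z_tend1.const_mul (k:ℂ)).mul (((X_tend1.pow 2).mul t1).sub ((X_tend1.mul tx).mul ht')))).sub
      (((tz.const_mul ((k:ℂ)/2)).mul (X_tend1.pow 2)).mul ht')).add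
      ((((Z_tend1.pow 2).const_mul ((k:ℂ)^2/4)).mul (X_tend1.pow 2)).mul ht')).sub
      (((X_tend1.pow 4).const_mul ((k:ℂ)^2/4)).mul ht')).add ((tm.mul ht').div_const 8)
    have e : ∀ x y : ℂ, x = y → Tendsto (fun z => opr k f f' f'' z / qexp z ^ k) LI (𝓝 x) →
      Tendsto (fun z => opr k f f' f'' z / qexp z ^ k) LI (𝓝 y) := fun x y h => h ▸ id
    refine e _ _ ?_ (this.congr fun z => ?_)
    · ring
    · rw [opr]; ring
  have tt : Tendsto (fun z => (b' z + M2star2 z * a' z) / qexp z ^ k) LI (𝓝 0) := by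
    have := tto.div (X_tend1.pow 4) (by norm_num)
    rw [zero_div] at this
    refine this.congr' ?_
    filter_upwards [X_tend1.eventually_ne one_ne_zero] with z hz
    simp only [Pi.div_apply]
    rw [← h5 z]
    field_simp
  intro z hz
  rw [← h5 z, lemB h3 h4 tt z hz, mul_zero]



lemma ode {k : ℕ} {g g' g'' : ℂ → ℂ} (h1 : HD g g') (h2 : HD g' g'')
    (h0 : ∀ z ∈ UHP, opr k g g' g'' z = 0) {y : ℂ → ℂ}
    (hy : ∀ z ∈ UHP, y z = g z / (HH z ^ (4 * k) * M2minus z)) {z : ℂ} (hz : z ∈ UHP) (hX : M2minus z ≠ 0) :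
    deriv (deriv y) z = -(4 * (Real.pi : ℂ) ^ 2) *
      (((k : ℂ) / 2) ^ 2 * M2minus z ^ 2 - 32 * E8 z / M2minus z ^ 2) * y z := by
  have hev : ∀ᶠ w in 𝓝 z, M2minus w ≠ 0 ∧ w ∈ UHP :=
    ((X_has hz).continuousAt.eventually_ne hX).and (UHP_open.mem_nhds hz)
  set N : ℂ → ℂ := g' * M2minus - ((k : ℂ) / 2) • (g * M2star2 * M2minus) - g * xD with hN
  have hNd := ((h2.mul HDX).sub (((h1.mul HDZ).mul HDX).smul ((k : ℂ) / 2))).sub (h1.mul HDxD)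
  have d1 : ∀ w, M2minus w ≠ 0 → w ∈ UHP →
      HasDerivAt y (2 * Real.pi * I * (N w / (HH w ^ (4 * k) * M2minus w ^ 2))) w := by
    intro w hw hwU
    have hp : HH w ^ (4 * k) ≠ 0 := pow_ne_zero _ (HH_ne hwU)
    have := (h1 w hwU).div ((HHpow_has hwU (4 * k)).mul (HDX w hwU)) (mul_ne_zero hp hw)
    refine (this.congr_of_eventuallyEq ?_).congr_deriv ?_
    · filter_upwards [UHP_open.mem_nhds hwU] with u hu
      rw [hy u hu]; rfl
    · simp only [hN, Pi.mul_apply, Pi.sub_apply, Pi.smul_apply, smul_eq_mul]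
      push_cast
      field_simp
      ring
  have e1 : deriv y =ᶠ[𝓝 z] fun w => 2 * Real.pi * I * (N w / (HH w ^ (4 * k) * M2minus w ^ 2)) := by
    filter_upwards [hev] with w hw
    exact (d1 w hw.1 hw.2).deriv
  have hp : HH z ^ (4 * k) ≠ 0 := pow_ne_zero _ (HH_ne hz)
  have d2 := ((hNd z hz).div ((HHpow_has hz (4 * k)).mul ((HDX z hz).pow 2)) (mul_ne_zero hp (pow_ne_zero 2 hX))).const_mul (2 * Real.pi * I)
  rw [e1.deriv_eq]
  refine d2.deriv.trans ?_
  have h3 := h0 z hz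
  rw [hy z hz, E8]
  simp only [opr] at h3
  simp only [Pi.add_apply, Pi.mul_apply, Pi.sub_apply, Pi.smul_apply, smul_eq_mul, Pi.pow_apply]
  push_cast
  have hI : (I:ℂ) ^ 2 = -1 := I_sq
  generalize HH z ^ (4 * k) = p at *
  field_simp
  rw [hI]
  linear_combination (-32768 : ℂ) * h3

end Ext2

/-- Theorem: an extremal quasimodular form of weight `4k+2` and depth 1
on `Γ₀⁺(2)` with sign `(-1)^k`, divided by `M₈^{k/2}·M₂`, solves
`y″ = -4π²((k/2)² M₄ - 32 M₈/M₄) y`. -/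
theorem extremal_Gamma0plus2_weight4kplus2_MODE
    (k : ℕ)
    (f₀ f₁ : ℂ → ℂ)
    (hf₀ : f₀ ∈ MFplus2 ((-1 : ℂ) ^ k) (4 * k + 2))
    (hf₁ : f₁ ∈ MFplus2 ((-1 : ℂ) ^ k) (4 * k))
    (f : ℂ → ℂ) (hf : ∀ z, f z = f₀ z + M2star2 z * f₁ z)
    (hext : VOrder 1 f (k : ℝ)) :
    ∀ z ∈ UHP, M2minus z ≠ 0 →
      deriv (deriv fun w => f w / (Pfun2 k w * M2minus w)) z
        = -(4 * (Real.pi : ℂ) ^ 2) *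
            (((k : ℂ) / 2) ^ 2 * M4plus2 z - 32 * M8fun z / M4plus2 z) *
            (f z / (Pfun2 k z * M2minus z)) := by
  open Ext2 in
    intro z hz hX
    obtain ⟨b, hb, hb2⟩ := strB k f₀ (MF_of hf₀)
    obtain ⟨a, ha, ha2⟩ := strA k f₁ (MF_of hf₁)
    obtain ⟨c, _, hc⟩ := hext
    have ht0 := LI_iff.2 hc
    have ht : Tendsto (fun z => (b z + M2star2 z * a z) / qexp z ^ k) LI (𝓝 c) := by
      refine ht0.congr' ?_
      filter_upwards [ev_UHP] with w hw
      rw [hf, hb2 w hw, ha2 w hw, qexp, ← Complex.exp_nat_mul, eq_div_iff (Complex.exp_ne_zero _),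
        mul_right_comm, ← Complex.exp_add]
      have : -(2 * (Real.pi:ℂ) * I * ((k:ℝ):ℂ) * w / ((1:ℝ):ℂ)) + k * (2 * Real.pi * I * w) = 0 := by
        push_cast; ring
      rw [this, Complex.exp_zero, one_mul]
    obtain ⟨f', f'', h1, h2, h3⟩ := opr_zero hb ha ht
    rw [M4_eq hz, M8_eq hz, ← E8_eq hz]
    refine ode (y := fun w => f w / (Pfun2 k w * M2minus w)) h1 h2 h3 ?_ hz hX
    intro w hw
    simp only [hf, P_eq hw, hb2 w hw, ha2 w hw, Pi.add_apply, Pi.mul_apply]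
end
end

section
/- Let k be a nonnegative integer and let f = f₀ + M₂* f₁ with f₀ ∈ M_{3k}(Γ₀⁺(3),χ^k) and f₁ ∈ M_{3k-2}(Γ₀⁺(3),χ^k), where M₂*(z) = (3E₂(3z)+E₂(z))/4. Suppose f is extremal, i.e. v_∞(f) = k (which equals dim 𝑀̃_{3k}^{≤1}(Γ₀⁺(3),χ^k) − 1). Let P(z) = e^{πikz} ∏_{n≥1} (1−qⁿ)^{3k} (1−q^{3n})^{3k} (so that P = M₆^{k/2}, where M₆(z) = η(z)⁶η(3z)⁶; P is nonvanishing on ℍ). Then y := f/P satisfies y″(z) = −4π² (k/2)² M₄(z) y(z) for all z ∈ ℍ, where M₄(z) = (9E₄(3z) + E₄(z))/10. -/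
noncomputable section

open Complex Matrix Filter Topology

/-- `S₃ = (1/√3)(0 -1; 3 0)`. -/
def S3elt : SL2R :=
  ⟨!![0, -(Real.sqrt 3)⁻¹; Real.sqrt 3, 0], by
    have h : Real.sqrt 3 ≠ 0 := by positivity
    simp [Matrix.det_fin_two_of, h]⟩

/-- `R₃ = (1/√3)(3 -1; 3 0)`. -/
def R3elt : SL2R :=
  ⟨!![Real.sqrt 3, -(Real.sqrt 3)⁻¹; Real.sqrt 3, 0], by
    have h : Real.sqrt 3 ≠ 0 := by positivity
    simp [Matrix.det_fin_two_of, h]⟩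

/-- `Γ₀⁺(3) = ⟨Γ₀(3), S₃⟩`. -/
def GammaPlus3 : Subgroup SL2R :=
  Subgroup.closure ((Gamma0R 3 : Set SL2R) ∪ {S3elt})

/-- Modular forms of weight `k` with character `χ` on `Γ ≤ SL(2,ℝ)` whose only cusp
is `∞`: holomorphic on `ℍ`, transforming with `χ·(cz+d)^k`, holomorphic at `∞`. -/
def MFchar (Γ : Subgroup SL2R) (χ : SL2R → ℂ) (k : ℤ) (f : ℂ → ℂ) : Prop :=
  DifferentiableOn ℂ f UHP ∧
    (∀ γ ∈ Γ, ∀ z ∈ UHP, f (moeb γ z) = χ γ * jfac γ z ^ k * f z) ∧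
    ∃ C : ℝ, ∀ z ∈ UHP, 1 ≤ z.im → ‖f z‖ ≤ C

/-- `M₂*(z) = (3E₂(3z) + E₂(z))/4`. -/
def M2star3 (z : ℂ) : ℂ := (3 * E2 (3 * z) + E2 z) / 4

/-- `M₄(z) = (9E₄(3z) + E₄(z))/10`. -/
def M4plus3 (z : ℂ) : ℂ := (9 * E4 (3 * z) + E4 z) / 10

/-- `P(z) = e^{πikz} ∏_{n≥1} (1-qⁿ)^{3k}(1-q^{3n})^{3k}` (equal to `M₆(z)^{k/2}` where
`M₆ = η(z)⁶η(3z)⁶`; nonvanishing on `ℍ`). -/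
def Pfun3 (k : ℕ) (z : ℂ) : ℂ :=
  Complex.exp (Real.pi * Complex.I * k * z) *
    ∏' n : ℕ, ((1 - qexp z ^ (n + 1)) ^ (3 * k) * (1 - qexp z ^ (3 * (n + 1))) ^ (3 * k))


theorem isOpen_UHP : IsOpen UHP := isOpen_lt continuous_const Complex.continuous_im

theorem convex_UHP : Convex ℝ UHP := convex_halfSpace_im_gt 0

theorem S_im (z : ℂ) : (-1 / (3 * z)).im = z.im / (3 * Complex.normSq z) := by
  by_cases h0 : z = 0
  · simp [h0]
  have h1 : Complex.normSq z ≠ 0 := by simpa using h0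
  rw [Complex.div_im]
  simp
  field_simp

theorem S_mem {z : ℂ} (hz : z ∈ UHP) : -1 / (3 * z) ∈ UHP := by
  have hz' : 0 < z.im := hz
  have h0 : z ≠ 0 := by rintro rfl; simp at hz'
  show 0 < (-1 / (3 * z)).im
  have h1 : 0 < Complex.normSq z := Complex.normSq_pos.mpr h0
  rw [S_im]
  positivity

theorem add_one_mem {z : ℂ} (hz : z ∈ UHP) : z + 1 ∈ UHP := by
  have hz' : 0 < z.im := hz
  show 0 < (z + 1).im
  simpa using hz'

theorem UHP_ne {z : ℂ} (hz : z ∈ UHP) : z ≠ 0 := by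
  rintro rfl
  exact lt_irrefl _ (show (0:ℝ) < (0:ℂ).im from hz)

theorem three_mem {z : ℂ} (hz : z ∈ UHP) : 3 * z ∈ UHP := by
  have hz' : 0 < z.im := hz
  show 0 < (3 * z).im
  simpa using hz'

theorem move_aux (F : ℂ → ℝ) (hT : Function.Periodic F 1)
    (hS : ∀ z ∈ UHP, F (-1 / (3 * z)) = F z) (M : ℝ) (hM : ∀ z : ℂ, 1 / 4 ≤ z.im → F z ≤ M)
    (n : ℕ) : ∀ z : ℂ, (15 / 16 : ℝ) ^ n / 4 ≤ z.im → F z ≤ M := by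
  induction n with
  | zero => intro z hz; exact hM z (by simpa using hz)
  | succ n ih =>
    intro z hz
    by_cases h4 : 1 / 4 ≤ z.im
    · exact hM z h4
    push Not at h4
    have hpos : 0 < z.im := lt_of_lt_of_le (by positivity) hz
    set w : ℂ := z - (round z.re : ℤ) with hw
    have hFw : F w = F z := by
      have := hT.sub_zsmul_eq (x := z) (round z.re)
      simpa [hw] using this
    have hwim : w.im = z.im := by simp [hw]
    have hwre : |w.re| ≤ 1 / 2 := by
      have := abs_sub_round z.re
      simpa [hw] using this
    have hwU : w ∈ UHP := by show 0 < w.im; rw [hwim]; exact hpos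
    rw [← hFw, ← hS w hwU]
    apply ih
    rw [S_im, hwim]
    have hn : 0 < Complex.normSq w := Complex.normSq_pos.mpr (UHP_ne hwU)
    have hn2 : Complex.normSq w ≤ 5 / 16 := by
      rw [Complex.normSq_apply, hwim]
      have := abs_le.mp hwre
      nlinarith
    rw [le_div_iff₀ (by positivity)]
    rw [pow_succ] at hz
    have hp : 0 < (15 / 16 : ℝ) ^ n := by positivity
    nlinarith

theorem move (F : ℂ → ℝ) (hT : Function.Periodic F 1)
    (hS : ∀ z ∈ UHP, F (-1 / (3 * z)) = F z) (M : ℝ) (hM : ∀ z : ℂ, 1 / 4 ≤ z.im → F z ≤ M)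
    (z : ℂ) (hz : z ∈ UHP) : F z ≤ M := by
  have hz' : 0 < z.im := hz
  obtain ⟨n, hn⟩ := exists_pow_lt_of_lt_one (show 0 < 4 * z.im by positivity)
    (show (15 / 16 : ℝ) < 1 by norm_num)
  exact move_aux F hT hS M hM n z (by linarith)

abbrev Iinf : Filter ℂ := comap Complex.im atTop

theorem ev_UHP : ∀ᶠ z in Iinf, z ∈ UHP :=
  (eventually_gt_atTop (0 : ℝ)).comap Complex.im

open Classical in
def ext0 (g : ℂ → ℂ) : ℂ → ℂ := fun z => if z ∈ UHP then g z else 0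

theorem ext0_of (g : ℂ → ℂ) {z : ℂ} (hz : z ∈ UHP) : ext0 g z = g z := by
  simp [ext0, hz]

theorem ext0_ev (g : ℂ → ℂ) : ext0 g =ᶠ[Iinf] g := by
  filter_upwards [ev_UHP] with z hz using ext0_of g hz

theorem ext0_diff (g : ℂ → ℂ) (hg : DifferentiableOn ℂ g UHP) {z : ℂ} (hz : z ∈ UHP) :
    DifferentiableAt ℂ (ext0 g) z := by
  refine (hg.differentiableAt (isOpen_UHP.mem_nhds hz)).congr_of_eventuallyEq ?_
  filter_upwards [isOpen_UHP.mem_nhds hz] with w hw using ext0_of g hw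

theorem ext0_per (g : ℂ → ℂ) (hT : ∀ z ∈ UHP, g (z + 1) = g z) :
    Function.Periodic (ext0 g) ((1 : ℝ) : ℂ) := by
  intro z
  have : (z + ((1 : ℝ) : ℂ)) ∈ UHP ↔ z ∈ UHP := by
    show 0 < (z + ((1 : ℝ) : ℂ)).im ↔ 0 < z.im
    simp
  by_cases hz : z ∈ UHP
  · rw [ext0_of _ hz, ext0_of _ (this.mpr hz)]
    simpa using hT z hz
  · simp [ext0, hz]
    intro h
    exact absurd (this.mp (by simpa using h)) hz

theorem const_of_inv (g : ℂ → ℂ) (hg : DifferentiableOn ℂ g UHP)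
    (hT : ∀ z ∈ UHP, g (z + 1) = g z) (hS : ∀ z ∈ UHP, ‖g (-1 / (3 * z))‖ = ‖g z‖)
    (hb : BoundedAtFilter Iinf g) : ∃ c, ∀ z ∈ UHP, g z = c := by
  have hper := ext0_per g hT
  set G := Function.Periodic.cuspFunction 1 (ext0 g) with hG
  have hGz : ∀ z ∈ UHP, G (Function.Periodic.qParam 1 z) = g z := by
    intro z hz
    rw [hG, Function.Periodic.eq_cuspFunction one_ne_zero hper, ext0_of g hz]
  have hinv : ∀ q : ℂ, ‖q‖ < 1 → q ≠ 0 → Function.Periodic.invQParam 1 q ∈ UHP := by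
    intro q h1 h0
    exact Function.Periodic.im_invQParam_pos_of_norm_lt_one one_pos h1 h0
  have hGd : DifferentiableOn ℂ G (Metric.ball 0 1) := by
    intro q hq
    apply DifferentiableAt.differentiableWithinAt
    have hq1 : ‖q‖ < 1 := by simpa using hq
    by_cases h0 : q = 0
    · rw [h0]
      apply Function.Periodic.differentiableAt_cuspFunction_zero one_pos hper
      · filter_upwards [ev_UHP] with z hz using ext0_diff g hg hz
      · exact (hb.congr' (ext0_ev g).symm EventuallyEq.rfl)
    · have := Function.Periodic.differentiableAt_cuspFunction one_ne_zero hper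
        (ext0_diff g hg (hinv q hq1 h0))
      rwa [Function.Periodic.qParam_right_inv one_ne_zero h0] at this
  set r : ℝ := Real.exp (-Real.pi / 2) with hr
  have hr1 : r < 1 := by
    rw [hr, Real.exp_lt_one_iff]
    have := Real.pi_pos
    linarith
  have hsub : Metric.closedBall (0 : ℂ) r ⊆ Metric.ball 0 1 := Metric.closedBall_subset_ball hr1
  obtain ⟨q0, hq0, hmax⟩ := (isCompact_closedBall (0 : ℂ) r).exists_isMaxOn
    ⟨0, by simp [hr]; positivity⟩ ((hGd.continuousOn.mono hsub).norm)
  have hle : ∀ z ∈ UHP, ‖ext0 g z‖ ≤ ‖G q0‖ := by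
    apply move (fun z => ‖ext0 g z‖)
    · intro z
      have := hper z
      simp only [Complex.ofReal_one] at this
      simp only [this]
    · intro z hz
      simp only [ext0_of _ hz, ext0_of _ (S_mem hz)]
      exact hS z hz
    · intro z hz
      have hzU : z ∈ UHP := by show 0 < z.im; linarith
      simp only [ext0_of _ hzU]
      rw [← hGz z hzU]
      apply hmax
      simp only [Metric.mem_closedBall, dist_zero_right]
      rw [Function.Periodic.norm_qParam, hr]
      apply Real.exp_le_exp.mpr
      have := Real.pi_pos
      nlinarith
  have hmaxball : IsMaxOn (norm ∘ G) (Metric.ball 0 1) q0 := by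
    intro q hq
    have hq1 : ‖q‖ < 1 := by simpa using hq
    by_cases h0 : q = 0
    · apply hmax
      simp [h0, hr]; positivity
    · have h := hle _ (hinv q hq1 h0)
      rw [ext0_of _ (hinv q hq1 h0), ← hGz _ (hinv q hq1 h0),
        Function.Periodic.qParam_right_inv one_ne_zero h0] at h
      exact h
  have hc := Complex.eqOn_of_isPreconnected_of_isMaxOn_norm
    (convex_ball (0 : ℂ) 1).isPreconnected Metric.isOpen_ball hGd (hsub hq0) hmaxball
  refine ⟨G q0, fun z hz => ?_⟩
  rw [← hGz z hz]
  exact hc (by simpa using Function.Periodic.norm_qParam_lt_one one_pos hz)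

theorem bdd_iff (g : ℂ → ℂ) : BoundedAtFilter Iinf g ↔
    ∃ C Y : ℝ, ∀ z : ℂ, Y ≤ z.im → ‖g z‖ ≤ C := by
  constructor
  · intro h
    obtain ⟨C, hC⟩ := h.bound
    rw [Filter.eventually_comap, Filter.eventually_atTop] at hC
    obtain ⟨Y, hY⟩ := hC
    exact ⟨C, Y, fun z hz => by simpa using hY z.im hz z rfl⟩
  · rintro ⟨C, Y, h⟩
    refine Asymptotics.IsBigO.of_bound C ?_
    rw [Filter.eventually_comap, Filter.eventually_atTop]
    exact ⟨Y, fun b hb a ha => by simpa using h a (ha ▸ hb)⟩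

theorem tend_iff (g : ℂ → ℂ) (L : ℂ) : Tendsto g Iinf (𝓝 L) ↔
    ∀ ε : ℝ, 0 < ε → ∃ Y : ℝ, ∀ z : ℂ, Y ≤ z.im → ‖g z - L‖ < ε := by
  rw [Metric.tendsto_nhds]
  refine forall₂_congr fun ε hε => ?_
  rw [Filter.eventually_comap, Filter.eventually_atTop]
  refine exists_congr fun Y => ?_
  constructor
  · intro h z hz
    simpa [dist_eq_norm] using h z.im hz z rfl
  · intro h b hb a ha
    simpa [dist_eq_norm] using h a (ha ▸ hb)

theorem deriv_le (g : ℂ → ℂ) (hg : DifferentiableOn ℂ g UHP) (L : ℂ) (C Y : ℝ)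
    (h : ∀ z : ℂ, Y ≤ z.im → ‖g z - L‖ ≤ C) (z : ℂ) (hz : max Y 1 + 1 ≤ z.im) :
    ‖deriv g z‖ ≤ C := by
  have h1 := le_max_left Y 1
  have h2 := le_max_right Y 1
  have him : ∀ w ∈ Metric.closedBall z 1, z.im - 1 ≤ w.im := by
    intro w hw
    have := Complex.abs_im_le_norm (w - z)
    have h3 : ‖w - z‖ ≤ 1 := by simpa [dist_eq_norm] using hw
    have := (abs_le.mp (this.trans h3)).1
    simp at this
    linarith
  have hd : DiffContOnCl ℂ (fun w => g w - L) (Metric.ball z 1) := by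
    apply DifferentiableOn.diffContOnCl
    rw [closure_ball _ one_ne_zero]
    apply (hg.mono _).sub_const
    intro w hw
    have := him w hw
    show 0 < w.im
    linarith
  have := Complex.norm_deriv_le_of_forall_mem_sphere_norm_le one_pos hd (C := C) (by
    intro w hw
    apply h
    have := him w (Metric.sphere_subset_closedBall hw)
    linarith)
  simpa using this

theorem deriv_bdd (g : ℂ → ℂ) (hg : DifferentiableOn ℂ g UHP) (hb : BoundedAtFilter Iinf g) :
    BoundedAtFilter Iinf (deriv g) := by
  rw [bdd_iff] at *
  obtain ⟨C, Y, h⟩ := hb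
  exact ⟨C, max Y 1 + 1, deriv_le g hg 0 C Y (by simpa using h)⟩

theorem deriv_tend (g : ℂ → ℂ) (hg : DifferentiableOn ℂ g UHP) (L : ℂ)
    (hb : Tendsto g Iinf (𝓝 L)) : Tendsto (deriv g) Iinf (𝓝 0) := by
  rw [tend_iff] at *
  intro ε hε
  obtain ⟨Y, h⟩ := hb (ε / 2) (by positivity)
  refine ⟨max Y 1 + 1, fun z hz => ?_⟩
  have := deriv_le g hg L (ε / 2) Y (fun z hz => (h z hz).le) z hz
  rw [sub_zero]
  linarith

def ph (z : ℂ) : ℂ := ∏' n : ℕ, (1 - qexp z ^ (n + 1))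

theorem qexp_eq (z : ℂ) : qexp z = Function.Periodic.qParam 1 z := by
  simp [qexp, Function.Periodic.qParam]

theorem qexp_lt {z : ℂ} (hz : z ∈ UHP) : ‖qexp z‖ < 1 := by
  rw [qexp_eq]
  exact Function.Periodic.norm_qParam_lt_one one_pos hz

theorem qexp_three (z : ℂ) : qexp (3 * z) = qexp z ^ 3 := by
  simp only [qexp, ← Complex.exp_nat_mul]
  congr 1
  push_cast
  ring

theorem qexp_add_one (z : ℂ) : qexp (z + 1) = qexp z := by
  rw [qexp, mul_add, mul_one, Complex.exp_periodic]; rfl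

theorem ph_ne {z : ℂ} (hz : z ∈ UHP) : ph z ≠ 0 := by
  have := ModularForm.eta_tprod_ne_zero (z := z) hz
  simpa [ph, qexp_eq, ModularForm.eta_q] using this

theorem ph_diff : DifferentiableOn ℂ ph UHP := by
  have h1 : DifferentiableOn ℂ qexp UHP := by
    apply Differentiable.differentiableOn
    unfold qexp
    fun_prop
  exact ModularForm.differentiableOn_tprod_one_sub_pow.comp h1
    (fun z hz => by simpa using qexp_lt hz)

theorem three_diff (g : ℂ → ℂ) (hg : DifferentiableOn ℂ g UHP) :
    DifferentiableOn ℂ (fun z => g (3 * z)) UHP :=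
  hg.comp (by fun_prop) (fun z hz => three_mem hz)

theorem ph_add_one (z : ℂ) : ph (z + 1) = ph z := by
  simp [ph, qexp_add_one]

theorem qexp_tend : Tendsto qexp Iinf (𝓝 0) := by
  have := (Function.Periodic.qParam_tendsto (h := 1) one_pos).mono_right nhdsWithin_le_nhds
  exact this.congr (fun z => (qexp_eq z).symm)

theorem three_tend : Tendsto (fun z : ℂ => 3 * z) Iinf Iinf := by
  rw [Filter.tendsto_comap_iff]
  have : Complex.im ∘ (fun z : ℂ => 3 * z) = fun z => 3 * z.im := by
    ext z; simp
  rw [this]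
  exact tendsto_comap.const_mul_atTop (by norm_num)

theorem ph_tend : Tendsto ph Iinf (𝓝 1) := by
  have h0 : (0 : ℂ) ∈ Metric.ball (0 : ℂ) 1 := by simp
  have h1 := (ModularForm.differentiableOn_tprod_one_sub_pow.differentiableAt
    (Metric.isOpen_ball.mem_nhds h0)).continuousAt.tendsto
  simp only [ne_eq, Nat.add_eq_zero_iff, one_ne_zero, and_false, not_false_eq_true, zero_pow,
    sub_zero, tprod_one] at h1
  exact h1.comp qexp_tend

theorem P_eq (k : ℕ) {z : ℂ} (hz : z ∈ UHP) :
    Pfun3 k z = Complex.exp (Real.pi * Complex.I * k * z) * (ph z * ph (3 * z)) ^ (3 * k) := by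
  unfold Pfun3
  congr 1
  have m1 := ModularForm.multipliable_one_sub_pow (qexp_lt hz)
  have m2 := ModularForm.multipliable_one_sub_pow (qexp_lt (three_mem hz))
  have e : ∀ n : ℕ, qexp z ^ (3 * (n + 1)) = qexp (3 * z) ^ (n + 1) := by
    intro n; rw [qexp_three, pow_mul]
  simp_rw [e]
  rw [(m1.pow (3 * k)).tprod_mul (m2.pow (3 * k)), m1.tprod_pow, m2.tprod_pow, mul_pow]
  rfl

theorem P_eta (k : ℕ) {z : ℂ} (hz : z ∈ UHP) :
    Pfun3 k z = (ModularForm.eta z * ModularForm.eta (3 * z)) ^ (3 * k) := by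
  rw [P_eq k hz]
  have e : ∀ w, ModularForm.eta w = Function.Periodic.qParam 24 w * ph w := by
    intro w
    simp [ModularForm.eta, ph, qexp_eq, ModularForm.eta_q]
  rw [e, e, show ∀ a b c d : ℂ, a * b * (c * d) = (a * c) * (b * d) by intros; ring, mul_pow (_ * _)]
  congr 1
  simp only [Function.Periodic.qParam, ← Complex.exp_add, ← Complex.exp_nat_mul]
  congr 1
  push_cast
  ring

theorem P_ne (k : ℕ) {z : ℂ} (hz : z ∈ UHP) : Pfun3 k z ≠ 0 := by
  rw [P_eq k hz]
  exact mul_ne_zero (Complex.exp_ne_zero _)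
    (pow_ne_zero _ (mul_ne_zero (ph_ne hz) (ph_ne (three_mem hz))))

theorem P_diff (k : ℕ) : DifferentiableOn ℂ (Pfun3 k) UHP := by
  have := ph_diff
  have h3 := three_diff ph this
  refine DifferentiableOn.congr (f := fun z => Complex.exp (Real.pi * Complex.I * k * z) *
    (ph z * ph (3 * z)) ^ (3 * k)) ?_ (fun z hz => P_eq k hz)
  refine DifferentiableOn.mul (by fun_prop) ((this.mul h3).pow _)

theorem P_T (k : ℕ) {z : ℂ} (hz : z ∈ UHP) : Pfun3 k (z + 1) = (-1) ^ k * Pfun3 k z := by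
  rw [P_eq k hz, P_eq k (add_one_mem hz), ph_add_one,
    show (3 : ℂ) * (z + 1) = 3 * z + 1 + 1 + 1 by ring, ph_add_one, ph_add_one, ph_add_one,
    ← mul_assoc]
  congr 1
  rw [← Complex.exp_pi_mul_I, ← Complex.exp_nat_mul, ← Complex.exp_add]
  congr 1
  ring

theorem eta_S {z : ℂ} (hz : z ∈ UHP) : ModularForm.eta (-1 / z) =
    (Complex.sqrt Complex.I)⁻¹ * (Complex.sqrt z * ModularForm.eta z) := by
  have := ModularForm.eta_comp_eq_csqrt_I_inv hz
  simpa using this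

theorem P_S (k : ℕ) {z : ℂ} (hz : z ∈ UHP) :
    Pfun3 k (-1 / (3 * z)) = (Complex.I * (Real.sqrt 3 * z) ^ 3) ^ k * Pfun3 k z := by
  have h0 := UHP_ne hz
  rw [P_eta k hz, P_eta k (S_mem hz), show 3 * (-1 / (3 * z)) = -1 / z by field_simp,
    eta_S hz, eta_S (three_mem hz)]
  have hsq : ∀ w : ℂ, Complex.sqrt w * Complex.sqrt w = w := by
    intro w
    by_cases hw : w = 0
    · simp [hw, Complex.sqrt]
    rw [Complex.sqrt, ← Complex.cpow_add _ _ hw]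
    norm_num
  have h3 : Complex.sqrt (3 * z) = Real.sqrt 3 * Complex.sqrt z := by
    rw [Complex.sqrt, Complex.sqrt, Complex.cpow_def_of_ne_zero (by simpa using h0),
      Complex.cpow_def_of_ne_zero h0]
    have h4 := Complex.log_ofReal_mul (r := 3) (by norm_num) h0
    have h5 := Real.exp_half (Real.log 3)
    rw [Real.exp_log (by norm_num)] at h5
    rw [Complex.ofReal_ofNat] at h4
    rw [h4, add_mul, Complex.exp_add, ← h5]
    push_cast
    congr 2
  have hI : (Complex.sqrt Complex.I)⁻¹ * (Complex.sqrt Complex.I)⁻¹ = -Complex.I := by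
    rw [← mul_inv, hsq, Complex.inv_I]
  rw [h3]
  have : (Complex.sqrt Complex.I)⁻¹ * (Real.sqrt 3 * Complex.sqrt z * ModularForm.eta (3 * z)) *
      ((Complex.sqrt Complex.I)⁻¹ * (Complex.sqrt z * ModularForm.eta z)) =
      (-Complex.I) * (Real.sqrt 3 * z) * (ModularForm.eta z * ModularForm.eta (3 * z)) := by
    linear_combination (Real.sqrt 3 * (Complex.sqrt z * Complex.sqrt z) * ModularForm.eta (3 * z) * ModularForm.eta z) * hI - (Complex.I * Real.sqrt 3 * ModularForm.eta (3 * z) * ModularForm.eta z) * hsq z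
  rw [this, mul_pow, pow_mul, mul_pow]
  congr 2
  rw [neg_pow, Complex.I_pow_three]
  ring

theorem E4_eq (z : UpperHalfPlane) : E4 z = ModularForm.E₄ z := by
  rw [EisensteinSeries.q_expansion_bernoulli (by norm_num) (by decide)]
  simp_rw [zpow_natCast]
  rw [tsum_pnat_eq_tsum_succ (f := fun n : ℕ => ((ArithmeticFunction.sigma (4 - 1) n : ℕ) : ℂ) *
    Complex.exp (2 * Real.pi * Complex.I * z) ^ n)]
  have : bernoulli 4 = -1 / 30 := by
    rw [bernoulli_eq_bernoulli'_of_ne_one (by norm_num), bernoulli'_four]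
  rw [this]
  simp only [E4, qexp]
  norm_num

theorem E2_eq (z : UpperHalfPlane) : E2 z = EisensteinSeries.E2 z := by
  rw [EisensteinSeries.E2_eq_tsum_cexp]
  rw [tsum_pnat_eq_tsum_succ (f := fun n : ℕ => ((ArithmeticFunction.sigma 1 n : ℕ) : ℂ) *
    Complex.exp (2 * Real.pi * Complex.I * z) ^ n)]
  simp only [E2, qexp]

theorem E4_diff : DifferentiableOn ℂ E4 UHP := by
  have := UpperHalfPlane.mdifferentiable_iff.mp ModularForm.E₄.holo'
  refine this.congr fun z hz => ?_
  rw [show z = ((⟨z, hz⟩ : UpperHalfPlane) : ℂ) from rfl, E4_eq, Function.comp_apply,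
    UpperHalfPlane.ofComplex_apply]
  rfl

theorem E2_diff : DifferentiableOn ℂ E2 UHP := by
  have := UpperHalfPlane.mdifferentiable_iff.mp E2_mdifferentiable
  refine this.congr fun z hz => ?_
  rw [show z = ((⟨z, hz⟩ : UpperHalfPlane) : ℂ) from rfl, E2_eq, Function.comp_apply,
    UpperHalfPlane.ofComplex_apply]

theorem E4_T (z : ℂ) : E4 (z + 1) = E4 z := by simp [E4, qexp_add_one]
theorem E2_T (z : ℂ) : E2 (z + 1) = E2 z := by simp [E2, qexp_add_one]

open scoped ModularForm in
theorem E4_S {z : ℂ} (hz : z ∈ UHP) : E4 (-1 / z) = z ^ 4 * E4 z := by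
  have h0 := UHP_ne hz
  set w : UpperHalfPlane := ⟨z, hz⟩ with hw
  have hwz : (w : ℂ) = z := rfl
  have h := congrFun (SlashInvariantForm.slash_action_eqn ModularForm.E₄ _
    (show (Matrix.SpecialLinearGroup.mapGL ℝ ModularGroup.S) ∈ _ from ⟨_, rfl⟩)) w
  have h' : ((ModularForm.E₄ : UpperHalfPlane → ℂ) ∣[(4 : ℤ)] ModularGroup.S) w = ModularForm.E₄ w := h
  simp only [ModularForm.SL_slash_def, UpperHalfPlane.modular_S_smul, ModularGroup.denom_S] at h'
  rw [← E4_eq, ← E4_eq] at h'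
  simp only [hwz] at h'
  rw [show (-z)⁻¹ = -1 / z by rw [inv_neg, neg_div, one_div], _root_.zpow_neg, zpow_ofNat,
    ← div_eq_mul_inv, div_eq_iff (pow_ne_zero 4 h0)] at h'
  rw [h', mul_comm]

theorem E2_S {z : ℂ} (hz : z ∈ UHP) :
    E2 (-1 / z) = z ^ 2 * E2 z + 6 * z / (Real.pi * Complex.I) := by
  have h0 := UHP_ne hz
  set w : UpperHalfPlane := ⟨z, hz⟩ with hw
  have hwz : (w : ℂ) = z := rfl
  have hE2 := congrFun (EisensteinSeries.E2_slash_action ModularGroup.S) w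
  simp only [one_div, ModularForm.SL_slash_def, UpperHalfPlane.modular_S_smul, ModularGroup.denom_S,
    Int.reduceNeg, _root_.zpow_neg, riemannZeta_two, _root_.mul_inv_rev, Pi.sub_apply, Pi.smul_apply,
    EisensteinSeries.D2_S, smul_eq_mul, zpow_ofNat] at hE2
  rw [← E2_eq, ← E2_eq] at hE2
  simp only [hwz] at hE2
  have hp : (Real.pi : ℂ) ≠ 0 := by exact_mod_cast Real.pi_ne_zero
  rw [show (-z)⁻¹ = -1 / z by rw [inv_neg, neg_div, one_div]] at hE2
  have hI : (Complex.I)⁻¹ = -Complex.I := Complex.inv_I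
  rw [← div_eq_mul_inv, div_eq_iff (pow_ne_zero 2 h0)] at hE2
  rw [hE2, div_mul_eq_div_div, div_eq_mul_inv _ Complex.I, hI]
  field_simp
  ring

theorem E4_tend : Tendsto E4 Iinf (𝓝 1) := by
  have hs : Summable fun n : ℕ => ((n + 1 : ℕ) : ℝ) ^ 4 * (1 / 2 : ℝ) ^ (n + 1) := by
    have := summable_pow_mul_geometric_of_norm_lt_one 4 (r := (1 / 2 : ℝ)) (by norm_num)
    exact (summable_nat_add_iff 1).mpr this
  have h := tendsto_tsum_of_dominated_convergence (𝓕 := Iinf)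
    (f := fun z (n : ℕ) => (ArithmeticFunction.sigma 3 (n + 1) : ℂ) * qexp z ^ (n + 1))
    (g := fun _ => 0) hs ?_ ?_
  · have := (h.const_mul 240).const_add 1
    simp only [tsum_zero, mul_zero, add_zero] at this
    exact this
  · intro n
    have := (qexp_tend.pow (n + 1)).const_mul (ArithmeticFunction.sigma 3 (n + 1) : ℂ)
    simpa using this
  · have h2 : ∀ᶠ z in Iinf, ‖qexp z‖ < 1 / 2 := by
      have := qexp_tend.norm
      rw [norm_zero] at this
      exact this.eventually (gt_mem_nhds (by norm_num))
    filter_upwards [h2] with z hz n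
    simp only [norm_mul, Complex.norm_natCast, norm_pow]
    gcongr
    exact_mod_cast ArithmeticFunction.sigma_le_pow_succ 3 (n + 1)

theorem M4_diff : DifferentiableOn ℂ M4plus3 UHP := by
  exact (((three_diff _ E4_diff).const_mul 9).add E4_diff).div_const 10

theorem M2_diff : DifferentiableOn ℂ M2star3 UHP := by
  exact (((three_diff _ E2_diff).const_mul 3).add E2_diff).div_const 4

theorem M4_T (z : ℂ) : M4plus3 (z + 1) = M4plus3 z := by
  rw [M4plus3, M4plus3, show (3 : ℂ) * (z + 1) = 3 * z + 1 + 1 + 1 by ring]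
  simp only [E4_T]

theorem M2_T (z : ℂ) : M2star3 (z + 1) = M2star3 z := by
  rw [M2star3, M2star3, show (3 : ℂ) * (z + 1) = 3 * z + 1 + 1 + 1 by ring]
  simp only [E2_T]

theorem M4_S {z : ℂ} (hz : z ∈ UHP) : M4plus3 (-1 / (3 * z)) = 9 * z ^ 4 * M4plus3 z := by
  have h0 := UHP_ne hz
  rw [M4plus3, M4plus3, show 3 * (-1 / (3 * z)) = -1 / z by field_simp,
    E4_S hz, E4_S (three_mem hz)]
  ring

theorem M2_S {z : ℂ} (hz : z ∈ UHP) : M2star3 (-1 / (3 * z)) =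
    3 * z ^ 2 * (M2star3 z + 3 / (Real.pi * Complex.I) / z) := by
  have h0 := UHP_ne hz
  rw [M2star3, M2star3, show 3 * (-1 / (3 * z)) = -1 / z by field_simp,
    E2_S hz, E2_S (three_mem hz)]
  have hp : (Real.pi : ℂ) ≠ 0 := by exact_mod_cast Real.pi_ne_zero
  have hI := Complex.I_ne_zero
  field_simp
  ring

theorem M4_tend : Tendsto M4plus3 Iinf (𝓝 1) := by
  have := (((E4_tend.comp three_tend).const_mul 9).add E4_tend).div_const 10
  norm_num at this
  exact this

theorem wt4_zero (h : ℂ → ℂ) (hd : DifferentiableOn ℂ h UHP)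
    (hT : ∀ z ∈ UHP, h (z + 1) = h z) (hS : ∀ z ∈ UHP, h (-1 / (3 * z)) = 9 * z ^ 4 * h z)
    (hz : Tendsto h Iinf (𝓝 0)) : ∀ z ∈ UHP, h z = 0 := by
  have hdec : ext0 h =O[Iinf] fun z ↦ Real.exp (-2 * Real.pi * z.im / 1) := by
    apply Function.Periodic.exp_decay_of_zero_at_inf one_pos (ext0_per h hT)
    · filter_upwards [ev_UHP] with z hz using ext0_diff h hd hz
    · exact hz.congr' (ext0_ev h).symm
  have hdec2 : h =O[Iinf] qexp := by
    refine ((ext0_ev h).symm.trans_isBigO hdec).trans ?_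
    refine Asymptotics.IsBigO.of_bound 1 (Filter.Eventually.of_forall fun z => ?_)
    rw [qexp_eq, Function.Periodic.norm_qParam]
    simp
  set g : ℂ → ℂ := fun z => h z ^ 3 / Pfun3 4 z with hg
  have hph : Tendsto (fun z => (ph z * ph (3 * z)) ^ (3 * 4)) Iinf (𝓝 1) := by
    simpa using (ph_tend.mul (ph_tend.comp three_tend)).pow (3 * 4)
  have hg0 : Tendsto g Iinf (𝓝 0) := by
    have h1 : (fun z => h z ^ 3 / qexp z ^ 2) =O[Iinf] qexp := by
      have := ((hdec2.pow 3).mul (Asymptotics.isBigO_refl (fun z => (qexp z ^ 2)⁻¹) Iinf))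
      refine (this.congr_left fun z => by rw [div_eq_mul_inv]).congr_right fun z => ?_
      have : qexp z ≠ 0 := Complex.exp_ne_zero _
      field_simp
    have h2 := (h1.trans_tendsto qexp_tend).div hph one_ne_zero
    rw [zero_div] at h2
    refine h2.congr' ?_
    filter_upwards [ev_UHP] with z hzU
    simp only [hg, Pi.div_apply]
    rw [P_eq 4 hzU, div_div]
    congr 2
    rw [qexp, ← Complex.exp_nat_mul]
    congr 1
    push_cast; ring
  obtain ⟨c, hc⟩ := const_of_inv g ((hd.pow 3).div (P_diff 4) (fun z hz => P_ne 4 hz)) (by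
      intro z hz
      simp only [hg, hT z hz, P_T 4 hz]
      norm_num) (by
      intro z hz
      have h0 := UHP_ne hz
      simp only [hg, hS z hz, P_S 4 hz]
      congr 1
      have h3 : ((Real.sqrt 3 : ℝ) : ℂ) ^ 2 = 3 := by
        rw [← Complex.ofReal_pow, Real.sq_sqrt (by norm_num)]; simp
      have : (Complex.I * (Real.sqrt 3 * z) ^ 3) ^ 4 = (9 * z ^ 4) ^ 3 := by
        rw [show (Complex.I * (Real.sqrt 3 * z) ^ 3) ^ 4 =
          Complex.I ^ 4 * (((Real.sqrt 3 : ℝ) : ℂ) ^ 2) ^ 6 * z ^ 12 by ring, h3, Complex.I_pow_four]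
        ring
      rw [this, mul_pow (9 * z ^ 4)]
      rw [mul_div_mul_left]
      exact pow_ne_zero _ (mul_ne_zero (by norm_num) (pow_ne_zero _ h0)))
    (hg0.isBigO_one ℝ)
  have hc0 : c = 0 := by
    have hgc : Tendsto g Iinf (𝓝 c) := by
      refine tendsto_const_nhds.congr' ?_
      filter_upwards [ev_UHP] with z hz using (hc z hz).symm
    have : NeBot Iinf := by
      rw [Filter.comap_neBot_iff]
      intro t ht
      obtain ⟨a, ha⟩ := Filter.mem_atTop_sets.mp ht
      exact ⟨⟨0, a⟩, ha a le_rfl⟩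
    exact tendsto_nhds_unique hgc hg0
  intro z hz
  have := hc z hz
  rw [hc0, hg] at this
  simp only [div_eq_zero_iff, P_ne 4 hz, or_false] at this
  exact pow_eq_zero_iff (by norm_num) |>.mp this

theorem deriv_S (F G : ℂ → ℂ) (hF : DifferentiableOn ℂ F UHP)
    (h : ∀ z ∈ UHP, F (-1 / (3 * z)) = G z) {z G' : ℂ} (hz : z ∈ UHP) (hG : HasDerivAt G G' z) :
    deriv F (-1 / (3 * z)) = 3 * z ^ 2 * G' := by
  have h0 := UHP_ne hz
  have h1 : HasDerivAt F (deriv F (-1 / (3 * z))) (-1 / (3 * z)) :=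
    (hF.differentiableAt (isOpen_UHP.mem_nhds (S_mem hz))).hasDerivAt
  have h2 : HasDerivAt (fun w : ℂ => -1 / (3 * w)) (1 / (3 * z ^ 2)) z := by
    have := (hasDerivAt_const z (-1 : ℂ)).div ((hasDerivAt_id z).const_mul 3)
      (by simpa using h0)
    refine this.congr_deriv ?_
    simp
    field_simp
  have h3 := h1.comp z h2
  have h4 : HasDerivAt G (deriv F (-1 / (3 * z)) * (1 / (3 * z ^ 2))) z := by
    refine h3.congr_of_eventuallyEq ?_
    filter_upwards [isOpen_UHP.mem_nhds hz] with w hw using (h w hw).symm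
  rw [hG.unique h4]
  field_simp

theorem deriv_T (F : ℂ → ℂ) (σ : ℂ)
    (h : ∀ z ∈ UHP, F (z + 1) = σ * F z) {z : ℂ} (hz : z ∈ UHP) :
    deriv F (z + 1) = σ * deriv F z := by
  rw [← deriv_comp_add_const]
  have : (fun w => F (w + 1)) =ᶠ[𝓝 z] fun w => σ * F w := by
    filter_upwards [isOpen_UHP.mem_nhds hz] with w hw using h w hw
  rw [this.deriv_eq, deriv_const_mul_field]

theorem deriv_exp_mul (y s : ℂ → ℂ) (κ : ℂ) (hs : DifferentiableOn ℂ s UHP)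
    (h : ∀ z ∈ UHP, y z = Complex.exp (κ * z) * s z) {z : ℂ} (hz : z ∈ UHP) :
    deriv y z = Complex.exp (κ * z) * (deriv s z + κ * s z) := by
  have h1 : HasDerivAt s (deriv s z) z :=
    (hs.differentiableAt (isOpen_UHP.mem_nhds hz)).hasDerivAt
  have h2 : HasDerivAt (fun w => Complex.exp (κ * w)) (Complex.exp (κ * z) * (κ * 1)) z :=
    ((hasDerivAt_id z).const_mul κ).cexp
  have : y =ᶠ[𝓝 z] fun w => Complex.exp (κ * w) * s w := by
    filter_upwards [isOpen_UHP.mem_nhds hz] with w hw using h w hw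
  have h3 : deriv (fun w => Complex.exp (κ * w) * s w) z = _ := (h2.mul h1).deriv
  rw [this.deriv_eq, h3]
  ring

theorem core (y B s b : ℂ → ℂ) (σ ε α κ c : ℂ) (hσ : σ ^ 2 = 1) (hε : ε ^ 2 = 1) (hα : α ≠ 0)
    (hc : c ≠ 0)
    (hyT : ∀ z ∈ UHP, y (z + 1) = σ * y z) (hBT : ∀ z ∈ UHP, B (z + 1) = σ * B z)
    (hyS : ∀ z ∈ UHP, y (-1 / (3 * z)) = ε * (y z + α * B z / z))
    (hBS : ∀ z ∈ UHP, B (-1 / (3 * z)) = ε * B z / (3 * z ^ 2))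
    (hs : DifferentiableOn ℂ s UHP) (hb : DifferentiableOn ℂ b UHP)
    (hys : ∀ z ∈ UHP, y z = Complex.exp (κ * z) * s z)
    (hBb : ∀ z ∈ UHP, B z = Complex.exp (-κ * z) * b z)
    (hst : Tendsto s Iinf (𝓝 c)) (hbb : BoundedAtFilter Iinf b)
    (hκ : BoundedAtFilter Iinf (fun z => Complex.exp (κ * z))) :
    ∀ z ∈ UHP, deriv (deriv y) z = κ ^ 2 * M4plus3 z * y z := by
  have hyd : DifferentiableOn ℂ y UHP := by
    refine DifferentiableOn.congr (f := fun z => Complex.exp (κ * z) * s z) ?_ hys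
    exact DifferentiableOn.mul (by fun_prop) hs
  have hBd : DifferentiableOn ℂ B UHP := by
    refine DifferentiableOn.congr (f := fun z => Complex.exp (-κ * z) * b z) ?_ hBb
    exact DifferentiableOn.mul (by fun_prop) hb
  have hy1d := hyd.deriv isOpen_UHP
  have hB1d := hBd.deriv isOpen_UHP
  have hy2d := hy1d.deriv isOpen_UHP
  have hB2d := hB1d.deriv isOpen_UHP
  have hs1d := hs.deriv isOpen_UHP
  have hda : ∀ {F : ℂ → ℂ}, DifferentiableOn ℂ F UHP → ∀ {z}, z ∈ UHP → HasDerivAt F (deriv F z) z :=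
    fun hF _ hz => (hF.differentiableAt (isOpen_UHP.mem_nhds hz)).hasDerivAt
  -- translations
  have hy1T : ∀ z ∈ UHP, deriv y (z + 1) = σ * deriv y z := fun z hz => deriv_T y σ hyT hz
  have hB1T : ∀ z ∈ UHP, deriv B (z + 1) = σ * deriv B z := fun z hz => deriv_T B σ hBT hz
  have hy2T : ∀ z ∈ UHP, deriv (deriv y) (z + 1) = σ * deriv (deriv y) z :=
    fun z hz => deriv_T _ σ hy1T hz
  have hB2T : ∀ z ∈ UHP, deriv (deriv B) (z + 1) = σ * deriv (deriv B) z :=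
    fun z hz => deriv_T _ σ hB1T hz
  -- inversions
  have hy1S : ∀ z ∈ UHP, deriv y (-1 / (3 * z)) =
      ε * (3 * z ^ 2 * deriv y z + 3 * α * z * deriv B z - 3 * α * B z) := by
    intro z hz
    have h0 := UHP_ne hz
    have hG := (((hda hyd hz).add (((hda hBd hz).const_mul α).div (hasDerivAt_id z) h0)).const_mul ε)
    rw [deriv_S y _ hyd hyS hz hG]
    simp only [id]
    field_simp
    ring
  have hB1S : ∀ z ∈ UHP, deriv B (-1 / (3 * z)) = ε * (deriv B z - 2 * B z / z) := by
    intro z hz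
    have h0 := UHP_ne hz
    have hG := ((hda hBd hz).const_mul ε).div (((hasDerivAt_id z).pow 2).const_mul 3)
      (by simpa using h0)
    rw [deriv_S B _ hBd hBS hz hG]
    simp only [id, Pi.pow_apply]
    field_simp
    ring
  have hy2S : ∀ z ∈ UHP, deriv (deriv y) (-1 / (3 * z)) =
      ε * (9 * z ^ 3 * (2 * deriv y z + z * deriv (deriv y) z + α * deriv (deriv B) z)) := by
    intro z hz
    have h0 := UHP_ne hz
    have hG := ((((((hasDerivAt_id z).pow 2).const_mul 3).mul (hda hy1d hz)).add
      (((hasDerivAt_id z).const_mul (3 * α)).mul (hda hB1d hz))).sub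
      ((hda hBd hz).const_mul (3 * α))).const_mul ε
    rw [deriv_S (deriv y) _ hy1d hy1S hz hG]
    simp only [id, Pi.pow_apply]
    ring
  have hB2S : ∀ z ∈ UHP, deriv (deriv B) (-1 / (3 * z)) =
      ε * (3 * z ^ 2 * deriv (deriv B) z - 6 * z * deriv B z + 6 * B z) := by
    intro z hz
    have h0 := UHP_ne hz
    have hG := ((hda hB1d hz).sub (((hda hBd hz).const_mul 2).div (hasDerivAt_id z) h0)).const_mul ε
    rw [deriv_S (deriv B) _ hB1d hB1S hz hG]
    simp only [id]
    field_simp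
    ring
  -- exponential forms
  have hy1e : ∀ z ∈ UHP, deriv y z = Complex.exp (κ * z) * (deriv s z + κ * s z) :=
    fun z hz => deriv_exp_mul y s κ hs hys hz
  have hB1e : ∀ z ∈ UHP, deriv B z = Complex.exp (-κ * z) * (deriv b z + -κ * b z) :=
    fun z hz => deriv_exp_mul B b (-κ) hb hBb hz
  have hy2e : ∀ z ∈ UHP, deriv (deriv y) z =
      Complex.exp (κ * z) * (deriv (deriv s) z + 2 * κ * deriv s z + κ ^ 2 * s z) := by
    intro z hz
    rw [deriv_exp_mul (deriv y) (fun z => deriv s z + κ * s z) κ (hs1d.add (hs.const_mul κ)) hy1e hz]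
    have := ((hda hs1d hz).add ((hda hs hz).const_mul κ)).deriv
    have h2 : deriv (fun z => deriv s z + κ * s z) z = deriv (deriv s) z + κ * deriv s z := this
    rw [h2]
    ring
  -- Wronskian
  set W : ℂ → ℂ := fun z => y z ^ 2 + α * (deriv B z * y z - B z * deriv y z) with hW
  have hWd : DifferentiableOn ℂ W UHP :=
    (hyd.pow 2).add (((hB1d.mul hyd).sub (hBd.mul hy1d)).const_mul α)
  have hWT : ∀ z ∈ UHP, W (z + 1) = W z := by
    intro z hz
    simp only [hW, hyT z hz, hBT z hz, hy1T z hz, hB1T z hz]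
    linear_combination (y z ^ 2 + α * (deriv B z * y z - B z * deriv y z)) * hσ
  have hWS : ∀ z ∈ UHP, W (-1 / (3 * z)) = W z := by
    intro z hz
    have h0 := UHP_ne hz
    simp only [hW, hyS z hz, hBS z hz, hy1S z hz, hB1S z hz]
    field_simp
    linear_combination (z ^ 2 * (y z ^ 2 + α * (deriv B z * y z - B z * deriv y z))) * hε
  have hsb : BoundedAtFilter Iinf s := hst.isBigO_one ℝ
  have hs1b := deriv_bdd s hs hsb
  have hb1b := deriv_bdd b hb hbb
  have hWb : BoundedAtFilter Iinf W := by
    have hyb : BoundedAtFilter Iinf (fun z => Complex.exp (κ * z) * s z) := hκ.mul hsb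
    have h1 : BoundedAtFilter Iinf (fun z => deriv b z + -κ * b z) :=
      hb1b.add ((const_boundedAtFilter Iinf (-κ)).mul hbb)
    have h2 : BoundedAtFilter Iinf (fun z => deriv s z + κ * s z) :=
      hs1b.add ((const_boundedAtFilter Iinf κ).mul hsb)
    have h3 : BoundedAtFilter Iinf (fun z =>
        (Complex.exp (κ * z) * s z) * (Complex.exp (κ * z) * s z) +
        (α * ((deriv b z + -κ * b z) * s z) + (-α) * (b z * (deriv s z + κ * s z)))) :=
      (hyb.mul hyb).add (((const_boundedAtFilter Iinf α).mul (h1.mul hsb)).add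
        ((const_boundedAtFilter Iinf (-α)).mul (hbb.mul h2)))
    refine Asymptotics.IsBigO.congr' h3 ?_ EventuallyEq.rfl
    filter_upwards [ev_UHP] with z hz
    simp only [hW, hys z hz, hBb z hz, hy1e z hz, hB1e z hz]
    have he : Complex.exp (-κ * z) * Complex.exp (κ * z) = 1 := by
      rw [← Complex.exp_add]; simp
    linear_combination (-α * ((deriv b z + -κ * b z) * s z - b z * (deriv s z + κ * s z))) * he
  obtain ⟨W0, hW0⟩ := const_of_inv W hWd hWT (fun z hz => by rw [hWS z hz]) hWb
  have hne : NeBot Iinf := by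
    rw [Filter.comap_neBot_iff]
    intro t ht
    obtain ⟨a, ha⟩ := Filter.mem_atTop_sets.mp ht
    exact ⟨⟨0, a⟩, ha a le_rfl⟩
  have hW0ne : W0 ≠ 0 := by
    intro hzero
    obtain ⟨Y, hY⟩ := (tend_iff s c).mp hst ‖c‖ (norm_pos_iff.mpr hc)
    set V : Set ℂ := {z | max Y 0 < z.im} with hV
    have hVo : IsOpen V := isOpen_lt continuous_const Complex.continuous_im
    have hVc : Convex ℝ V := convex_halfSpace_im_gt _
    have hVU : ∀ z ∈ V, z ∈ UHP := fun z hz => lt_of_le_of_lt (le_max_right Y 0) hz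
    have hyne : ∀ z ∈ V, y z ≠ 0 := by
      intro z hz
      rw [hys z (hVU z hz)]
      refine mul_ne_zero (Complex.exp_ne_zero _) ?_
      intro h
      have := hY z (le_of_lt (lt_of_le_of_lt (le_max_left Y 0) hz))
      rw [h] at this
      simp at this
    set R : ℂ → ℂ := fun z => B z / y z + α⁻¹ * z with hR
    have hRd : ∀ z ∈ V, HasDerivAt R 0 z := by
      intro z hz
      have := ((hda hBd (hVU z hz)).div (hda hyd (hVU z hz)) (hyne z hz)).add
        ((hasDerivAt_id z).const_mul α⁻¹)
      refine this.congr_deriv ?_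
      have h1 := hW0 z (hVU z hz)
      rw [hzero] at h1
      simp only [hW] at h1
      have := hyne z hz
      field_simp
      linear_combination h1
    have hz0 : (⟨0, max Y 0 + 1⟩ : ℂ) ∈ V := by
      show max Y 0 < max Y 0 + 1
      linarith
    have hz1 : (⟨0, max Y 0 + 1⟩ : ℂ) + 1 ∈ V := by
      show max Y 0 < ((⟨0, max Y 0 + 1⟩ : ℂ) + 1).im
      simp
    have heq := hVo.is_const_of_deriv_eq_zero hVc.isPreconnected
      (fun z hz => (hRd z hz).differentiableAt.differentiableWithinAt)
      (fun z hz => (hRd z hz).deriv) hz0 hz1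
    simp only [hR, hBT _ (hVU _ hz0), hyT _ (hVU _ hz0)] at heq
    have hσ0 : σ ≠ 0 := by rintro rfl; simp at hσ
    rw [mul_div_mul_left _ _ hσ0, mul_add, mul_one, ← add_assoc] at heq
    have : α⁻¹ = 0 := by linear_combination -heq
    exact hα (by simpa using this)
  -- derivative of the Wronskian
  have hW' : ∀ z ∈ UHP, 2 * y z * deriv y z +
      α * (deriv (deriv B) z * y z - B z * deriv (deriv y) z) = 0 := by
    intro z hz
    have h1 := ((hda hyd hz).pow 2).add ((((hda hB1d hz).mul (hda hyd hz)).sub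
      ((hda hBd hz).mul (hda hy1d hz))).const_mul α)
    have h2 : HasDerivAt W 0 z := by
      refine (hasDerivAt_const z W0).congr_of_eventuallyEq ?_
      filter_upwards [isOpen_UHP.mem_nhds hz] with w hw using hW0 w hw
    have h3 := h2.unique h1
    norm_num at h3
    linear_combination -h3
  set N : ℂ → ℂ := fun z => y z * deriv (deriv y) z - 2 * deriv y z ^ 2 +
    α * (deriv B z * deriv (deriv y) z - deriv (deriv B) z * deriv y z) with hN
  have hNd : DifferentiableOn ℂ N UHP :=
    ((hyd.mul hy2d).sub ((hy1d.pow 2).const_mul 2)).add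
      (((hB1d.mul hy2d).sub (hB2d.mul hy1d)).const_mul α)
  have hNy : ∀ z ∈ UHP, deriv (deriv y) z * W0 = N z * y z := by
    intro z hz
    rw [← hW0 z hz]
    simp only [hW, hN]
    linear_combination (deriv y z) * hW' z hz
  have hNT : ∀ z ∈ UHP, N (z + 1) = N z := by
    intro z hz
    simp only [hN, hyT z hz, hy1T z hz, hB1T z hz, hy2T z hz, hB2T z hz]
    linear_combination (y z * deriv (deriv y) z - 2 * deriv y z ^ 2 +
      α * (deriv B z * deriv (deriv y) z - deriv (deriv B) z * deriv y z)) * hσ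
  have hNS : ∀ z ∈ UHP, N (-1 / (3 * z)) = 9 * z ^ 4 * N z := by
    intro z hz
    have h0 := UHP_ne hz
    simp only [hN, hyS z hz, hy1S z hz, hB1S z hz, hy2S z hz, hB2S z hz]
    field_simp
    linear_combination (9 * z ^ 4 * (y z * deriv (deriv y) z - 2 * deriv y z ^ 2 +
      α * (deriv B z * deriv (deriv y) z - deriv (deriv B) z * deriv y z))) * hε
      + 9 * z ^ 3 * ε ^ 2 * hW' z hz
  have hs1t := deriv_tend s hs c hst
  have hs2t := deriv_tend _ hs1d 0 hs1t
  have hNt : Tendsto N Iinf (𝓝 (κ ^ 2 * W0)) := by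
    have h1 := (((hs2t.add (hs1t.const_mul (2 * κ))).add (hst.const_mul (κ ^ 2))).div hst hc).mul_const W0
    have e : (0 + 2 * κ * 0 + κ ^ 2 * c) / c * W0 = κ ^ 2 * W0 := by
      field_simp; ring
    rw [e] at h1
    refine h1.congr' ?_
    filter_upwards [ev_UHP, hst.eventually_ne hc] with z hz hsz
    have h2 := hNy z hz
    rw [hy2e z hz, hys z hz] at h2
    have he := Complex.exp_ne_zero (κ * z)
    simp only [Pi.div_apply]
    rw [div_mul_eq_mul_div, div_eq_iff hsz]
    apply mul_left_cancel₀ he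
    linear_combination h2
  have hz := wt4_zero (fun z => N z - κ ^ 2 * W0 * M4plus3 z) (hNd.sub (M4_diff.const_mul _))
    (fun z hz => by simp only [hNT z hz, M4_T])
    (fun z hz => by simp only [hNS z hz, M4_S hz]; ring)
    (by
      have := hNt.sub (M4_tend.const_mul (κ ^ 2 * W0))
      simpa using this)
  intro z hzU
  have h1 : N z - κ ^ 2 * W0 * M4plus3 z = 0 := hz z hzU
  apply mul_right_cancel₀ hW0ne
  rw [hNy z hzU]
  linear_combination y z * h1

theorem T_mem_plus : toR ModularGroup.T ∈ GammaPlus3 := by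
  refine Subgroup.subset_closure (Or.inl ?_)
  refine Subgroup.mem_map_of_mem _ ?_
  rw [CongruenceSubgroup.Gamma0_mem]
  simp [ModularGroup.T]

theorem S_mem_plus : S3elt ∈ GammaPlus3 :=
  Subgroup.subset_closure (Or.inr rfl)

theorem toR_T : (toR ModularGroup.T).1 = !![1, 1; 0, 1] := by
  have h : (toR ModularGroup.T).1 = (ModularGroup.T).1.map (fun x : ℤ => (x : ℝ)) := rfl
  rw [h, ModularGroup.coe_T]
  ext i j
  fin_cases i <;> fin_cases j <;> simp

theorem R_eq : R3elt = toR ModularGroup.T * S3elt := by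
  apply Subtype.ext
  have h : (toR ModularGroup.T * S3elt).1 = (toR ModularGroup.T).1 * S3elt.1 := rfl
  rw [h, toR_T]
  simp [R3elt, S3elt]

theorem moeb_T (z : ℂ) : moeb (toR ModularGroup.T) z = z + 1 := by
  simp only [moeb, toR_T]
  simp

theorem jfac_T (z : ℂ) : jfac (toR ModularGroup.T) z = 1 := by
  simp only [jfac, toR_T]
  simp

theorem sqrt3_sq : ((Real.sqrt 3 : ℝ) : ℂ) ^ 2 = 3 := by
  rw [← Complex.ofReal_pow, Real.sq_sqrt (by norm_num)]
  norm_num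

theorem sqrt3_ne : ((Real.sqrt 3 : ℝ) : ℂ) ≠ 0 := by
  intro h
  have := sqrt3_sq
  rw [h] at this
  norm_num at this

theorem moeb_S {z : ℂ} (hz : z ∈ UHP) : moeb S3elt z = -1 / (3 * z) := by
  have h0 := UHP_ne hz
  have h3 := sqrt3_ne
  simp only [moeb, S3elt]
  simp
  rw [← sqrt3_sq]
  field_simp

theorem jfac_S (z : ℂ) : jfac S3elt z = (Real.sqrt 3 : ℝ) * z := by
  simp [jfac, S3elt]

/-- Theorem: an extremal quasimodular form of weight `3k` and depth 1
on `Γ₀⁺(3)` with character `χ^k`, divided by `M₆^{k/2}`, solves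
`y″ = -4π²(k/2)² M₄ y`. -/
theorem extremal_Gamma0plus3_weight3k_MODE
    (χ : SL2R → ℂ)
    (hχmul : ∀ γ ∈ GammaPlus3, ∀ δ ∈ GammaPlus3, χ (γ * δ) = χ γ * χ δ)
    (hχS : χ S3elt = -Complex.I) (hχR : χ R3elt = -Complex.I)
    (k : ℕ)
    (f₀ f₁ : ℂ → ℂ)
    (hf₀ : MFchar GammaPlus3 (fun γ => χ γ ^ k) (3 * k) f₀)
    (hf₁ : MFchar GammaPlus3 (fun γ => χ γ ^ k) (3 * k - 2) f₁)
    (f : ℂ → ℂ) (hf : ∀ z, f z = f₀ z + M2star3 z * f₁ z)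
    (hext : VOrder 1 f (k : ℝ)) :
    ∀ z ∈ UHP,
      deriv (deriv fun w => f w / Pfun3 k w) z
        = -(4 * (Real.pi : ℂ) ^ 2) * ((k : ℂ) / 2) ^ 2 * M4plus3 z * (f z / Pfun3 k z) := by
  have hχT : χ (toR ModularGroup.T) = 1 := by
    have h := hχmul _ T_mem_plus _ S_mem_plus
    rw [← R_eq, hχR, hχS] at h
    have hI : (-Complex.I) ≠ 0 := by simp
    apply mul_right_cancel₀ hI
    rw [← h, one_mul]
  obtain ⟨h0d, h0t, -⟩ := hf₀
  obtain ⟨h1d, h1t, C, h1b⟩ := hf₁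
  have h0T : ∀ z ∈ UHP, f₀ (z + 1) = f₀ z := fun z hz => by
    have := h0t _ T_mem_plus z hz
    simpa [moeb_T, jfac_T, hχT] using this
  have h1T : ∀ z ∈ UHP, f₁ (z + 1) = f₁ z := fun z hz => by
    have := h1t _ T_mem_plus z hz
    simpa [moeb_T, jfac_T, hχT] using this
  have hsz : ∀ z ∈ UHP, ((Real.sqrt 3 : ℝ) : ℂ) * z ≠ 0 :=
    fun z hz => mul_ne_zero sqrt3_ne (UHP_ne hz)
  have h0S : ∀ z ∈ UHP, f₀ (-1 / (3 * z)) =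
      (-Complex.I) ^ k * ((Real.sqrt 3 : ℝ) * z) ^ (3 * k) * f₀ z := fun z hz => by
    have := h0t _ S_mem_plus z hz
    beta_reduce at this
    rw [moeb_S hz, jfac_S, hχS] at this
    rw [this]
    norm_cast
  have h1S : ∀ z ∈ UHP, f₁ (-1 / (3 * z)) =
      (-Complex.I) ^ k * ((Real.sqrt 3 : ℝ) * z) ^ (3 * k) * f₁ z / (3 * z ^ 2) := fun z hz => by
    have := h1t _ S_mem_plus z hz
    beta_reduce at this
    rw [moeb_S hz, jfac_S, hχS, zpow_sub₀ (hsz z hz)] at this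
    rw [this]
    have e1 : ((Real.sqrt 3 : ℝ) * z : ℂ) ^ (3 * (k : ℤ)) = ((Real.sqrt 3 : ℝ) * z : ℂ) ^ (3 * k) := by
      norm_cast
    have e2 : ((Real.sqrt 3 : ℝ) * z : ℂ) ^ (2 : ℤ) = 3 * z ^ 2 := by
      rw [← sqrt3_sq, ← mul_pow]; norm_cast
    rw [e1, e2]
    ring
  have hPT : ∀ z ∈ UHP, Pfun3 k (z + 1) = (-1) ^ k * Pfun3 k z := fun z hz => P_T k hz
  have hPS : ∀ z ∈ UHP, Pfun3 k (-1 / (3 * z)) =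
      Complex.I ^ k * ((Real.sqrt 3 : ℝ) * z) ^ (3 * k) * Pfun3 k z := fun z hz => by
    rw [P_S k hz, mul_pow, ← pow_mul]
  have hPne : ∀ z ∈ UHP, Pfun3 k z ≠ 0 := fun z hz => P_ne k hz
  have hI : (-Complex.I) ^ k = (-1) ^ k * Complex.I ^ k := by
    rw [← mul_pow]; simp
  have hone : ((-1 : ℂ) ^ k) ^ 2 = 1 := by
    rw [← pow_mul, mul_comm, pow_mul]; simp
  have hone' : ((-1 : ℂ) ^ k) ≠ 0 := by simp
  have hIk : Complex.I ^ k ≠ 0 := by simp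
  have hfd : DifferentiableOn ℂ f UHP := by
    refine DifferentiableOn.congr (f := fun z => f₀ z + M2star3 z * f₁ z) ?_ (fun z _ => hf z)
    exact h0d.add (M2_diff.mul h1d)
  set Q : ℂ → ℂ := fun z => (ph z * ph (3 * z)) ^ (3 * k) with hQ
  have hQd : DifferentiableOn ℂ Q UHP := (ph_diff.mul (three_diff ph ph_diff)).pow (3 * k)
  have hQne : ∀ z ∈ UHP, Q z ≠ 0 := fun z hz =>
    pow_ne_zero _ (mul_ne_zero (ph_ne hz) (ph_ne (three_mem hz)))
  have hQt : Tendsto Q Iinf (𝓝 1) := by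
    have := (ph_tend.mul (ph_tend.comp three_tend)).pow (3 * k)
    simpa using this
  have hPQ : ∀ z ∈ UHP, Pfun3 k z = Complex.exp (Real.pi * Complex.I * k * z) * Q z :=
    fun z hz => P_eq k hz
  obtain ⟨c, hc, hlim⟩ := hext
  have hlim' : Tendsto (fun z => Complex.exp (-(2 * (Real.pi * Complex.I * k)) * z) * f z) Iinf (𝓝 c) := by
    rw [tend_iff]
    intro ε hε
    obtain ⟨Y, hY⟩ := hlim ε hε
    refine ⟨Y, fun z hz => ?_⟩
    have := hY z hz
    have e : (-(2 * (Real.pi * Complex.I * k)) * z : ℂ) =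
        -(2 * Real.pi * Complex.I * ((k : ℝ) : ℂ) * z / ((1 : ℝ) : ℂ)) := by
      push_cast; ring
    rw [e]
    exact this
  have key := core (fun w => f w / Pfun3 k w) (fun w => f₁ w / Pfun3 k w)
    (fun z => Complex.exp (-(2 * (Real.pi * Complex.I * k)) * z) * f z / Q z)
    (fun z => f₁ z / Q z) ((-1) ^ k) ((-1) ^ k) (3 / (Real.pi * Complex.I))
    (Real.pi * Complex.I * k) c hone hone (by simp [Real.pi_ne_zero]) hc
    (fun z hz => by
      have := hPne z hz
      simp only [hf, h0T z hz, h1T z hz, hPT z hz, M2_T]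
      field_simp
      linear_combination (-(f₀ z + M2star3 z * f₁ z)) * hone)
    (fun z hz => by
      have := hPne z hz
      simp only [h1T z hz, hPT z hz]
      field_simp
      linear_combination (-(f₁ z)) * hone)
    (fun z hz => by
      have := hPne z hz
      have h0 := UHP_ne hz
      have h3 := pow_ne_zero (3 * k) (hsz z hz)
      simp only [hf, h0S z hz, h1S z hz, hPS z hz, M2_S hz, hI]
      set A : ℂ := ((Real.sqrt 3 : ℝ) * z : ℂ) ^ (3 * k) with hA
      set a : ℂ := 3 / (Real.pi * Complex.I)
      set m := M2star3 z
      clear_value A a m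
      field_simp
      ring)
    (fun z hz => by
      have := hPne z hz
      have h0 := UHP_ne hz
      have h3 := pow_ne_zero (3 * k) (hsz z hz)
      simp only [h1S z hz, hPS z hz, hI]
      set A : ℂ := ((Real.sqrt 3 : ℝ) * z : ℂ) ^ (3 * k) with hA
      clear_value A
      field_simp)
    ((DifferentiableOn.mul (by fun_prop) hfd).div hQd hQne)
    (h1d.div hQd hQne)
    (fun z hz => by
      have := hQne z hz
      simp only [hPQ z hz]
      have e : Complex.exp (-(2 * (Real.pi * Complex.I * k)) * z) =
          (Complex.exp (Real.pi * Complex.I * k * z))⁻¹ * (Complex.exp (Real.pi * Complex.I * k * z))⁻¹ := by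
        rw [← Complex.exp_neg, ← Complex.exp_add]; congr 1; ring
      rw [e]
      have := Complex.exp_ne_zero (Real.pi * Complex.I * k * z)
      field_simp)
    (fun z hz => by
      have := hQne z hz
      simp only [hPQ z hz]
      rw [neg_mul, Complex.exp_neg]
      have := Complex.exp_ne_zero (Real.pi * Complex.I * k * z)
      field_simp)
    (by
      have := hlim'.div hQt one_ne_zero
      rw [div_one] at this
      exact this)
    (by
      have h1 : BoundedAtFilter Iinf f₁ := by
        rw [bdd_iff]
        exact ⟨C, 1, fun z hz => h1b z (lt_of_lt_of_le one_pos hz) hz⟩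
      have h2 : BoundedAtFilter Iinf (fun z => (Q z)⁻¹) := (hQt.inv₀ one_ne_zero).isBigO_one ℝ
      have h3 := h1.mul h2
      exact h3.congr_left (fun z => (div_eq_mul_inv _ _).symm))
    (by
      rw [bdd_iff]
      refine ⟨1, 0, fun z hz => ?_⟩
      rw [Complex.norm_exp, Real.exp_le_one_iff]
      have : (Real.pi * Complex.I * k * z : ℂ).re = -(Real.pi * k * z.im) := by
        simp
      rw [this]
      have := Real.pi_pos
      have : 0 ≤ Real.pi * k * z.im := by positivity
      linarith)
  intro z hz
  rw [key z hz]
  linear_combination (Real.pi ^ 2 * k ^ 2 * M4plus3 z * (f z / Pfun3 k z) : ℂ) * Complex.I_sq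
end
end

section
/- Let ℓ be an odd integer, let ŷ₂: ℍ → ℂ be holomorphic, and define ŷ₁(z) := z^{−ℓ} ŷ₂(−1/z). Suppose that ŷ₂(z+1) = ŷ₂(z) for all z ∈ ℍ, that there is a constant d ∈ ℂ with ŷ₁(z+1) = ŷ₁(z) + d·ŷ₂(z) for all z ∈ ℍ, and that ŷ₁ and ŷ₂ are linearly independent over ℂ. Then d = 1. -/
noncomputable section

open Complex Matrix Filter Topology

/-- Lemma: normalization of the monodromy constant for `SL(2,ℤ)`.
If `ℓ` is odd, `ŷ₂` is holomorphic on `ℍ` and 1-periodic, `ŷ₁(z) = z^{-ℓ} ŷ₂(-1/z)`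
satisfies `ŷ₁(z+1) = ŷ₁(z) + d·ŷ₂(z)`, and `ŷ₁, ŷ₂` are linearly independent over `ℂ`,
then `d = 1`. -/
theorem monodromy_constant_SL2Z
    (ℓ : ℤ) (hℓ : Odd ℓ)
    (yhat₂ : ℂ → ℂ) (hholo : DifferentiableOn ℂ yhat₂ UHP)
    (yhat₁ : ℂ → ℂ) (hy₁ : ∀ z ∈ UHP, yhat₁ z = z ^ (-ℓ) * yhat₂ (-1 / z))
    (hper₂ : ∀ z ∈ UHP, yhat₂ (z + 1) = yhat₂ z)
    (d : ℂ) (hper₁ : ∀ z ∈ UHP, yhat₁ (z + 1) = yhat₁ z + d * yhat₂ z)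
    (hindep : ∀ a b : ℂ, (∀ z ∈ UHP, a * yhat₁ z + b * yhat₂ z = 0) → a = 0 ∧ b = 0) :
    d = 1 := by
  have hm : ∀ z ∈ UHP, (1 - d) * yhat₁ z + (d - 1) * yhat₂ z = 0 := by
    intro z hz
    have hinv : ∀ x ∈ UHP, x ≠ 0 ∧ -1 / x ∈ UHP := by
      intro x hx
      have hx' : 0 < x.im := hx
      have h0 : x ≠ 0 := by
        rintro rfl
        simp at hx'
      refine ⟨h0, ?_⟩
      change 0 < (-1 / x).im
      have : (-1 / x).im = x.im / Complex.normSq x := by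
        simp [Complex.div_im, neg_div]
      rw [this]
      exact div_pos hx' (Complex.normSq_pos.mpr h0)
    obtain ⟨z0, hw⟩ := hinv z hz
    have hz1 : z + 1 ∈ UHP := by
      change 0 < (z + 1).im
      simpa using (show 0 < z.im from hz)
    obtain ⟨z10, hv⟩ := hinv (z + 1) hz1
    have hu : -1 / z - 1 ∈ UHP := by
      change 0 < (-1 / z - 1).im
      simpa using (show 0 < (-1 / z).im from hw)
    have e1 := hy₁ _ hz1
    have e2 := hper₁ z hz
    have e3 := hper₂ _ hv
    have e4 := hy₁ _ hu
    have e5 := hper₁ _ hu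
    have e6 := hper₂ _ hu
    have e7 := hy₁ _ hw
    have e8 := hy₁ z hz
    have huv : -1 / (-1 / z - 1) = -1 / (z + 1) + 1 := by
      have : -1 / z - 1 = -((z + 1) / z) := by field_simp; ring
      rw [this]
      field_simp
      ring
    have hww : -1 / (-1 / z) = z := by field_simp
    have p1 : (-1 / z - 1) ^ (-ℓ) = -((z + 1) ^ (-ℓ) * z ^ ℓ) := by
      have : -1 / z - 1 = -((z + 1) * z⁻¹) := by field_simp; ring
      rw [this, hℓ.neg.neg_zpow, mul_zpow, _root_.inv_zpow, zpow_neg z, inv_inv]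
    have p2 : (-1 / z) ^ (-ℓ) = -(z ^ ℓ) := by
      have : -1 / z = -(z⁻¹) := by field_simp
      rw [this, hℓ.neg.neg_zpow, _root_.inv_zpow, zpow_neg z, inv_inv]
    have hzl : z ^ ℓ * z ^ (-ℓ) = 1 := by
      rw [← zpow_add₀ z0]; simp
    have hzn : z ^ ℓ ≠ 0 := zpow_ne_zero _ z0
    rw [huv, e3, p1] at e4
    rw [hww, p2] at e7
    rw [sub_add_cancel] at e5 e6
    apply mul_left_cancel₀ hzn
    linear_combination z ^ ℓ * e1 - z ^ ℓ * e2 + e4 + e5 - e7 - d * e6 - d * z ^ ℓ * e8 - d * yhat₂ (-1 / z) * hzl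
  have := (hindep _ _ hm).2
  linear_combination this
end
end

section
/- Let ℓ be an odd integer, let ŷ₂: ℍ → ℂ be holomorphic, and define ŷ₁(z) := (√2 z)^{−ℓ} ŷ₂(−1/(2z)). Suppose that ŷ₂(z+1) = ŷ₂(z) for all z ∈ ℍ, that there is a constant d ∈ ℂ with ŷ₁(z+1) = ŷ₁(z) + d·ŷ₂(z) for all z ∈ ℍ, and that ŷ₁ and ŷ₂ are linearly independent over ℂ. Then d² = 2, i.e. d = ±√2. -/
noncomputable section

open Complex Matrix Filter Topology

/-- Lemma: normalization of the monodromy constant for `Γ₀⁺(2)`.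
If `ℓ` is odd, `ŷ₂` is holomorphic on `ℍ` and 1-periodic,
`ŷ₁(z) = (√2 z)^{-ℓ} ŷ₂(-1/(2z))` satisfies `ŷ₁(z+1) = ŷ₁(z) + d·ŷ₂(z)`, and
`ŷ₁, ŷ₂` are linearly independent over `ℂ`, then `d² = 2`, i.e. `d = ±√2`. -/
theorem monodromy_constant_Gamma0plus2
    (ℓ : ℤ) (hℓ : Odd ℓ)
    (yhat₂ : ℂ → ℂ) (hholo : DifferentiableOn ℂ yhat₂ UHP)
    (yhat₁ : ℂ → ℂ)
    (hy₁ : ∀ z ∈ UHP, yhat₁ z = ((Real.sqrt 2 : ℂ) * z) ^ (-ℓ) * yhat₂ (-1 / (2 * z)))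
    (hper₂ : ∀ z ∈ UHP, yhat₂ (z + 1) = yhat₂ z)
    (d : ℂ) (hper₁ : ∀ z ∈ UHP, yhat₁ (z + 1) = yhat₁ z + d * yhat₂ z)
    (hindep : ∀ a b : ℂ, (∀ z ∈ UHP, a * yhat₁ z + b * yhat₂ z = 0) → a = 0 ∧ b = 0) :
    d ^ 2 = 2 := by
  have ne : ∀ z ∈ UHP, z ≠ 0 := by
    rintro z hz rfl
    simp [UHP] at hz
  have hS : ∀ z ∈ UHP, -1 / (2 * z) ∈ UHP := by
    intro z hz
    have h0 := ne z hz
    have e : -1 / (2 * z) = (((1 / 2 : ℝ)) : ℂ) * (-z⁻¹) := by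
      push_cast
      field_simp
    have hz' : 0 < z.im := hz
    change 0 < (-1 / (2 * z)).im
    rw [e, Complex.im_ofReal_mul, Complex.neg_im, Complex.inv_im, neg_div, neg_neg]
    have := Complex.normSq_pos.2 h0
    positivity
  have hT : ∀ z ∈ UHP, z + 1 ∈ UHP := by
    intro z hz
    simpa [UHP] using hz
  have h2 : (Real.sqrt 2 : ℂ) * (Real.sqrt 2 : ℂ) = 2 := by
    rw [← Complex.ofReal_mul, Real.mul_self_sqrt (by norm_num)]
    norm_num
  have hm1 : ((-1 : ℂ)) ^ (-ℓ) = -1 := (hℓ.neg).neg_one_zpow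
  have A2 : ∀ z ∈ UHP, ((Real.sqrt 2 : ℂ) * z) ^ (-ℓ) * yhat₂ (-1 / (2 * z) + 1) = yhat₁ z := by
    intro z hz
    rw [hper₂ _ (hS z hz), hy₁ z hz]
  have A1 : ∀ z ∈ UHP, ((Real.sqrt 2 : ℂ) * z) ^ (-ℓ) * yhat₁ (-1 / (2 * z) + 1)
      = d * yhat₁ z - yhat₂ z := by
    intro z hz
    have h0 := ne z hz
    have e : -1 / (2 * (-1 / (2 * z))) = z := by field_simp
    have e2 : ((Real.sqrt 2 : ℂ) * z) * ((Real.sqrt 2 : ℂ) * (-1 / (2 * z))) = -1 := by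
      have : ((Real.sqrt 2 : ℂ) * z) * ((Real.sqrt 2 : ℂ) * (-1 / (2 * z)))
        = ((Real.sqrt 2 : ℂ) * (Real.sqrt 2 : ℂ)) * (z * (-1 / (2 * z))) := by ring
      rw [this, h2]
      field_simp
    rw [hper₁ _ (hS z hz), hy₁ _ (hS z hz), e, mul_add, ← mul_assoc, ← mul_zpow, e2, hm1, hy₁ z hz]
    ring
  have key : ∀ z ∈ UHP, (d ^ 3 - 2 * d) * yhat₁ z + (2 - d ^ 2) * yhat₂ z = 0 := by
    intro z hz
    obtain ⟨a, ha⟩ : ∃ a, a = -1 / (2 * z) + 1 := ⟨_, rfl⟩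
    have haU : a ∈ UHP := ha ▸ hT _ (hS z hz)
    obtain ⟨b, hb⟩ : ∃ b, b = -1 / (2 * a) + 1 := ⟨_, rfl⟩
    have hbU : b ∈ UHP := hb ▸ hT _ (hS a haU)
    obtain ⟨c, hc⟩ : ∃ c, c = -1 / (2 * b) + 1 := ⟨_, rfl⟩
    have hcU : c ∈ UHP := hc ▸ hT _ (hS b hbU)
    have z0 := ne z hz
    have a0 := ne a haU
    have b0 := ne b hbU
    have c0 := ne c hcU
    have ea : 2 * z * a = 2 * z - 1 := by rw [ha]; field_simp; ring
    have eb : 2 * a * b = 2 * a - 1 := by rw [hb]; field_simp; ring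
    have ec : 2 * b * c = 2 * b - 1 := by rw [hc]; field_simp; ring
    have zab : 2 * z * a * b = z - 1 := by linear_combination z * eb + b * 0 + ea
    have abc : 2 * a * b * c = a - 1 := by linear_combination a * ec + eb
    have prod : 4 * (z * a * b * c) = -1 := by
      linear_combination 2 * z * abc + ea
    have ez : -1 / (2 * c) + 1 = z := by
      have hcz : 2 * c * z = 2 * c - 1 := by
        linear_combination (-2 * c) * zab + prod
      field_simp
      linear_combination -hcz
    have P : ((Real.sqrt 2 : ℂ) * z) ^ (-ℓ) * ((Real.sqrt 2 : ℂ) * a) ^ (-ℓ) *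
        ((Real.sqrt 2 : ℂ) * b) ^ (-ℓ) * ((Real.sqrt 2 : ℂ) * c) ^ (-ℓ) = -1 := by
      rw [← mul_zpow, ← mul_zpow, ← mul_zpow, ← hm1]
      congr 1
      linear_combination prod + (z * a * b * c) * ((Real.sqrt 2 : ℂ) * (Real.sqrt 2 : ℂ) + 2) * h2
    have z1 := A1 z hz
    have z2 := A2 z hz
    have a1 := A1 a haU
    have a2 := A2 a haU
    have b1 := A1 b hbU
    have b2 := A2 b hbU
    have c2 := A2 c hcU
    rw [← ha] at z1 z2
    rw [← hb] at a1 a2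
    rw [← hc] at b1 b2
    rw [ez] at c2
    generalize ((Real.sqrt 2 : ℂ) * z) ^ (-ℓ) = jz at *
    generalize ((Real.sqrt 2 : ℂ) * a) ^ (-ℓ) = ja at *
    generalize ((Real.sqrt 2 : ℂ) * b) ^ (-ℓ) = jb at *
    generalize ((Real.sqrt 2 : ℂ) * c) ^ (-ℓ) = jc at *
    linear_combination yhat₂ z * P - jz * ja * jb * c2 - jz * ja * b1
      - jz * d * a1 + jz * a2 - (d ^ 2 - 1) * z1 + d * z2
  have := (hindep _ _ key).2
  linear_combination -this
end
end
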